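/- arXiv:1910.11225 — 2 statements merged into one kernel-verified Lean document; each statement's English description precedes it below -/
import Mathlib

section
/- Suppose d = d(n) := p(n)·n satisfies log n ≪ d ≪ n and additionally d ≥ (log n)^{ω} for some function ω = ω(n) → ∞, and i = i(n) ∈ ℕ is such that d^i ≪ n and d^{i+1}/n − 2·log n → ∞. Then asymptotically almost surely, for G ∈ G(n,p): ζ(G) ∼ (n·log d)/d^i, i.e., ζ(G)·d^i/(n·log d) → 1 as n → ∞. -/
open Filter SimpleGraph Set
open scoped Topology

noncomputable section

/-- The probability, under the Erdős–Rényi binomial random graph `G(n,p)`, of a set `A`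
of graphs on vertex set `Fin n`: each pair of distinct vertices is an edge
independently with probability `p`. -/
noncomputable def gnpProb (n : ℕ) (p : ℝ) (A : Set (SimpleGraph (Fin n))) : ℝ := by
  classical
  exact ∑ G ∈ Finset.univ.filter (fun G : SimpleGraph (Fin n) => G ∈ A),
      p ^ (Nat.card G.edgeSet) * (1 - p) ^ (n.choose 2 - Nat.card G.edgeSet)

/-- A sequence of graph events `A n ⊆ G(n, p n)` holds asymptotically almost surely. -/
def AAS (p : ℕ → ℝ) (A : (n : ℕ) → Set (SimpleGraph (Fin n))) : Prop :=
  Tendsto (fun n : ℕ => gnpProb n (p n) (A n)) atTop (nhds 1)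

/-- The set of vertices at graph distance exactly `j` from `v`. -/
def gSphere {V : Type*} (G : SimpleGraph V) (v : V) (j : ℕ) : Set V :=
  {u | G.edist v u = j}

/-- The set of vertices at graph distance at most `j` from some vertex of `A`. -/
def gBall {V : Type*} (G : SimpleGraph V) (A : Set V) (j : ℕ) : Set V :=
  {u | ∃ v ∈ A, G.edist v u ≤ j}

/-- The result of probing with sensor set `S` while the robber is at `v`: the cops
learn the sensor set together with the distance from each sensor to the robber. -/
noncomputable def probe {V : Type*} (G : SimpleGraph V) (S : Finset V) (v : V) :
    Finset V × (V → ℕ) := by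
  classical
  exact (S, fun s => if s ∈ S then G.dist s v else 0)

/-- A cop strategy: given the list of past probe results, choose the next sensor set. -/
def CopStrategy (V : Type*) : Type _ := List (Finset V × (V → ℕ)) → Finset V

/-- A robber trajectory: at each step the robber either stays or moves along an edge. -/
def IsRobberWalk {V : Type*} (G : SimpleGraph V) (w : ℕ → V) : Prop :=
  ∀ t, w (t + 1) = w t ∨ G.Adj (w t) (w (t + 1))

/-- The history of probe results produced in the first `t` rounds when the cops play
strategy `σ` against the robber walk `w` (round `t+1` probes position `w t`). -/
noncomputable def gameHistory {V : Type*} (G : SimpleGraph V) (σ : CopStrategy V)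
    (w : ℕ → V) : ℕ → List (Finset V × (V → ℕ))
  | 0 => []
  | t + 1 => gameHistory G σ w t ++ [probe G (σ (gameHistory G σ w t)) (w t)]

/-- The cops win the localization game on `G` with `k` sensors: there is a strategy,
probing exactly `k` vertices each round, such that for every robber walk there is a
round in which every robber walk producing the same probe results is at the same
vertex, i.e. the cops can locate the robber. -/
def CopsWin {V : Type*} (G : SimpleGraph V) (k : ℕ) : Prop :=
  ∃ σ : CopStrategy V, (∀ h, (σ h).card = k) ∧
    ∀ w : ℕ → V, IsRobberWalk G w → ∃ t : ℕ,
      ∀ w' : ℕ → V, IsRobberWalk G w' →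
        gameHistory G σ w' (t + 1) = gameHistory G σ w (t + 1) → w' t = w t

/-- The localization number `ζ(G)`: the least number of sensors with which the cops
can win the localization game on `G`. -/
noncomputable def localizationNumber {V : Type*} (G : SimpleGraph V) : ℕ :=
  sInf {k | CopsWin G k}

end

open Filter SimpleGraph Set
open scoped Topology

/-! ### Part A: the probability space -/

namespace LocGnp

open Classical in
/-- expectation over the random graph -/
noncomputable def Ex (n : ℕ) (p : ℝ) (f : SimpleGraph (Fin n) → ℝ) : ℝ :=
  ∑ G : SimpleGraph (Fin n),
    (p ^ (Nat.card G.edgeSet) * (1 - p) ^ (n.choose 2 - Nat.card G.edgeSet)) * f G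

/-- potential edges -/
abbrev Edg (n : ℕ) := {e : Sym2 (Fin n) // ¬ e.IsDiag}

open Classical in
/-- graphs as Boolean configurations of the edges -/
noncomputable def cfgEquiv (n : ℕ) : SimpleGraph (Fin n) ≃ (Edg n → Bool) where
  toFun G e := decide (e.1 ∈ G.edgeSet)
  invFun x := SimpleGraph.fromEdgeSet {e | ∃ h : ¬ e.IsDiag, x ⟨e, h⟩ = true}
  left_inv G := by
    ext a b
    simp only [decide_eq_true_eq, exists_prop, SimpleGraph.fromEdgeSet_adj, Set.mem_ofPred_eq,
      Sym2.mk_isDiag_iff, SimpleGraph.mem_edgeSet]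
    constructor
    · rintro ⟨⟨_, h⟩, _⟩; exact h
    · intro h; exact ⟨⟨h.ne, h⟩, h.ne⟩
  right_inv x := by
    funext e
    obtain ⟨e, he⟩ := e
    simp [SimpleGraph.edgeSet_fromEdgeSet, he]

open Classical in
lemma wt_eq (n : ℕ) (p : ℝ) (G : SimpleGraph (Fin n)) :
    (p ^ (Nat.card G.edgeSet) * (1 - p) ^ (n.choose 2 - Nat.card G.edgeSet)) =
      ∏ e : Edg n, (if cfgEquiv n G e = true then p else 1 - p) := by
  have hE : Fintype.card (Edg n) = n.choose 2 := by
    simpa using Sym2.card_subtype_not_diag (α := Fin n)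
  have hc : Nat.card G.edgeSet =
      (Finset.univ.filter (fun e : Edg n => cfgEquiv n G e = true)).card := by
    rw [← Fintype.card_subtype, ← Nat.card_eq_fintype_card]
    refine Nat.card_congr
      { toFun := fun e => ⟨⟨e.1, G.not_isDiag_of_mem_edgeSet e.2⟩, by simp [cfgEquiv, e.2]⟩
        invFun := fun e => ⟨e.1.1, by simpa [cfgEquiv] using e.2⟩
        left_inv := fun e => by simp
        right_inv := fun e => by simp }
  rw [Finset.prod_ite, Finset.prod_const, Finset.prod_const, hc]
  congr 2
  rw [← hE, ← Finset.card_univ, ← Finset.card_filter_add_card_filter_not (s := Finset.univ)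
    (fun e : Edg n => cfgEquiv n G e = true)]
  simp

open Classical in
lemma Ex_eq (n : ℕ) (p : ℝ) (f : SimpleGraph (Fin n) → ℝ) :
    Ex n p f = ∑ x : Edg n → Bool,
      (∏ e, (if x e = true then p else 1 - p)) * f ((cfgEquiv n).symm x) := by
  rw [Ex, ← (cfgEquiv n).sum_comp]
  refine Finset.sum_congr rfl fun G _ => ?_
  rw [wt_eq]; simp

lemma sum_cfg_one {E : Type*} [Fintype E] [DecidableEq E] (p : ℝ) :
    ∑ x : E → Bool, ∏ e, (if x e = true then p else 1 - p) = 1 := by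
  have := (Finset.prod_univ_sum (fun _ : E => (Finset.univ : Finset Bool))
    (fun _ b => if b = true then p else 1 - p))
  rw [Fintype.piFinset_univ] at this
  rw [← this]
  simp

lemma Ex_one (n : ℕ) (p : ℝ) : Ex n p (fun _ => 1) = 1 := by
  classical
  rw [Ex_eq]
  simpa using sum_cfg_one (E := Edg n) p

lemma Ex_add (n : ℕ) (p : ℝ) (f g : SimpleGraph (Fin n) → ℝ) :
    Ex n p (fun G => f G + g G) = Ex n p f + Ex n p g := by
  simp [Ex, mul_add, Finset.sum_add_distrib]

lemma Ex_sub (n : ℕ) (p : ℝ) (f g : SimpleGraph (Fin n) → ℝ) :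
    Ex n p (fun G => f G - g G) = Ex n p f - Ex n p g := by
  simp [Ex, mul_sub, Finset.sum_sub_distrib]

lemma Ex_const_mul (n : ℕ) (p c : ℝ) (f : SimpleGraph (Fin n) → ℝ) :
    Ex n p (fun G => c * f G) = c * Ex n p f := by
  simp only [Ex, Finset.mul_sum]
  refine Finset.sum_congr rfl fun G _ => by ring

lemma Ex_sum (n : ℕ) (p : ℝ) {ι : Type*} (s : Finset ι) (f : ι → SimpleGraph (Fin n) → ℝ) :
    Ex n p (fun G => ∑ j ∈ s, f j G) = ∑ j ∈ s, Ex n p (f j) := by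
  simp only [Ex, Finset.mul_sum]
  exact Finset.sum_comm

lemma Ex_mono (n : ℕ) (p : ℝ) (hp0 : 0 ≤ p) (hp1 : p ≤ 1) (f g : SimpleGraph (Fin n) → ℝ)
    (h : ∀ G, f G ≤ g G) : Ex n p f ≤ Ex n p g := by
  unfold Ex
  refine Finset.sum_le_sum fun G _ => ?_
  have : 0 ≤ 1 - p := by linarith
  gcongr
  exact h G

/-- `f` depends only on the edges in `F` -/
def DepOn {n : ℕ} {α : Type*} (f : SimpleGraph (Fin n) → α) (F : Set (Sym2 (Fin n))) : Prop :=
  ∀ G H : SimpleGraph (Fin n), (∀ a b, s(a, b) ∈ F → (G.Adj a b ↔ H.Adj a b)) → f G = f H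

open Classical in
lemma Ex_mul (n : ℕ) (p : ℝ) (f g : SimpleGraph (Fin n) → ℝ) (F : Set (Sym2 (Fin n)))
    (hf : DepOn f F) (hg : DepOn g Fᶜ) :
    Ex n p (fun G => f G * g G) = Ex n p f * Ex n p g := by
  let P : Edg n → Prop := fun e => e.1 ∈ F
  let φ := Equiv.piEquivPiSubtypeProd P (fun _ => Bool)
  have hadj : ∀ (x : Edg n → Bool) (a b : Fin n), ((cfgEquiv n).symm x).Adj a b ↔
      ∃ h : ¬ (s(a, b)).IsDiag, x ⟨s(a, b), h⟩ = true := by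
    intro x a b
    simp only [cfgEquiv, Equiv.coe_fn_symm_mk, SimpleGraph.fromEdgeSet_adj, Set.mem_ofPred_eq]
    constructor
    · rintro ⟨h, _⟩; exact h
    · rintro ⟨h, h'⟩; exact ⟨⟨h, h'⟩, by simpa using h⟩
  have hprod : ∀ y : ({e // P e} → Bool) × ({e // ¬ P e} → Bool),
      (∏ e, (if φ.symm y e = true then p else 1 - p)) =
      (∏ e, (if y.1 e = true then p else 1 - p)) * (∏ e, (if y.2 e = true then p else 1 - p)) := by
    intro y
    rw [← Fintype.prod_subtype_mul_prod_subtype P]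
    congr 1
    · refine Finset.prod_congr rfl fun e _ => ?_
      simp [φ, Equiv.piEquivPiSubtypeProd, e.2]
    · refine Finset.prod_congr rfl fun e _ => ?_
      simp [φ, Equiv.piEquivPiSubtypeProd, e.2]
  have hf' : ∀ y z z', f ((cfgEquiv n).symm (φ.symm (y, z))) =
      f ((cfgEquiv n).symm (φ.symm (y, z'))) := by
    intro y z z'
    apply hf
    intro a b hab
    rw [hadj, hadj]
    refine exists_congr fun h => ?_
    have : P ⟨s(a, b), h⟩ := hab
    simp [φ, Equiv.piEquivPiSubtypeProd, this]
  have hg' : ∀ y y' z, g ((cfgEquiv n).symm (φ.symm (y, z))) =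
      g ((cfgEquiv n).symm (φ.symm (y', z))) := by
    intro y z z'
    apply hg
    intro a b hab
    rw [hadj, hadj]
    refine exists_congr fun h => ?_
    have : ¬ P ⟨s(a, b), h⟩ := hab
    simp [φ, Equiv.piEquivPiSubtypeProd, this]
  have key : ∀ h : SimpleGraph (Fin n) → ℝ, Ex n p h = ∑ y, ∑ z,
      ((∏ e, (if y e = true then p else 1 - p)) * (∏ e, (if z e = true then p else 1 - p))) *
        h ((cfgEquiv n).symm (φ.symm (y, z))) := by
    intro h
    rw [Ex_eq, ← φ.symm.sum_comp, Fintype.sum_prod_type]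
    refine Finset.sum_congr rfl fun y _ => Finset.sum_congr rfl fun z _ => ?_
    rw [hprod]
  let y0 : {e // P e} → Bool := fun _ => true
  let z0 : {e // ¬ P e} → Bool := fun _ => true
  have e1 : Ex n p f = ∑ y, (∏ e, (if y e = true then p else 1 - p)) *
      f ((cfgEquiv n).symm (φ.symm (y, z0))) := by
    rw [key]
    refine Finset.sum_congr rfl fun y _ => ?_
    simp_rw [hf' y _ z0, ← Finset.sum_mul, ← Finset.mul_sum, sum_cfg_one, mul_one]
  have e2 : Ex n p g = ∑ z, (∏ e, (if z e = true then p else 1 - p)) *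
      g ((cfgEquiv n).symm (φ.symm (y0, z))) := by
    rw [key, Finset.sum_comm]
    refine Finset.sum_congr rfl fun z _ => ?_
    simp_rw [hg' _ y0 z, ← Finset.sum_mul, sum_cfg_one, one_mul]
  rw [e1, e2, key, Finset.sum_mul_sum]
  refine Finset.sum_congr rfl fun y _ => Finset.sum_congr rfl fun z _ => ?_
  rw [hf' y z z0, hg' y y0 z]
  ring

lemma DepOn.mono {n : ℕ} {α : Type*} {f : SimpleGraph (Fin n) → α} {F F' : Set (Sym2 (Fin n))}
    (h : DepOn f F) (hF : F ⊆ F') : DepOn f F' :=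
  fun G H hGH => h G H fun a b hab => hGH a b (hF hab)

lemma Ex_prod (n : ℕ) (p : ℝ) {ι : Type*} (s : Finset ι) (f : ι → SimpleGraph (Fin n) → ℝ)
    (F : ι → Set (Sym2 (Fin n))) (hf : ∀ j ∈ s, DepOn (f j) (F j))
    (hd : ∀ j ∈ s, ∀ k ∈ s, j ≠ k → Disjoint (F j) (F k)) :
    Ex n p (fun G => ∏ j ∈ s, f j G) = ∏ j ∈ s, Ex n p (f j) := by
  classical
  induction s using Finset.induction_on with
  | empty => simpa using Ex_one n p
  | insert a s ha ih =>
    simp_rw [Finset.prod_insert ha]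
    rw [Ex_mul n p (f a) (fun G => ∏ j ∈ s, f j G) (F a) (hf a (by simp)), ih]
    · intro j hj; exact hf j (by simp [hj])
    · intro j hj k hk; exact hd j (by simp [hj]) k (by simp [hk])
    · intro G H hGH
      refine Finset.prod_congr rfl fun j hj => ?_
      refine hf j (by simp [hj]) G H fun x y hxy => hGH x y ?_
      have := hd a (by simp) j (by simp [hj]) (by rintro rfl; exact ha hj)
      exact fun h => Set.disjoint_left.mp this h hxy

open Classical in
lemma Ex_adj (n : ℕ) (p : ℝ) (a b : Fin n) (hab : a ≠ b) :
    Ex n p (fun G => if G.Adj a b then 0 else 1) = 1 - p := by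
  rw [Ex_eq]
  let e0 : Edg n := ⟨s(a, b), by simpa using hab⟩
  have : ∀ x : Edg n → Bool, (if ((cfgEquiv n).symm x).Adj a b then (0:ℝ) else 1) =
      ∏ e, (if e = e0 then (if x e = true then 0 else 1) else 1) := by
    intro x
    rw [Finset.prod_ite_eq' Finset.univ e0]
    simp [cfgEquiv, hab, e0]
  simp_rw [this, ← Finset.prod_mul_distrib]
  have := (Finset.prod_univ_sum (fun _ : Edg n => (Finset.univ : Finset Bool))
    (fun e b => (if b = true then p else 1 - p) *
      (if e = e0 then (if b = true then (0:ℝ) else 1) else 1)))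
  rw [Fintype.piFinset_univ] at this
  rw [← this]
  have h2 : ∀ e : Edg n, (∑ j : Bool, (if j = true then p else 1 - p) *
      (if e = e0 then (if j = true then (0:ℝ) else 1) else 1)) = if e = e0 then 1 - p else 1 := by
    intro e
    by_cases h : e = e0 <;> simp [h]
  simp_rw [h2]
  rw [Finset.prod_ite_eq' Finset.univ e0]
  simp

open Classical in
/-- probability that `u` has no neighbour in `D` -/
lemma Ex_noNbr (n : ℕ) (p : ℝ) (u : Fin n) (D : Finset (Fin n)) (hu : u ∉ D) :
    Ex n p (fun G => ∏ w ∈ D, if G.Adj u w then 0 else 1) = (1 - p) ^ D.card := by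
  rw [Ex_prod n p D (fun w G => if G.Adj u w then 0 else 1) (fun w => {s(u, w)})]
  · rw [Finset.prod_congr rfl fun w hw => Ex_adj n p u w (by rintro rfl; exact hu hw)]
    simp
  · intro w _ G H hGH
    simp [hGH u w (by simp)]
  · intro j hj k hk hjk
    simp only [Set.disjoint_singleton]
    intro h
    apply hjk
    have h' : j = k ∨ u = k ∧ j = u := by simpa using h
    rcases h' with h' | ⟨h', _⟩
    · exact h'
    · exact absurd (h' ▸ hk) hu

lemma gnpProb_eq (n : ℕ) (p : ℝ) (A : Set (SimpleGraph (Fin n))) :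
    gnpProb n p A = Ex n p (A.indicator 1) := by
  classical
  unfold gnpProb Ex
  rw [Finset.sum_filter]
  refine Finset.sum_congr rfl fun G _ => ?_
  by_cases h : G ∈ A <;> simp [h]

end LocGnp

open Filter SimpleGraph Set
open scoped Topology

/-! ### Part B: probability tools -/

namespace LocGnp

/-- probability -/
noncomputable def Pr (n : ℕ) (p : ℝ) (P : SimpleGraph (Fin n) → Prop) : ℝ :=
  gnpProb n p {G | P G}

open Classical in
lemma Pr_eq (n : ℕ) (p : ℝ) (P : SimpleGraph (Fin n) → Prop) :
    Pr n p P = Ex n p (fun G => if P G then 1 else 0) := by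
  rw [Pr, gnpProb_eq]
  congr 1

open Classical in
lemma Pr_le_Ex (n : ℕ) (p : ℝ) (hp0 : 0 ≤ p) (hp1 : p ≤ 1) (P : SimpleGraph (Fin n) → Prop)
    (f : SimpleGraph (Fin n) → ℝ) (hf : ∀ G, 0 ≤ f G) (h : ∀ G, P G → 1 ≤ f G) :
    Pr n p P ≤ Ex n p f := by
  rw [Pr_eq]
  refine Ex_mono n p hp0 hp1 _ _ fun G => ?_
  by_cases hP : P G
  · simpa [hP] using h G hP
  · simpa [hP] using hf G

lemma Pr_mono (n : ℕ) (p : ℝ) (hp0 : 0 ≤ p) (hp1 : p ≤ 1) (P Q : SimpleGraph (Fin n) → Prop)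
    (h : ∀ G, P G → Q G) : Pr n p P ≤ Pr n p Q := by
  classical
  rw [Pr_eq n p Q]
  refine Pr_le_Ex n p hp0 hp1 P _ (fun G => by positivity) fun G hG => ?_
  simp [h G hG]

lemma Pr_nonneg (n : ℕ) (p : ℝ) (hp0 : 0 ≤ p) (hp1 : p ≤ 1) (P : SimpleGraph (Fin n) → Prop) :
    0 ≤ Pr n p P := by
  classical
  have := Ex_mono n p hp0 hp1 (fun _ => 0) (fun G => if P G then 1 else 0)
    (fun G => by positivity)
  rw [← Pr_eq] at this
  have h0 : Ex n p (fun _ => 0) = 0 := by simp [Ex]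
  linarith

lemma Pr_compl (n : ℕ) (p : ℝ) (P : SimpleGraph (Fin n) → Prop) :
    Pr n p P = 1 - Pr n p (fun G => ¬ P G) := by
  classical
  rw [eq_sub_iff_add_eq, Pr_eq, Pr_eq, ← Ex_add]
  refine Eq.trans ?_ (Ex_one n p)
  congr 1
  funext G
  by_cases h : P G <;> simp [h]

lemma Pr_le_one (n : ℕ) (p : ℝ) (hp0 : 0 ≤ p) (hp1 : p ≤ 1) (P : SimpleGraph (Fin n) → Prop) :
    Pr n p P ≤ 1 := by
  rw [Pr_compl]
  linarith [Pr_nonneg n p hp0 hp1 (fun G => ¬ P G)]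

lemma Pr_exists_le (n : ℕ) (p : ℝ) (hp0 : 0 ≤ p) (hp1 : p ≤ 1) {ι : Type*} (s : Finset ι)
    (P : ι → SimpleGraph (Fin n) → Prop) :
    Pr n p (fun G => ∃ j ∈ s, P j G) ≤ ∑ j ∈ s, Pr n p (P j) := by
  classical
  simp_rw [Pr_eq n p (P _)]
  rw [← Ex_sum]
  refine Pr_le_Ex n p hp0 hp1 _ _ (fun G => Finset.sum_nonneg fun j _ => by positivity) ?_
  rintro G ⟨j, hj, h⟩
  have := Finset.single_le_sum (f := fun j => if P j G then (1:ℝ) else 0)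
    (fun j _ => by positivity) hj
  simpa [h] using this

lemma Pr_or_le (n : ℕ) (p : ℝ) (hp0 : 0 ≤ p) (hp1 : p ≤ 1) (P Q : SimpleGraph (Fin n) → Prop) :
    Pr n p (fun G => P G ∨ Q G) ≤ Pr n p P + Pr n p Q := by
  classical
  rw [Pr_eq n p P, Pr_eq n p Q, ← Ex_add]
  refine Pr_le_Ex n p hp0 hp1 _ _ (fun G => by positivity) ?_
  rintro G (h | h)
  · simp only [h, if_true]; split_ifs <;> norm_num
  · simp only [h, if_true]; split_ifs <;> norm_num

open Classical in
/-- the vertices outside `D ∪ A` with no neighbour in `D` and some neighbour in `A` -/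
noncomputable def XS {n : ℕ} (G : SimpleGraph (Fin n)) (D A : Finset (Fin n)) : Finset (Fin n) :=
  Finset.univ.filter fun u => u ∉ D ∧ u ∉ A ∧ (∀ w ∈ D, ¬ G.Adj u w) ∧ (∃ w ∈ A, G.Adj u w)

open Classical in
lemma mgf (n : ℕ) (p z : ℝ) (D A : Finset (Fin n)) (hDA : Disjoint D A) :
    Ex n p (fun G => z ^ (XS G D A).card) =
      (1 + (z - 1) * ((1 - p) ^ D.card - (1 - p) ^ (D.card + A.card))) ^
        (n - (D.card + A.card)) := by
  let W : Finset (Fin n) := (D ∪ A)ᶜ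
  let Y : Fin n → SimpleGraph (Fin n) → ℝ := fun u G =>
    (∏ w ∈ D, if G.Adj u w then (0:ℝ) else 1) - ∏ w ∈ D ∪ A, if G.Adj u w then (0:ℝ) else 1
  have hz : ∀ G : SimpleGraph (Fin n), z ^ (XS G D A).card = ∏ u ∈ W, (1 + (z - 1) * Y u G) := by
    intro G
    have : XS G D A = W.filter (fun u => (∀ w ∈ D, ¬ G.Adj u w) ∧ (∃ w ∈ A, G.Adj u w)) := by
      ext u
      simp [XS, W, and_assoc]
    rw [this, ← Finset.prod_const, Finset.prod_filter]
    refine Finset.prod_congr rfl fun u _ => ?_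
    have e1 : ∀ S : Finset (Fin n), (∏ w ∈ S, if G.Adj u w then (0:ℝ) else 1) =
        if ∀ w ∈ S, ¬ G.Adj u w then 1 else 0 := by
      intro S
      split_ifs with h
      · exact Finset.prod_eq_one fun w hw => by simp [h w hw]
      · push Not at h
        obtain ⟨w, hw, h⟩ := h
        exact Finset.prod_eq_zero hw (by simp [h])
    simp only [Y, e1]
    by_cases hD : ∀ w ∈ D, ¬ G.Adj u w
    · by_cases hA : ∃ w ∈ A, G.Adj u w
      · have : ¬ ∀ w ∈ D ∪ A, ¬ G.Adj u w := by
          obtain ⟨w, hw, h⟩ := hA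
          intro hh
          exact hh w (by simp [hw]) h
        rw [if_pos ⟨hD, hA⟩, if_pos hD, if_neg this]; ring
      · have : ∀ w ∈ D ∪ A, ¬ G.Adj u w := by
          intro w hw h
          rcases Finset.mem_union.mp hw with hw | hw
          · exact hD w hw h
          · exact hA ⟨w, hw, h⟩
        rw [if_neg (fun h => hA h.2), if_pos hD, if_pos this]; ring
    · have : ¬ ∀ w ∈ D ∪ A, ¬ G.Adj u w := fun hh => hD fun w hw => hh w (by simp [hw])
      rw [if_neg (fun h => hD h.1), if_neg hD, if_neg this]; ring
  simp_rw [hz]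
  rw [Ex_prod n p W (fun u G => 1 + (z - 1) * Y u G) (fun u => {e | ∃ w ∈ D ∪ A, e = s(u, w)})]
  · have hc : W.card = n - (D.card + A.card) := by
      rw [Finset.card_compl, Finset.card_union_of_disjoint hDA, Fintype.card_fin]
    rw [← hc, ← Finset.prod_const]
    refine Finset.prod_congr rfl fun u hu => ?_
    have huW : u ∉ D ∪ A := by simpa [W] using hu
    rw [Ex_add, Ex_one, Ex_const_mul, Ex_sub, Ex_noNbr n p u D (fun h => huW (by simp [h])),
      Ex_noNbr n p u (D ∪ A) huW, Finset.card_union_of_disjoint hDA]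
  · intro u _ G H hGH
    have : ∀ w ∈ D ∪ A, (G.Adj u w ↔ H.Adj u w) := fun w hw => hGH u w ⟨w, hw, rfl⟩
    simp only [Y]
    congr 3
    · refine Finset.prod_congr rfl fun w hw => ?_
      simp [this w (by simp [hw])]
    · refine Finset.prod_congr rfl fun w hw => ?_
      simp [this w hw]
  · intro j hj k hk hjk
    rw [Set.disjoint_left]
    rintro e ⟨w, hw, rfl⟩ ⟨w', hw', h⟩
    have hjW : j ∉ D ∪ A := by simpa [W] using hj
    have h' : (j = k ∧ w = w') ∨ (j = w' ∧ w = k) := by simpa using h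
    rcases h' with ⟨h', _⟩ | ⟨h', _⟩
    · exact hjk h'
    · exact hjW (h' ▸ hw')

lemma chernoff_lower (n : ℕ) (p δ μ : ℝ) (hp0 : 0 ≤ p) (hp1 : p ≤ 1) (hδ0 : 0 ≤ δ)
    (hδ1 : δ ≤ 1 / 2) (D A : Finset (Fin n)) (hDA : Disjoint D A) (hμ0 : 0 ≤ μ)
    (hμ : μ ≤ ((n - (D.card + A.card) : ℕ) : ℝ) *
      ((1 - p) ^ D.card - (1 - p) ^ (D.card + A.card))) :
    Pr n p (fun G => ((XS G D A).card : ℝ) < (1 - 2 * δ) * μ) ≤ Real.exp (-(δ ^ 2 * μ)) := by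
  set q := (1 - p) ^ D.card - (1 - p) ^ (D.card + A.card) with hq
  set N := n - (D.card + A.card)
  set t := (1 - 2 * δ) * μ with ht
  set l := - Real.log (1 - δ) with hl
  have hδ' : 0 < 1 - δ := by linarith
  have hl0 : 0 ≤ l := by
    have := Real.log_nonpos hδ'.le (by linarith); linarith
  have hl1 : l ≤ δ / (1 - δ) := by
    have := Real.one_sub_inv_le_log_of_pos hδ'
    rw [hl]
    have e : δ / (1 - δ) = (1 - δ)⁻¹ - 1 := by field_simp; ring
    linarith
  have hq1 : q ≤ 1 := by
    have h1 : (1 - p) ^ D.card ≤ 1 := pow_le_one₀ (by linarith) (by linarith)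
    have h2 : 0 ≤ (1 - p) ^ (D.card + A.card) := pow_nonneg (by linarith) _
    linarith
  have hq0 : 0 ≤ q := by
    have : (1 - p) ^ (D.card + A.card) ≤ (1 - p) ^ D.card :=
      pow_le_pow_of_le_one (by linarith) (by linarith) (by omega)
    linarith
  have ht0 : 0 ≤ t := mul_nonneg (by linarith) hμ0
  calc _ ≤ Ex n p (fun G => Real.exp (l * t) * (1 - δ) ^ (XS G D A).card) := by
        refine Pr_le_Ex n p hp0 hp1 _ _ (fun G => by positivity) fun G hG => ?_
        rw [← Real.exp_log (pow_pos hδ' _), ← Real.exp_add, Real.log_pow]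
        apply Real.one_le_exp
        have : (((XS G D A).card : ℝ)) * l ≤ t * l := by gcongr
        have e : Real.log (1 - δ) = - l := by rw [hl]; ring
        rw [e]; linarith
    _ = Real.exp (l * t) * (1 - δ * q) ^ N := by
        rw [Ex_const_mul, mgf n p _ D A hDA, ← hq]
        congr 2; ring
    _ ≤ Real.exp (l * t) * Real.exp (- (δ * q) * N) := by
        gcongr
        rw [mul_comm _ (N : ℝ), Real.exp_nat_mul]
        have h1 : 0 ≤ 1 - δ * q := by nlinarith
        gcongr
        have := Real.add_one_le_exp (-(δ * q)); linarith
    _ ≤ _ := by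
        rw [← Real.exp_add]
        apply Real.exp_le_exp.mpr
        have h1 : l * t ≤ δ / (1 - δ) * t := by gcongr
        have h2 : δ * μ ≤ δ * (N * q) := by gcongr
        have h3 : δ / (1 - δ) * t = δ * μ - δ ^ 2 * μ / (1 - δ) := by
          rw [ht]; field_simp; ring
        have h4 : δ ^ 2 * μ ≤ δ ^ 2 * μ / (1 - δ) := by
          rw [le_div_iff₀ hδ']
          have : 0 ≤ δ ^ 2 * μ := by positivity
          nlinarith
        nlinarith

lemma chernoff_upper (n : ℕ) (p δ μ : ℝ) (hp0 : 0 ≤ p) (hp1 : p ≤ 1) (hδ0 : 0 ≤ δ)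
    (hδ1 : δ ≤ 1) (D A : Finset (Fin n)) (hDA : Disjoint D A) (hμ0 : 0 ≤ μ)
    (hμ : ((n - (D.card + A.card) : ℕ) : ℝ) *
      ((1 - p) ^ D.card - (1 - p) ^ (D.card + A.card)) ≤ μ) :
    Pr n p (fun G => (1 + 2 * δ) * μ < ((XS G D A).card : ℝ)) ≤ Real.exp (-(δ ^ 2 * μ / 2)) := by
  set q := (1 - p) ^ D.card - (1 - p) ^ (D.card + A.card) with hq
  set N := n - (D.card + A.card)
  set t := (1 + 2 * δ) * μ with ht
  set l := Real.log (1 + δ) with hl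
  have hδ' : 0 < 1 + δ := by linarith
  have hl0 : 0 ≤ l := Real.log_nonneg (by linarith)
  have hl1 : δ / (1 + δ) ≤ l := by
    have := Real.one_sub_inv_le_log_of_pos hδ'
    have e : δ / (1 + δ) = 1 - (1 + δ)⁻¹ := by field_simp; ring
    linarith
  have hq0 : 0 ≤ q := by
    have : (1 - p) ^ (D.card + A.card) ≤ (1 - p) ^ D.card :=
      pow_le_pow_of_le_one (by linarith) (by linarith) (by omega)
    linarith
  have ht0 : 0 ≤ t := mul_nonneg (by linarith) hμ0
  calc _ ≤ Ex n p (fun G => Real.exp (- (l * t)) * (1 + δ) ^ (XS G D A).card) := by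
        refine Pr_le_Ex n p hp0 hp1 _ _ (fun G => by positivity) fun G hG => ?_
        rw [← Real.exp_log (pow_pos hδ' _), ← Real.exp_add, Real.log_pow]
        apply Real.one_le_exp
        have : t * l ≤ (((XS G D A).card : ℝ)) * l := by gcongr
        linarith
    _ = Real.exp (- (l * t)) * (1 + δ * q) ^ N := by
        rw [Ex_const_mul, mgf n p _ D A hDA, ← hq]
        congr 2; ring
    _ ≤ Real.exp (- (l * t)) * Real.exp ((δ * q) * N) := by
        gcongr
        rw [mul_comm _ (N : ℝ), Real.exp_nat_mul]
        have h1 : 0 ≤ 1 + δ * q := by positivity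
        gcongr
        have := Real.add_one_le_exp ((δ * q)); linarith
    _ ≤ _ := by
        rw [← Real.exp_add]
        apply Real.exp_le_exp.mpr
        have h1 : δ / (1 + δ) * t ≤ l * t := by gcongr
        have h2 : δ * (N * q) ≤ δ * μ := by gcongr
        have h3 : δ / (1 + δ) * t = δ * μ + δ ^ 2 * μ / (1 + δ) := by
          rw [ht]; field_simp; ring
        have h4 : δ ^ 2 * μ / 2 ≤ δ ^ 2 * μ / (1 + δ) := by
          gcongr; linarith
        nlinarith

end LocGnp

open Filter SimpleGraph Set
open scoped Topology

/-! ### Part C: balls and the random graph properties -/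

namespace LocGnp

open Classical in
/-- one step of the ball growth -/
noncomputable def stp {n : ℕ} (G : SimpleGraph (Fin n)) (B : Finset (Fin n)) : Finset (Fin n) :=
  B ∪ XS G ∅ B

/-- ball of radius `j` around the set `X` -/
noncomputable def bl {n : ℕ} (G : SimpleGraph (Fin n)) (X : Finset (Fin n)) : ℕ → Finset (Fin n)
  | 0 => X
  | j + 1 => stp G (bl G X j)

lemma mem_stp {n : ℕ} {G : SimpleGraph (Fin n)} {B : Finset (Fin n)} {u : Fin n} :
    u ∈ stp G B ↔ u ∈ B ∨ ∃ w ∈ B, G.Adj u w := by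
  classical
  by_cases h : u ∈ B <;> simp [stp, XS, h]

lemma mem_bl_succ {n : ℕ} {G : SimpleGraph (Fin n)} {X : Finset (Fin n)} {j : ℕ} {u : Fin n} :
    u ∈ bl G X (j + 1) ↔ u ∈ bl G X j ∨ ∃ w ∈ bl G X j, G.Adj u w := mem_stp

lemma card_stp {n : ℕ} (G : SimpleGraph (Fin n)) (B : Finset (Fin n)) :
    (stp G B).card = B.card + (XS G ∅ B).card := by
  classical
  rw [stp, Finset.card_union_of_disjoint]
  rw [Finset.disjoint_left]
  intro a ha hb
  simp [XS] at hb
  exact hb.1 ha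

lemma card_XS_le {n : ℕ} (G : SimpleGraph (Fin n)) (B : Finset (Fin n)) (M : ℝ)
    (hM : ∀ v, ((XS G ∅ {v}).card : ℝ) ≤ M) : ((XS G ∅ B).card : ℝ) ≤ B.card * M := by
  classical
  have h1 : XS G ∅ B ⊆ B.biUnion (fun v => XS G ∅ {v}) := by
    intro u hu
    simp only [XS, Finset.mem_filter, Finset.mem_univ, true_and, Finset.mem_biUnion] at hu ⊢
    obtain ⟨_, hB, _, w, hw, h⟩ := hu
    exact ⟨w, hw, by simp, by simp; rintro rfl; exact hB hw, by simp, w, by simp, h⟩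
  calc ((XS G ∅ B).card : ℝ) ≤ ∑ v ∈ B, ((XS G ∅ {v}).card : ℝ) := by
        exact_mod_cast (Finset.card_le_card h1).trans Finset.card_biUnion_le
    _ ≤ ∑ v ∈ B, M := Finset.sum_le_sum fun v _ => hM v
    _ = _ := by simp

/-- degrees are bounded -/
def P1 (n : ℕ) (d δ : ℝ) (G : SimpleGraph (Fin n)) : Prop :=
  ∀ v, ((XS G ∅ {v}).card : ℝ) ≤ (1 + 2 * δ) * d

/-- vertex expansion -/
def P2 (n : ℕ) (d δ : ℝ) (G : SimpleGraph (Fin n)) : Prop :=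
  ∀ D : Finset (Fin n), D.Nonempty → (D.card : ℝ) * d ≤ n / 4 →
    (1 - 2 * δ) * (D.card * d * (1 - 2 * (D.card * d / n))) ≤ ((XS G ∅ D).card : ℝ)

/-- uncovered neighbours -/
def P3 (n m : ℕ) (D0 : ℝ) (G : SimpleGraph (Fin n)) : Prop :=
  ∀ D A : Finset (Fin n), Disjoint D A → (D.card : ℝ) ≤ D0 → A.card = m →
    2 * m ≤ (XS G D A).card

lemma prob_P1 (n : ℕ) (p d δ : ℝ) (hp0 : 0 ≤ p) (hp1 : p ≤ 1) (hd : d = p * n) (hδ0 : 0 ≤ δ)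
    (hδ1 : δ ≤ 1) :
    Pr n p (fun G => ¬ P1 n d δ G) ≤ n * Real.exp (-(δ ^ 2 * d / 2)) := by
  have : ∀ G, ¬ P1 n d δ G → ∃ v ∈ (Finset.univ : Finset (Fin n)),
      (1 + 2 * δ) * d < ((XS G ∅ {v}).card : ℝ) := by
    intro G h
    simp only [P1, not_forall, not_le] at h
    simpa using h
  refine (Pr_mono n p hp0 hp1 _ _ this).trans
    ((Pr_exists_le n p hp0 hp1 Finset.univ _).trans ?_)
  calc _ ≤ ∑ v : Fin n, Real.exp (-(δ ^ 2 * d / 2)) := by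
        refine Finset.sum_le_sum fun v _ => ?_
        refine chernoff_upper n p δ d hp0 hp1 hδ0 hδ1 ∅ {v} (by simp) (by rw [hd]; positivity) ?_
        simp only [Finset.card_empty, Finset.card_singleton, zero_add, pow_zero, pow_one]
        rw [hd]
        have : ((n - 1 : ℕ) : ℝ) ≤ n := by exact_mod_cast Nat.sub_le n 1
        nlinarith
    _ = _ := by simp

lemma prob_P2 (n : ℕ) (p d δ : ℝ) (hn : 0 < n) (hp0 : 0 ≤ p) (hp1 : p ≤ 1) (hd : d = p * n)
    (hd1 : 1 ≤ d) (hδ0 : 0 ≤ δ) (hδ1 : δ ≤ 1 / 2) :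
    Pr n p (fun G => ¬ P2 n d δ G) ≤ Real.exp (n * Real.exp (-(δ ^ 2 * d / 2))) - 1 := by
  classical
  have hn' : (0:ℝ) < n := by exact_mod_cast hn
  set y := Real.exp (-(δ ^ 2 * d / 2)) with hy
  let s : Finset (Finset (Fin n)) :=
    Finset.univ.filter (fun D => D.Nonempty ∧ (D.card : ℝ) * d ≤ n / 4)
  have : ∀ G, ¬ P2 n d δ G → ∃ D ∈ s, ((XS G ∅ D).card : ℝ) <
      (1 - 2 * δ) * (D.card * d * (1 - 2 * (D.card * d / n))) := by
    intro G h
    simp only [P2, not_forall, not_le] at h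
    obtain ⟨D, h1, h2, h3⟩ := h
    exact ⟨D, by simp [s, h1, h2], h3⟩
  refine (Pr_mono n p hp0 hp1 _ _ this).trans
    ((Pr_exists_le n p hp0 hp1 s _).trans ?_)
  calc _ ≤ ∑ D ∈ s, y ^ D.card := by
        refine Finset.sum_le_sum fun D hD => ?_
        obtain ⟨hD1, hD2⟩ : D.Nonempty ∧ (D.card : ℝ) * d ≤ n / 4 := by simpa [s] using hD
        have hc : (1:ℝ) ≤ D.card := by exact_mod_cast hD1.card_pos
        set x : ℝ := D.card * d / n with hx
        have hx0 : 0 ≤ x := by positivity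
        have hx1 : x ≤ 1 / 4 := by rw [hx, div_le_iff₀ hn']; linarith
        have hxp : x = D.card * p := by rw [hx, hd]; field_simp
        refine (chernoff_lower n p δ (D.card * d * (1 - 2 * x)) hp0 hp1 hδ0 hδ1 ∅ D (by simp)
          (mul_nonneg (by positivity) (by linarith)) ?_).trans ?_
        · simp only [Finset.card_empty, zero_add, pow_zero]
          have hcn : D.card ≤ n := by simpa using Finset.card_le_univ D
          rw [Nat.cast_sub hcn]
          have h1 : (1 - p) ^ D.card ≤ Real.exp (-x) := by
            rw [hxp, ← mul_neg, Real.exp_nat_mul]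
            have : 0 ≤ 1 - p := by linarith
            gcongr
            have := Real.add_one_le_exp (-p); linarith
          have h2 : Real.exp (-x) ≤ 1 - x * (1 - x) := by
            rw [Real.exp_neg]
            have h3 : 1 + x ≤ Real.exp x := by linarith [Real.add_one_le_exp x]
            have h4 : (Real.exp x)⁻¹ ≤ (1 + x)⁻¹ := by gcongr
            have h5 : (1 + x)⁻¹ ≤ 1 - x * (1 - x) := by
              rw [inv_le_iff_one_le_mul₀ (by linarith)]
              nlinarith [mul_nonneg hx0 hx0, mul_nonneg (mul_nonneg hx0 hx0) hx0]
            linarith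
          have h3 : (n:ℝ) * (1 - x) ≤ n - D.card := by
            have : (D.card : ℝ) ≤ n * x := by
              rw [hx]; field_simp; nlinarith
            linarith
          have h4 : x * (1 - x) ≤ 1 - (1 - p) ^ D.card := by linarith
          calc D.card * d * (1 - 2 * x) = n * (x * (1 - 2 * x)) := by rw [hx]; field_simp
            _ ≤ n * ((1 - x) * (x * (1 - x))) := by
                apply mul_le_mul_of_nonneg_left _ hn'.le
                nlinarith [mul_nonneg (mul_nonneg hx0 hx0) hx0]
            _ = n * (1 - x) * (x * (1 - x)) := by ring
            _ ≤ _ := by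
                have h5 : 0 ≤ n * (1 - x) := mul_nonneg hn'.le (by linarith)
                exact mul_le_mul h3 h4 (mul_nonneg hx0 (by linarith)) (by linarith)
        · rw [hy, ← Real.exp_nat_mul]
          apply Real.exp_le_exp.mpr
          have : D.card * d * (1 / 2) ≤ D.card * d * (1 - 2 * x) := by
            gcongr; linarith
          nlinarith [sq_nonneg δ, mul_le_mul_of_nonneg_left this (sq_nonneg δ)]
    _ ≤ ∑ D ∈ (Finset.univ : Finset (Finset (Fin n))).erase ∅, y ^ D.card := by
        refine Finset.sum_le_sum_of_subset_of_nonneg ?_ (fun _ _ _ => by positivity)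
        intro D hD
        have : D.Nonempty ∧ (D.card : ℝ) * d ≤ n / 4 := by simpa [s] using hD
        simp [this.1.ne_empty]
    _ = (1 + y) ^ n - 1 := by
        have h1 := Finset.add_sum_erase (Finset.univ : Finset (Finset (Fin n)))
          (fun D => y ^ D.card) (Finset.mem_univ ∅)
        have h2 := Fintype.sum_pow_mul_eq_add_pow (Fin n) y 1
        simp only [one_pow, mul_one, Fintype.card_fin] at h2
        rw [h2] at h1
        simp only [Finset.card_empty, pow_zero] at h1
        rw [add_comm 1 y]
        linarith
    _ ≤ _ := by
        have hy0 : 0 < y := Real.exp_pos _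
        rw [Real.exp_nat_mul]
        gcongr
        linarith [Real.add_one_le_exp y]

open Classical in
lemma count_le (n m : ℕ) (hn : 0 < n) :
    (((Finset.univ : Finset (Finset (Fin n))).filter (fun D => D.card ≤ m)).card : ℝ) ≤
      Real.exp 1 * n ^ m := by
  have hn' : (0:ℝ) < n := by exact_mod_cast hn
  have hn1 : (1:ℝ) ≤ n := by exact_mod_cast hn
  calc _ = ∑ D ∈ (Finset.univ : Finset (Finset (Fin n))).filter (fun D => D.card ≤ m), (1:ℝ) := by
        simp
    _ ≤ ∑ D ∈ (Finset.univ : Finset (Finset (Fin n))).filter (fun D => D.card ≤ m),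
        (n:ℝ) ^ m * ((n:ℝ)⁻¹) ^ D.card := by
        refine Finset.sum_le_sum fun D hD => ?_
        have hD : D.card ≤ m := by simpa using hD
        rw [inv_pow, ← div_eq_mul_inv, one_le_div (by positivity)]
        exact pow_le_pow_right₀ hn1 hD
    _ ≤ ∑ D : Finset (Fin n), (n:ℝ) ^ m * ((n:ℝ)⁻¹) ^ D.card :=
        Finset.sum_le_sum_of_subset_of_nonneg (Finset.filter_subset _ _)
          (fun _ _ _ => by positivity)
    _ = (n:ℝ) ^ m * ((n:ℝ)⁻¹ + 1) ^ n := by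
        rw [← Finset.mul_sum]
        have h2 := Fintype.sum_pow_mul_eq_add_pow (Fin n) ((n:ℝ)⁻¹) 1
        simp only [one_pow, mul_one, Fintype.card_fin] at h2
        rw [h2]
    _ ≤ (n:ℝ) ^ m * Real.exp 1 := by
        have h1 : (n:ℝ) * (n:ℝ)⁻¹ = 1 := by field_simp
        have h2 : Real.exp 1 = Real.exp ((n:ℝ)⁻¹) ^ n := by rw [← Real.exp_nat_mul, h1]
        rw [h2]
        gcongr
        exact Real.add_one_le_exp _
    _ = _ := by ring

lemma prob_P3 (n m : ℕ) (p D0 μ : ℝ) (hn : 0 < n) (hp0 : 0 ≤ p) (hp1 : p ≤ 1)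
    (hD0 : D0 ≤ m) (hμ : 4 * m ≤ μ)
    (hq : ∀ a : ℕ, (a : ℝ) ≤ D0 → μ ≤ ((n - (a + m) : ℕ) : ℝ) *
      ((1 - p) ^ a - (1 - p) ^ (a + m))) :
    Pr n p (fun G => ¬ P3 n m D0 G) ≤ (Real.exp 1 * n ^ m) ^ 2 * Real.exp (-(μ / 16)) := by
  classical
  let s : Finset (Finset (Fin n) × Finset (Fin n)) :=
    ((Finset.univ ×ˢ Finset.univ).filter
      (fun q => (Disjoint q.1 q.2 ∧ (q.1.card : ℝ) ≤ D0 ∧ q.2.card = m)))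
  have hs : s ⊆ ((Finset.univ : Finset (Finset (Fin n))).filter (fun D => D.card ≤ m)) ×ˢ
      ((Finset.univ : Finset (Finset (Fin n))).filter (fun D => D.card ≤ m)) := by
    intro q hq
    obtain ⟨h1, h2, h3⟩ : Disjoint q.1 q.2 ∧ (q.1.card : ℝ) ≤ D0 ∧ q.2.card = m := by
      simpa [s] using hq
    have : q.1.card ≤ m := by exact_mod_cast h2.trans hD0
    simp [this, h3.le]
  have : ∀ G, ¬ P3 n m D0 G → ∃ q ∈ s, ((XS G q.1 q.2).card : ℝ) < (1 - 2 * (1 / 4)) * μ := by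
    intro G h
    simp only [P3, not_forall, not_le] at h
    obtain ⟨D, A, h1, h2, h3, h4⟩ := h
    refine ⟨(D, A), by simp [s, h1, h2, h3], ?_⟩
    have : ((XS G D A).card : ℝ) < 2 * m := by exact_mod_cast h4
    show ((XS G D A).card : ℝ) < _
    linarith
  refine (Pr_mono n p hp0 hp1 _ _ this).trans
    ((Pr_exists_le n p hp0 hp1 s _).trans ?_)
  calc _ ≤ ∑ q ∈ s, Real.exp (-(μ / 16)) := by
        refine Finset.sum_le_sum fun q hq' => ?_
        obtain ⟨h1, h2, h3⟩ : Disjoint q.1 q.2 ∧ (q.1.card : ℝ) ≤ D0 ∧ q.2.card = m := by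
          simpa [s] using hq'
        have hm0 : (0:ℝ) ≤ m := by positivity
        refine (chernoff_lower n p (1 / 4) μ hp0 hp1 (by norm_num) (by norm_num) q.1 q.2 h1
          (by linarith) ?_).trans (le_of_eq ?_)
        · rw [h3]; exact hq _ h2
        · congr 1; ring
    _ = (s.card : ℝ) * Real.exp (-(μ / 16)) := by simp
    _ ≤ _ := by
        gcongr
        have h1 := Finset.card_le_card hs
        rw [Finset.card_product] at h1
        have h2 := count_le n m hn
        refine (Nat.cast_le.mpr h1).trans ?_
        push_cast
        rw [sq]
        gcongr

/-- remove all edges at `v` -/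
def del {n : ℕ} (G : SimpleGraph (Fin n)) (v : Fin n) : SimpleGraph (Fin n) where
  Adj a b := G.Adj a b ∧ a ≠ v ∧ b ≠ v
  symm := ⟨fun _ _ h => ⟨h.1.symm, h.2.2, h.2.1⟩⟩
  loopless := ⟨fun _ h => h.1.ne rfl⟩

lemma not_mem_bl_del {n : ℕ} (G : SimpleGraph (Fin n)) (u v : Fin n) (huv : u ≠ v) (j : ℕ) :
    v ∉ bl (del G v) {u} j := by
  induction j with
  | zero => simpa [bl] using huv.symm
  | succ j ih =>
    rw [mem_bl_succ]
    rintro (h | ⟨w, _, h⟩)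
    · exact ih h
    · exact h.2.1 rfl

lemma bl_del_subset {n : ℕ} (G : SimpleGraph (Fin n)) (u v : Fin n) (j : ℕ) :
    bl (del G v) {u} j ⊆ bl G {u} j := by
  induction j with
  | zero => simp [bl]
  | succ j ih =>
    intro w
    rw [mem_bl_succ, mem_bl_succ]
    rintro (h | ⟨x, hx, h⟩)
    · exact Or.inl (ih h)
    · exact Or.inr ⟨x, ih hx, h.1⟩

lemma prob_far (n i : ℕ) (p x : ℝ) (hp0 : 0 ≤ p) (hp1 : p ≤ 1) (Q : SimpleGraph (Fin n) → Prop)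
    (hQ : ∀ G, Q G → ∀ u v, u ≠ v → x ≤ ((bl (del G v) {u} i).card : ℝ)) :
    Pr n p (fun G => Q G ∧ ∃ u v, v ∉ bl G {u} (i + 1)) ≤ n ^ 2 * Real.exp (-(p * x)) := by
  classical
  let R : Fin n × Fin n → SimpleGraph (Fin n) → Prop := fun q G =>
    q.1 ≠ q.2 ∧ x ≤ ((bl (del G q.2) {q.1} i).card : ℝ) ∧
      ∀ w ∈ bl (del G q.2) {q.1} i, ¬ G.Adj q.2 w
  have : ∀ G, (Q G ∧ ∃ u v, v ∉ bl G {u} (i + 1)) →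
      ∃ q ∈ (Finset.univ : Finset (Fin n × Fin n)), R q G := by
    rintro G ⟨hG, u, v, huv⟩
    have hne : u ≠ v := by
      rintro rfl
      apply huv
      have : ∀ j, u ∈ bl G {u} j := by
        intro j
        induction j with
        | zero => simp [bl]
        | succ j ih => rw [mem_bl_succ]; exact Or.inl ih
      exact this _
    refine ⟨(u, v), by simp, hne, hQ G hG u v hne, fun w hw h => huv ?_⟩
    rw [mem_bl_succ]
    exact Or.inr ⟨w, bl_del_subset G u v i hw, h⟩
  refine (Pr_mono n p hp0 hp1 _ _ this).trans
    ((Pr_exists_le n p hp0 hp1 Finset.univ _).trans ?_)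
  calc _ ≤ ∑ q : Fin n × Fin n, Real.exp (-(p * x)) := by
        refine Finset.sum_le_sum fun q _ => ?_
        obtain ⟨u, v⟩ := q
        let s : Finset (Finset (Fin n)) :=
          Finset.univ.filter (fun D => v ∉ D ∧ x ≤ (D.card : ℝ))
        let f : Finset (Fin n) → SimpleGraph (Fin n) → ℝ := fun D G =>
          if bl (del G v) {u} i = D then 1 else 0
        let g : Finset (Fin n) → SimpleGraph (Fin n) → ℝ := fun D G =>
          ∏ w ∈ D, if G.Adj v w then 0 else 1
        have hf0 : ∀ D G, 0 ≤ f D G := fun D G => by simp only [f]; positivity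
        have hg0 : ∀ D G, 0 ≤ g D G := fun D G =>
          Finset.prod_nonneg fun w _ => by positivity
        have hE : ∀ D ∈ s, Ex n p (fun G => f D G * g D G) ≤ Real.exp (-(p * x)) * Ex n p (f D) := by
          intro D hD
          obtain ⟨hvD, hxD⟩ : v ∉ D ∧ x ≤ (D.card : ℝ) := by simpa [s] using hD
          rw [Ex_mul n p (f D) (g D) {e | v ∉ e}, Ex_noNbr n p v D hvD, mul_comm]
          · have h1 : (1 - p) ^ D.card ≤ Real.exp (-(p * x)) := by
              calc (1 - p) ^ D.card ≤ Real.exp (-p) ^ D.card := by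
                    have : 0 ≤ 1 - p := by linarith
                    gcongr
                    have := Real.add_one_le_exp (-p); linarith
                _ = Real.exp (-(p * D.card)) := by rw [← Real.exp_nat_mul]; congr 1; ring
                _ ≤ _ := by gcongr
            have h2 : 0 ≤ Ex n p (f D) := by
              have := Ex_mono n p hp0 hp1 (fun _ => 0) (f D) (hf0 D)
              have h0 : Ex n p (fun _ => 0) = 0 := by simp [Ex]
              linarith
            gcongr
          · intro G H hGH
            have : del G v = del H v := by
              ext a b
              simp only [del]
              constructor
              · rintro ⟨h1, h2, h3⟩
                exact ⟨(hGH a b (by simp [h2.symm, h3.symm])).mp h1, h2, h3⟩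
              · rintro ⟨h1, h2, h3⟩
                exact ⟨(hGH a b (by simp [h2.symm, h3.symm])).mpr h1, h2, h3⟩
            simp only [f, this]
          · intro G H hGH
            refine Finset.prod_congr rfl fun w _ => ?_
            simp [hGH v w (by simp)]
        calc Pr n p (R (u, v)) ≤ Ex n p (fun G => ∑ D ∈ s, f D G * g D G) := by
              refine Pr_le_Ex n p hp0 hp1 _ _
                (fun G => Finset.sum_nonneg fun D _ => mul_nonneg (hf0 D G) (hg0 D G)) ?_
              rintro G ⟨h1, h2, h3⟩
              have hmem : bl (del G v) {u} i ∈ s := by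
                simp only [s, Finset.mem_filter, Finset.mem_univ, true_and]
                exact ⟨not_mem_bl_del G u v h1 i, h2⟩
              refine le_trans ?_ (Finset.single_le_sum (f := fun D => f D G * g D G)
                (fun D _ => mul_nonneg (hf0 D G) (hg0 D G)) hmem)
              have : g (bl (del G v) {u} i) G = 1 :=
                Finset.prod_eq_one fun w hw => by simpa using h3 w hw
              simp [this, f]
          _ = ∑ D ∈ s, Ex n p (fun G => f D G * g D G) := Ex_sum n p s _
          _ ≤ ∑ D ∈ s, Real.exp (-(p * x)) * Ex n p (f D) := Finset.sum_le_sum hE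
          _ = Real.exp (-(p * x)) * Ex n p (fun G => ∑ D ∈ s, f D G) := by
              rw [Ex_sum, Finset.mul_sum]
          _ ≤ Real.exp (-(p * x)) * Ex n p (fun _ => 1) := by
              gcongr
              refine Ex_mono n p hp0 hp1 _ _ fun G => ?_
              simp only [f, Finset.sum_ite_eq]
              split_ifs <;> norm_num
          _ = Real.exp (-(p * x)) := by rw [Ex_one, mul_one]
    _ = _ := by
        simp only [Finset.sum_const, Finset.card_univ, Fintype.card_prod, Fintype.card_fin,
          nsmul_eq_mul]
        push_cast; ring

end LocGnp

open Filter SimpleGraph Set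
open scoped Topology

/-! ### Part D: deterministic ball growth -/

namespace LocGnp

lemma growth_upper (b : ℕ → ℝ) (r d δ : ℝ) (hd : 0 ≤ d) (hδ : 0 ≤ δ) (h0 : b 0 = r)
    (hup : ∀ j, b (j + 1) ≤ (1 + 3 * δ) * d * b j) (j : ℕ) :
    b j ≤ r * ((1 + 3 * δ) ^ j * d ^ j) := by
  induction j with
  | zero => simp [h0]
  | succ j ih =>
    calc b (j + 1) ≤ (1 + 3 * δ) * d * b j := hup j
      _ ≤ (1 + 3 * δ) * d * (r * ((1 + 3 * δ) ^ j * d ^ j)) := by gcongr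
      _ = _ := by ring

lemma growth_lower (b : ℕ → ℝ) (r d δ n : ℝ) (i : ℕ) (hn : 0 < n) (hδd : 1 ≤ δ * d)
    (hδ : 0 ≤ δ) (hδ1 : δ ≤ 1 / 8) (hr0 : 0 ≤ r) (hr2 : r ≤ 2) (hd1 : 1 ≤ d)
    (hi : (1 + 3 * δ) ^ (i + 1) ≤ 2)
    (hdi : d ^ (i + 1) / n ≤ 1 / 16) (h0 : b 0 = r) (hb : ∀ j, 0 ≤ b j)
    (hup : ∀ j, b (j + 1) ≤ (1 + 3 * δ) * d * b j)
    (hlo : ∀ j, b j * d ≤ n / 4 → (1 - 3 * δ) * (b j * d * (1 - 2 * (b j * d / n))) ≤ b (j + 1)) :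
    r * ((1 - 4 * δ) ^ (i + 1) * (1 - 8 * (d ^ (i + 1) / n)) * d ^ (i + 1)) ≤ b (i + 1) := by
  have hd0 : 0 < d := by linarith
  have hup' : ∀ j ≤ i, b j * d / n ≤ 4 * (d ^ (j + 1) / n) := by
    intro j hj
    have h1 := growth_upper b r d δ hd0.le hδ h0 hup j
    have h2 : (1 + 3 * δ) ^ j ≤ 2 :=
      (pow_le_pow_right₀ (by linarith) (by omega)).trans hi
    have h3 : b j ≤ 4 * d ^ j := by
      calc b j ≤ _ := h1
        _ ≤ 2 * (2 * d ^ j) := by gcongr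
        _ = _ := by ring
    calc b j * d / n ≤ 4 * d ^ j * d / n := by gcongr
      _ = _ := by ring
  have hpw : ∀ j ≤ i, d ^ (j + 1) / n ≤ 1 / 16 := by
    intro j hj
    refine le_trans ?_ hdi
    gcongr
  have hsm : ∀ j ≤ i, b j * d ≤ n / 4 := by
    intro j hj
    have h1 := hup' j hj
    have h2 := hpw j hj
    have : b j * d / n ≤ 1 / 4 := by linarith
    rw [div_le_iff₀ hn] at this
    linarith
  have hlow : ∀ j ≤ i, r * ((1 - 4 * δ) ^ j * d ^ j) ≤ b j := by
    intro j hj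
    induction j with
    | zero => simp [h0]
    | succ j ih =>
      have h1 := ih (by omega)
      have h2 := hlo j (hsm j (by omega))
      have h3 := hup' j (by omega)
      have h4 : d ^ (j + 1) / n ≤ δ / 16 := by
        have h5 := hpw (j + 1) hj
        have h6 : d ^ (j + 1 + 1) / n = d ^ (j + 1) / n * d := by rw [pow_succ]; ring
        rw [h6] at h5
        have h7 : d ^ (j + 1) / n * d ≤ δ / 16 * d := by linarith
        exact le_of_mul_le_mul_right h7 hd0
      have h5 : 1 - 4 * δ ≤ (1 - 3 * δ) * (1 - 2 * (b j * d / n)) := by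
        have h6 : 1 - δ ≤ 1 - 2 * (b j * d / n) := by linarith
        have h7 : (1 - 3 * δ) * (1 - δ) ≤ (1 - 3 * δ) * (1 - 2 * (b j * d / n)) :=
          mul_le_mul_of_nonneg_left h6 (by linarith)
        nlinarith
      calc r * ((1 - 4 * δ) ^ (j + 1) * d ^ (j + 1))
          = (1 - 4 * δ) * d * (r * ((1 - 4 * δ) ^ j * d ^ j)) := by ring
        _ ≤ (1 - 4 * δ) * d * b j := by
            have : 0 ≤ 1 - 4 * δ := by linarith
            gcongr
        _ = (1 - 4 * δ) * (d * b j) := by ring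
        _ ≤ ((1 - 3 * δ) * (1 - 2 * (b j * d / n))) * (d * b j) := by
            have := hb j
            gcongr
        _ = (1 - 3 * δ) * (b j * d * (1 - 2 * (b j * d / n))) := by ring
        _ ≤ _ := h2
  have h2 := hlo i (hsm i le_rfl)
  have h3 := hup' i le_rfl
  have h4 := hlow i le_rfl
  have hb' := hb i
  have a1 : 0 ≤ 1 - 4 * δ := by linarith
  have a2 : 0 ≤ 1 - 8 * (d ^ (i + 1) / n) := by linarith
  calc _ = (1 - 4 * δ) * (1 - 8 * (d ^ (i + 1) / n)) * d * (r * ((1 - 4 * δ) ^ i * d ^ i)) := by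
        ring
    _ ≤ (1 - 4 * δ) * (1 - 8 * (d ^ (i + 1) / n)) * d * b i := by
        gcongr
    _ ≤ (1 - 3 * δ) * (1 - 2 * (b i * d / n)) * d * b i := by
        have a3 : (1 - 4 * δ) * (1 - 8 * (d ^ (i + 1) / n)) ≤
            (1 - 3 * δ) * (1 - 2 * (b i * d / n)) :=
          mul_le_mul (by linarith) (by linarith) a2 (by linarith)
        gcongr
    _ = (1 - 3 * δ) * (b i * d * (1 - 2 * (b i * d / n))) := by ring
    _ ≤ _ := h2

lemma bl_nonempty {n : ℕ} (G : SimpleGraph (Fin n)) (X : Finset (Fin n)) (hX : X.Nonempty)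
    (j : ℕ) : (bl G X j).Nonempty := by
  induction j with
  | zero => exact hX
  | succ j ih =>
    obtain ⟨x, hx⟩ := ih
    exact ⟨x, mem_bl_succ.mpr (Or.inl hx)⟩

lemma bl_upper_step {n : ℕ} (G : SimpleGraph (Fin n)) (B : Finset (Fin n)) (d δ : ℝ)
    (h : P1 n d δ G) (hδd : 1 ≤ δ * d) :
    ((stp G B).card : ℝ) ≤ (1 + 3 * δ) * d * B.card := by
  rw [card_stp]
  push_cast
  have := card_XS_le G B _ h
  have hc : (0:ℝ) ≤ B.card := by positivity
  nlinarith

lemma bl_upper {n : ℕ} (G : SimpleGraph (Fin n)) (X : Finset (Fin n)) (d δ : ℝ)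
    (h : P1 n d δ G) (hd : 0 ≤ d) (hδ : 0 ≤ δ) (hδd : 1 ≤ δ * d) (j : ℕ) :
    ((bl G X j).card : ℝ) ≤ X.card * ((1 + 3 * δ) ^ j * d ^ j) :=
  growth_upper (fun j => ((bl G X j).card : ℝ)) X.card d δ hd hδ rfl
    (fun j => bl_upper_step G (bl G X j) d δ h hδd) j

lemma bl_lower {n : ℕ} (G : SimpleGraph (Fin n)) (X : Finset (Fin n)) (d δ : ℝ) (i : ℕ)
    (hn : 0 < n) (h1 : P1 n d δ G) (h2 : P2 n d δ G) (hX : X.Nonempty) (hX2 : X.card ≤ 2)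
    (hδd : 1 ≤ δ * d) (hδ : 0 ≤ δ) (hδ1 : δ ≤ 1 / 8) (hd1 : 1 ≤ d)
    (hi : (1 + 3 * δ) ^ (i + 1) ≤ 2) (hdi : d ^ (i + 1) / n ≤ 1 / 16) :
    X.card * ((1 - 4 * δ) ^ (i + 1) * (1 - 8 * (d ^ (i + 1) / n)) * d ^ (i + 1)) ≤
      ((bl G X (i + 1)).card : ℝ) := by
  refine growth_lower (fun j => ((bl G X j).card : ℝ)) X.card d δ n i (by exact_mod_cast hn) hδd
    hδ hδ1 (by positivity) (by exact_mod_cast hX2) hd1 hi hdi rfl (fun j => by positivity)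
    (fun j => bl_upper_step G (bl G X j) d δ h1 hδd) ?_
  intro j hj
  have h3 := h2 (bl G X j) (bl_nonempty G X hX j) hj
  have h4 : ((bl G X (j + 1)).card : ℝ) = (bl G X j).card + (XS G ∅ (bl G X j)).card := by
    exact_mod_cast card_stp G (bl G X j)
  simp only [h4]
  have hn' : (0:ℝ) < n := by exact_mod_cast hn
  have h5 : ((bl G X j).card : ℝ) * d / n ≤ 1 / 4 := by
    rw [div_le_iff₀ hn']; linarith
  have h6 : 0 ≤ ((bl G X j).card : ℝ) * d * (1 - 2 * ((bl G X j).card * d / n)) :=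
    mul_nonneg (by positivity) (by linarith)
  have h7 : (0:ℝ) ≤ (bl G X j).card := by positivity
  nlinarith [mul_nonneg hδ h6]

lemma bl_del_lower {n : ℕ} (G : SimpleGraph (Fin n)) (u v : Fin n) (huv : u ≠ v) (d δ : ℝ) (i : ℕ)
    (hn : 0 < n) (h1 : P1 n d δ G) (h2 : P2 n d δ G)
    (hδd : 2 ≤ δ * d) (hδ : 0 ≤ δ) (hδ1 : δ ≤ 1 / 8) (hd1 : 1 ≤ d)
    (hi : (1 + 3 * δ) ^ (i + 1) ≤ 2) (hdi : d ^ (i + 1) / n ≤ 1 / 16) :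
    ((1 - 4 * δ) ^ (i + 1) * (1 - 8 * (d ^ (i + 1) / n)) * d ^ (i + 1)) ≤
      ((bl (del G v) {u} (i + 1)).card : ℝ) := by
  classical
  have h1' : P1 n d δ (del G v) := by
    intro w
    refine le_trans ?_ (h1 w)
    have : XS (del G v) ∅ {w} ⊆ XS G ∅ {w} := by
      intro x hx
      simp only [XS, Finset.mem_filter, Finset.mem_univ, true_and] at hx ⊢
      obtain ⟨a, b, c, y, hy, e⟩ := hx
      exact ⟨a, b, by simp, y, hy, e.1⟩
    exact_mod_cast Finset.card_le_card this
  have := growth_lower (fun j => ((bl (del G v) {u} j).card : ℝ)) 1 d δ n i (by exact_mod_cast hn)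
    (by linarith) hδ hδ1 (by positivity) (by norm_num) hd1 hi hdi (by simp [bl])
    (fun j => by positivity)
    (fun j => bl_upper_step (del G v) _ d δ h1' (by linarith)) ?_
  · simpa using this
  intro j hj
  set B := bl (del G v) {u} j with hB
  have hBne : B.Nonempty := bl_nonempty _ _ (by simp) j
  have h3 := h2 B hBne hj
  have hvB : v ∉ B := not_mem_bl_del G u v huv j
  have h4 : ((bl (del G v) {u} (j + 1)).card : ℝ) = B.card + (XS (del G v) ∅ B).card := by
    exact_mod_cast card_stp (del G v) B
  simp only [h4]
  have hsub : (XS G ∅ B).erase v ⊆ XS (del G v) ∅ B := by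
    intro x hx
    rw [Finset.mem_erase] at hx
    obtain ⟨hxv, hx⟩ := hx
    simp only [XS, Finset.mem_filter, Finset.mem_univ, true_and] at hx ⊢
    obtain ⟨a, b, c, y, hy, e⟩ := hx
    exact ⟨a, b, by simp, y, hy, e, hxv, by rintro rfl; exact hvB hy⟩
  have hcard : ((XS G ∅ B).card : ℝ) ≤ (XS (del G v) ∅ B).card + 1 := by
    have e1 := Finset.card_le_card hsub
    have e2 := Finset.pred_card_le_card_erase (s := XS G ∅ B) (a := v)
    have e3 : (XS G ∅ B).card ≤ (XS (del G v) ∅ B).card + 1 := by omega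
    exact_mod_cast e3
  have hn' : (0:ℝ) < n := by exact_mod_cast hn
  have h5 : (B.card : ℝ) * d / n ≤ 1 / 4 := by
    rw [div_le_iff₀ hn']; linarith
  have h7 : (1:ℝ) ≤ B.card := by exact_mod_cast hBne.card_pos
  have h6 : d / 2 ≤ (B.card : ℝ) * d * (1 - 2 * (B.card * d / n)) := by
    have : (B.card : ℝ) * d * (1 / 2) ≤ B.card * d * (1 - 2 * (B.card * d / n)) := by
      gcongr; linarith
    nlinarith
  nlinarith [mul_le_mul_of_nonneg_left h6 hδ]

lemma mem_bl_iff {n : ℕ} (G : SimpleGraph (Fin n)) (X : Finset (Fin n)) (j : ℕ) (u : Fin n) :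
    u ∈ bl G X j ↔ ∃ x ∈ X, ∃ w : G.Walk x u, w.length ≤ j := by
  induction j generalizing u with
  | zero =>
    constructor
    · intro h; exact ⟨u, h, Walk.nil, le_rfl⟩
    · rintro ⟨x, hx, w, hw⟩
      have := Walk.eq_of_length_eq_zero (Nat.le_zero.mp hw)
      exact this ▸ hx
  | succ j ih =>
    rw [mem_bl_succ]
    constructor
    · rintro (h | ⟨w, hw, h⟩)
      · obtain ⟨x, hx, w, hw⟩ := (ih u).mp h
        exact ⟨x, hx, w, hw.trans (Nat.le_succ j)⟩
      · obtain ⟨x, hx, q, hq⟩ := (ih w).mp hw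
        refine ⟨x, hx, q.concat h.symm, ?_⟩
        rw [Walk.length_concat]; omega
    · rintro ⟨x, hx, w, hw⟩
      rcases Nat.lt_or_ge w.length (j + 1) with hlt | hge
      · exact Or.inl ((ih u).mpr ⟨x, hx, w, by omega⟩)
      · have hnn : ¬ w.Nil := by
          intro hn
          have := Walk.nil_iff_length_eq.mp hn
          omega
        refine Or.inr ⟨w.penultimate, (ih _).mpr ⟨x, hx, w.dropLast, ?_⟩,
          (w.adj_penultimate hnn).symm⟩
        have : w.dropLast.length = w.length - 1 := by simp
        omega

lemma bl_union {n : ℕ} (G : SimpleGraph (Fin n)) (u v : Fin n) (j : ℕ) :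
    bl G {u, v} j = bl G {u} j ∪ bl G {v} j := by
  ext x
  simp [mem_bl_iff]

/-- all pairs are at distance at most `D` -/
def Diam (n D : ℕ) (G : SimpleGraph (Fin n)) : Prop := ∀ u v, v ∈ bl G {u} D

lemma Diam.connected {n D : ℕ} {G : SimpleGraph (Fin n)} (h : Diam n D G) (hn : 0 < n) :
    G.Connected := by
  haveI : Nonempty (Fin n) := ⟨⟨0, hn⟩⟩
  refine SimpleGraph.Connected.mk fun u v => ?_
  obtain ⟨x, hx, w, _⟩ := (mem_bl_iff G {u} D v).mp (h u v)
  have : x = u := by simpa using hx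
  subst this
  exact ⟨w⟩

lemma dist_le_iff {n : ℕ} {G : SimpleGraph (Fin n)} (hc : G.Connected) (u v : Fin n) (j : ℕ) :
    G.dist u v ≤ j ↔ v ∈ bl G {u} j := by
  rw [mem_bl_iff]
  constructor
  · intro h
    obtain ⟨w, hw⟩ := hc.exists_walk_length_eq_dist u v
    exact ⟨u, by simp, w, by omega⟩
  · rintro ⟨x, hx, w, hw⟩
    have : x = u := by simpa using hx
    subst this
    exact (SimpleGraph.dist_le w).trans hw

open Classical in
/-- number of vertices separating `u` and `v` -/
lemma separating {n : ℕ} (G : SimpleGraph (Fin n)) (hc : G.Connected) (u v : Fin n) (j : ℕ)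
    (lo up : ℝ) (h2 : 2 * lo ≤ ((bl G {u, v} j).card : ℝ))
    (hup : ∀ w, ((bl G {w} j).card : ℝ) ≤ up) :
    4 * lo - 2 * up ≤
      ((Finset.univ.filter (fun s => G.dist s u ≠ G.dist s v)).card : ℝ) := by
  set U := bl G {u} j
  set V := bl G {v} j
  have hsub : (U \ V) ∪ (V \ U) ⊆ Finset.univ.filter (fun s => G.dist s u ≠ G.dist s v) := by
    intro s hs
    simp only [Finset.mem_filter, Finset.mem_univ, true_and]
    intro he
    rw [SimpleGraph.dist_comm, SimpleGraph.dist_comm (u := s)] at he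
    have : s ∈ U ↔ s ∈ V := by
      rw [← dist_le_iff hc, ← dist_le_iff hc, he]
    simp only [Finset.mem_union, Finset.mem_sdiff] at hs
    tauto
  have h3 : ((U \ V) ∪ (V \ U)).card = (U \ V).card + (V \ U).card := by
    apply Finset.card_union_of_disjoint
    rw [Finset.disjoint_left]
    intro a ha hb
    simp only [Finset.mem_sdiff] at ha hb
    exact ha.2 hb.1
  have h4 := Finset.card_union_add_card_inter U V
  have h5 := Finset.card_sdiff_add_card_inter U V
  have h6 := Finset.card_sdiff_add_card_inter V U
  rw [Finset.inter_comm] at h6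
  rw [bl_union] at h2
  have h7 := Finset.card_le_card hsub
  have h8 : ((U \ V).card + (V \ U).card : ℝ) ≤
      ((Finset.univ.filter (fun s => G.dist s u ≠ G.dist s v)).card : ℝ) := by
    rw [h3] at h7; exact_mod_cast h7
  have r4 : ((U ∪ V).card + (U ∩ V).card : ℝ) = U.card + V.card := by exact_mod_cast h4
  have r5 : ((U \ V).card + (U ∩ V).card : ℝ) = U.card := by exact_mod_cast h5
  have r6 : ((V \ U).card + (U ∩ V).card : ℝ) = V.card := by exact_mod_cast h6
  have := hup u
  have := hup v
  linarith

end LocGnp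

open Filter SimpleGraph Set
open scoped Topology
namespace LocGnp

/-- number of ordered pairs of distinct vertices of `X` not distinguished by `S` -/
noncomputable def bad {n : ℕ} (G : SimpleGraph (Fin n)) (X S : Finset (Fin n)) :
    Finset (Fin n × Fin n) := by
  classical
  exact (X ×ˢ X).filter (fun x => x.1 ≠ x.2 ∧ ∀ s ∈ S, G.dist s x.1 = G.dist s x.2)

lemma exists_good {n : ℕ} (hn : 0 < n) (G : SimpleGraph (Fin n)) (M : ℝ) (k : ℕ) (hk : k ≤ n)
    (hM : ∀ u v : Fin n, u ≠ v →
      M ≤ ((Finset.univ.filter (fun s => G.dist s u ≠ G.dist s v)).card : ℝ))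
    (hq : 0 ≤ 1 - M / n) (X : Finset (Fin n)) :
    ∃ S : Finset (Fin n), S.card = k ∧
      ((bad G X S).card : ℝ) ≤ (X.card : ℝ) ^ 2 * (1 - M / n) ^ k := by
  classical
  have hn0 : (0:ℝ) < n := by exact_mod_cast hn
  set P : Finset (Fin n × Fin n) := (X ×ˢ X).filter (fun x => x.1 ≠ x.2) with hP
  have hPc : (P.card : ℝ) ≤ (X.card : ℝ) ^ 2 := by
    have : P.card ≤ X.card * X.card := by
      rw [← Finset.card_product]; exact Finset.card_filter_le _ _
    rw [sq]; exact_mod_cast this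
  have hM' : ∀ x ∈ P, ((Finset.univ.filter (fun s => G.dist s x.1 = G.dist s x.2)).card : ℝ)
      ≤ n - M := by
    intro x hx
    have h1 := hM x.1 x.2 (Finset.mem_filter.mp hx).2
    have h2 := Finset.card_filter_add_card_filter_not (s := (Finset.univ : Finset (Fin n)))
      (fun s => G.dist s x.1 = G.dist s x.2)
    rw [Finset.card_univ, Fintype.card_fin] at h2
    have h3 : ((Finset.univ.filter (fun s => G.dist s x.1 = G.dist s x.2)).card : ℝ) +
      ((Finset.univ.filter (fun s => ¬ G.dist s x.1 = G.dist s x.2)).card : ℝ) = n := by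
      exact_mod_cast h2
    simp only [ne_eq] at h1
    linarith
  rcases P.eq_empty_or_nonempty with hPe | hPne
  · obtain ⟨S, _, hS⟩ := Finset.exists_subset_card_eq (s := (Finset.univ : Finset (Fin n)))
      (n := k) (by simpa using hk)
    refine ⟨S, hS, ?_⟩
    have hb : bad G X S = ∅ := by
      rw [← Finset.subset_empty, ← hPe]
      intro x hx
      simp only [bad, Finset.mem_filter] at hx
      simp only [hP, Finset.mem_filter]
      exact ⟨hx.1, hx.2.1⟩
    rw [hb]
    simp only [Finset.card_empty, Nat.cast_zero]; positivity
  obtain ⟨x0, hx0⟩ := hPne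
  have hq0 : 0 ≤ (n:ℝ) - M := le_trans (by positivity) (hM' x0 hx0)
  have key : ∑ f : Fin k → Fin n,
      (((P.filter (fun x => ∀ j, G.dist (f j) x.1 = G.dist (f j) x.2)).card : ℕ) : ℝ) ≤
      ∑ f : Fin k → Fin n, (X.card : ℝ) ^ 2 * (1 - M / n) ^ k := by
    have e1 : ∀ f : Fin k → Fin n,
      (((P.filter (fun x => ∀ j, G.dist (f j) x.1 = G.dist (f j) x.2)).card : ℕ) : ℝ)
        = ∑ x ∈ P, if (∀ j, G.dist (f j) x.1 = G.dist (f j) x.2) then (1:ℝ) else 0 := by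
      intro f
      rw [Finset.sum_boole]
    simp_rw [e1]
    rw [Finset.sum_comm]
    have e2 : ∀ x ∈ P, ∑ f : Fin k → Fin n,
        (if (∀ j, G.dist (f j) x.1 = G.dist (f j) x.2) then (1:ℝ) else 0) ≤ (n - M) ^ k := by
      intro x hx
      rw [Finset.sum_boole]
      have : (Finset.univ.filter (fun f : Fin k → Fin n =>
          ∀ j, G.dist (f j) x.1 = G.dist (f j) x.2)) =
          Fintype.piFinset (fun _ : Fin k =>
            Finset.univ.filter (fun s => G.dist s x.1 = G.dist s x.2)) := by
        ext f; simp
      rw [this, Fintype.card_piFinset_const]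
      push_cast
      exact pow_le_pow_left₀ (by positivity) (hM' x hx) k
    refine (Finset.sum_le_sum e2).trans ?_
    rw [Finset.sum_const, Finset.sum_const, Finset.card_univ, Fintype.card_fun, Fintype.card_fin,
      Fintype.card_fin, nsmul_eq_mul, nsmul_eq_mul]
    push_cast
    have : (n:ℝ) ^ k * ((X.card : ℝ) ^ 2 * (1 - M / n) ^ k) = (X.card : ℝ) ^ 2 * (n - M) ^ k := by
      have : (n:ℝ) - M = n * (1 - M / n) := by field_simp
      rw [this, mul_pow]; ring
    rw [this]
    gcongr
  have : Nonempty (Fin n) := ⟨⟨0, hn⟩⟩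
  obtain ⟨f, _, hf⟩ := Finset.exists_le_of_sum_le (Finset.univ_nonempty) key
  obtain ⟨S, hS1, _, hS2⟩ := Finset.exists_subsuperset_card_eq
    (Finset.subset_univ (Finset.univ.image f)) (n := k)
    (by simpa using Finset.card_image_le (s := Finset.univ) (f := f)) (by simpa using hk)
  refine ⟨S, hS2, le_trans ?_ hf⟩
  norm_cast
  apply Finset.card_le_card
  intro x hx
  simp only [bad, Finset.mem_filter] at hx
  simp only [hP, Finset.mem_filter]
  exact ⟨⟨hx.1, hx.2.1⟩, fun j => hx.2.2 _ (hS1 (by simp))⟩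

lemma probe_eq_iff {n : ℕ} (G : SimpleGraph (Fin n)) (S : Finset (Fin n)) (u v : Fin n) :
    probe G S u = probe G S v ↔ ∀ s ∈ S, G.dist s u = G.dist s v := by
  classical
  simp only [probe, Prod.mk.injEq, true_and]
  constructor
  · intro h s hs
    have := congrFun h s
    simpa [hs] using this
  · intro h
    funext s
    by_cases hs : s ∈ S
    · simp [hs, h s hs]
    · simp [hs]

/-- candidate set after history `h` -/
noncomputable def Xof {n : ℕ} (G : SimpleGraph (Fin n)) (h : List (Finset (Fin n) × (Fin n → ℕ))) :
    Finset (Fin n) := by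
  classical
  exact h.foldl (fun X r => stp G (X.filter (fun v => probe G r.1 v = r))) Finset.univ

open Classical in
lemma Xof_append {n : ℕ} (G : SimpleGraph (Fin n)) (h : List (Finset (Fin n) × (Fin n → ℕ))) (r) :
    Xof G (h ++ [r]) = stp G ((Xof G h).filter (fun v => probe G r.1 v = r)) := by
  simp [Xof, List.foldl_append]

lemma hist_succ_eq {V : Type*} {G : SimpleGraph V} {σ : CopStrategy V} {w w' : ℕ → V} {t : ℕ}
    (h : gameHistory G σ w' (t + 1) = gameHistory G σ w (t + 1)) :
    gameHistory G σ w' t = gameHistory G σ w t ∧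
      probe G (σ (gameHistory G σ w t)) (w' t) = probe G (σ (gameHistory G σ w t)) (w t) := by
  simp only [gameHistory] at h
  obtain ⟨h1, h2⟩ := List.append_inj' h rfl
  rw [h1] at h2
  exact ⟨h1, by simpa using h2⟩

lemma mem_Xof {n : ℕ} (G : SimpleGraph (Fin n)) (σ : CopStrategy (Fin n)) (w : ℕ → Fin n)
    (hw : IsRobberWalk G w) (t : ℕ) : w t ∈ Xof G (gameHistory G σ w t) := by
  classical
  induction t with
  | zero => simp [Xof, gameHistory]
  | succ t ih =>
    simp only [gameHistory]
    rw [Xof_append, mem_stp]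
    have hm : w t ∈ (Xof G (gameHistory G σ w t)).filter
        (fun v => probe G (probe G (σ (gameHistory G σ w t)) (w t)).1 v =
          probe G (σ (gameHistory G σ w t)) (w t)) := by
      rw [Finset.mem_filter]
      exact ⟨ih, rfl⟩
    rcases hw t with h | h
    · left; rw [h]; exact hm
    · right; exact ⟨w t, hm, h.symm⟩

theorem cops_win {n : ℕ} (hn : 0 < n) (G : SimpleGraph (Fin n)) (M Δ : ℝ) (k : ℕ) (hk : k ≤ n)
    (hM : ∀ u v : Fin n, u ≠ v →
      M ≤ ((Finset.univ.filter (fun s => G.dist s u ≠ G.dist s v)).card : ℝ))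
    (hΔ : ∀ B, ((stp G B).card : ℝ) ≤ Δ * B.card)
    (hlt : Δ ^ 2 * (1 - M / n) ^ k < 1 / 4) (hq : 0 ≤ 1 - M / n) : CopsWin G k := by
  classical
  choose S hS1 hS2 using exists_good hn G M k hk hM hq
  refine ⟨fun h => S (Xof G h), fun h => hS1 _, fun w hw => ?_⟩
  set σ : CopStrategy (Fin n) := fun h => S (Xof G h) with hσ
  set X : ℕ → Finset (Fin n) := fun t => Xof G (gameHistory G σ w t) with hX
  set C : ℕ → Finset (Fin n) := fun t => (X t).filter
    (fun v => probe G (S (X t)) v = probe G (S (X t)) (w t)) with hC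
  have hXC : ∀ t, X (t + 1) = stp G (C t) := by
    intro t
    simp only [hX, gameHistory]
    rw [Xof_append]
    rfl
  have hstep : ∀ t, 2 ≤ (C (t + 1)).card → (C (t + 1)).card < (C t).card := by
    intro t h2
    have hsub : (C (t + 1)).offDiag ⊆ bad G (X (t + 1)) (S (X (t + 1))) := by
      intro x hx
      rw [Finset.mem_offDiag] at hx
      obtain ⟨ha, hb, hne⟩ := hx
      simp only [hC, Finset.mem_filter] at ha hb
      simp only [bad, Finset.mem_filter, Finset.mem_product]
      refine ⟨⟨ha.1, hb.1⟩, hne, ?_⟩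
      exact (probe_eq_iff G _ _ _).mp (ha.2.trans hb.2.symm)
    have h3 := Finset.card_le_card hsub
    rw [Finset.offDiag_card] at h3
    have h4 : ((C (t + 1)).card : ℝ) * (C (t + 1)).card - (C (t + 1)).card ≤
        ((bad G (X (t + 1)) (S (X (t + 1)))).card : ℝ) := by
      have : (C (t + 1)).card * (C (t + 1)).card ≤
        (bad G (X (t + 1)) (S (X (t + 1)))).card + (C (t + 1)).card := by omega
      have : ((C (t + 1)).card : ℝ) * (C (t + 1)).card ≤
        ((bad G (X (t + 1)) (S (X (t + 1)))).card : ℝ) + (C (t + 1)).card := by exact_mod_cast this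
      linarith
    have h5 := hS2 (X (t + 1))
    have h6 : ((X (t + 1)).card : ℝ) ≤ Δ * (C t).card := by rw [hXC]; exact hΔ _
    have h7 : ((X (t + 1)).card : ℝ) ^ 2 ≤ (Δ * (C t).card) ^ 2 :=
      pow_le_pow_left₀ (by positivity) h6 2
    have h8 : ((X (t + 1)).card : ℝ) ^ 2 * (1 - M / n) ^ k ≤
      (Δ * (C t).card) ^ 2 * (1 - M / n) ^ k := by gcongr
    have h9 : (Δ * (C t).card) ^ 2 * (1 - M / n) ^ k ≤ 1 / 4 * ((C t).card : ℝ) ^ 2 := by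
      have : (Δ * (C t).card) ^ 2 * (1 - M / n) ^ k =
        (Δ ^ 2 * (1 - M / n) ^ k) * ((C t).card : ℝ) ^ 2 := by ring
      rw [this]; gcongr
    have h2' : (2:ℝ) ≤ (C (t + 1)).card := by exact_mod_cast h2
    by_contra hlt'
    push Not at hlt'
    have h10 : ((C t).card : ℝ) ≤ (C (t + 1)).card := by exact_mod_cast hlt'
    have h11 : (0:ℝ) ≤ (C t).card := by positivity
    nlinarith
  have hex : ∃ t, (C t).card ≤ 1 := by
    by_contra hcon
    push Not at hcon
    have : ∀ t, (C t).card + t ≤ (C 0).card := by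
      intro t
      induction t with
      | zero => simp
      | succ t ih =>
        have := hstep t (hcon (t + 1))
        omega
    have := this ((C 0).card + 1)
    omega
  obtain ⟨t, ht⟩ := hex
  refine ⟨t, fun w' hw' hh => ?_⟩
  obtain ⟨h1, h2⟩ := hist_succ_eq hh
  have ha : w' t ∈ C t := by
    simp only [hC, Finset.mem_filter]
    refine ⟨?_, h2⟩
    have := mem_Xof G σ w' hw' t
    rw [h1] at this
    exact this
  have hb : w t ∈ C t := by
    simp only [hC, Finset.mem_filter]
    exact ⟨mem_Xof G σ w hw t, trivial⟩
  exact Finset.card_le_one.mp ht _ ha _ hb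

end LocGnp

open Filter SimpleGraph Set
open scoped Topology
namespace LocGnp

/-- the history in which every distance reported is `i + 1` -/
noncomputable def farHist {n : ℕ} (σ : CopStrategy (Fin n)) (i : ℕ) :
    ℕ → List (Finset (Fin n) × (Fin n → ℕ))
  | 0 => []
  | t + 1 => farHist σ i t ++ [(σ (farHist σ i t), fun s => if s ∈ σ (farHist σ i t) then i + 1 else 0)]

lemma hist_eq_far {n : ℕ} (G : SimpleGraph (Fin n)) (σ : CopStrategy (Fin n)) (i : ℕ)
    (w : ℕ → Fin n) (t : ℕ)
    (h : ∀ j < t, ∀ s ∈ σ (farHist σ i j), G.dist s (w j) = i + 1) :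
    gameHistory G σ w t = farHist σ i t := by
  classical
  induction t with
  | zero => rfl
  | succ t ih =>
    have ih' := ih (fun j hj => h j (by omega))
    simp only [gameHistory, farHist]
    rw [ih']
    congr 2
    simp only [probe, Prod.mk.injEq, true_and]
    funext s
    by_cases hs : s ∈ σ (farHist σ i t)
    · simp [hs, h t (by omega) s hs]
    · simp [hs]

/-- vertices uncovered in round `t` -/
noncomputable def UU {n : ℕ} (G : SimpleGraph (Fin n)) (σ : CopStrategy (Fin n)) (i t : ℕ) :
    Finset (Fin n) := Finset.univ.filter (fun u => ∀ s ∈ σ (farHist σ i t), i < G.dist s u)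

open Classical in
/-- uncovered vertices reachable by uncovered walks -/
noncomputable def CC {n : ℕ} (G : SimpleGraph (Fin n)) (σ : CopStrategy (Fin n)) (i : ℕ) :
    ℕ → Finset (Fin n)
  | 0 => UU G σ i 0
  | t + 1 => (UU G σ i (t + 1)).filter (fun u => ∃ w ∈ CC G σ i t, G.Adj w u)

lemma CC_walk {n : ℕ} (G : SimpleGraph (Fin n)) (σ : CopStrategy (Fin n)) (i t : ℕ)
    (x : Fin n) (hx : x ∈ CC G σ i t) :
    ∃ w : ℕ → Fin n, IsRobberWalk G w ∧ w t = x ∧ ∀ j ≤ t, w j ∈ UU G σ i j := by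
  classical
  induction t generalizing x with
  | zero =>
    refine ⟨fun _ => x, fun _ => Or.inl rfl, rfl, fun j hj => ?_⟩
    have : j = 0 := by omega
    subst this; exact hx
  | succ t ih =>
    simp only [CC, Finset.mem_filter] at hx
    obtain ⟨hxU, y, hy, hadj⟩ := hx
    obtain ⟨w, hw, hwt, hwU⟩ := ih y hy
    refine ⟨fun j => if j ≤ t then w j else x, ?_, by simp, ?_⟩
    · intro j
      by_cases h1 : j + 1 ≤ t
      · have h2 : j ≤ t := by omega
        simp only [h1, h2, if_true]; exact hw j
      · by_cases h2 : j ≤ t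
        · have h3 : j = t := by omega
          subst h3
          right; simp [hwt, hadj]
        · left; simp [h1, h2]
    · intro j hj
      by_cases h1 : j ≤ t
      · simp only [h1, if_true]; exact hwU j h1
      · have h3 : j = t + 1 := by omega
        subst h3
        simpa using hxU

theorem robber_wins {n : ℕ} (G : SimpleGraph (Fin n)) (i a k : ℕ)
    (hdist : ∀ s v, G.dist s v ≤ i + 1) (han : a ≤ n) (ha : 2 ≤ a)
    (hQ : ∀ S A : Finset (Fin n), S.card = k → a ≤ A.card → ∃ B : Finset (Fin n), a ≤ B.card ∧
      ∀ u ∈ B, (∃ w ∈ A, G.Adj w u) ∧ ∀ s ∈ S, i < G.dist s u) : ¬ CopsWin G k := by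
  classical
  rintro ⟨σ, hσ, hwin⟩
  have hC : ∀ t, a ≤ (CC G σ i t).card := by
    intro t
    induction t with
    | zero =>
      obtain ⟨B, hB, hB'⟩ := hQ (σ (farHist σ i 0)) Finset.univ (hσ _) (by simpa using han)
      refine hB.trans (Finset.card_le_card fun u hu => ?_)
      simp only [CC, UU, Finset.mem_filter, Finset.mem_univ, true_and]
      exact (hB' u hu).2
    | succ t ih =>
      obtain ⟨B, hB, hB'⟩ := hQ (σ (farHist σ i (t + 1))) (CC G σ i t) (hσ _) ih
      refine hB.trans (Finset.card_le_card fun u hu => ?_)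
      simp only [CC, UU, Finset.mem_filter, Finset.mem_univ, true_and]
      exact ⟨(hB' u hu).2, (hB' u hu).1⟩
  have hU : ∀ (w : ℕ → Fin n) (t : ℕ), (∀ j ≤ t, w j ∈ UU G σ i j) →
      gameHistory G σ w (t + 1) = farHist σ i (t + 1) := by
    intro w t h
    refine hist_eq_far G σ i w _ fun j hj s hs => ?_
    have h1 := h j (by omega)
    simp only [UU, Finset.mem_filter, Finset.mem_univ, true_and] at h1
    have := h1 s hs
    have := hdist s (w j)
    omega
  obtain ⟨w, hw⟩ : (⋂ T : ℕ, {w : ℕ → Fin n | IsRobberWalk G w ∧ ∀ j ≤ T, w j ∈ UU G σ i j}).Nonempty := by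
    have hcl : ∀ T : ℕ, IsClosed {w : ℕ → Fin n | IsRobberWalk G w ∧ ∀ j ≤ T, w j ∈ UU G σ i j} := by
      intro T
      have : {w : ℕ → Fin n | IsRobberWalk G w ∧ ∀ j ≤ T, w j ∈ UU G σ i j} =
          (⋂ t : ℕ, (fun w : ℕ → Fin n => (w t, w (t + 1))) ⁻¹'
            {x | x.2 = x.1 ∨ G.Adj x.1 x.2}) ∩
          (⋂ j : ℕ, ⋂ _ : j ≤ T, (fun w : ℕ → Fin n => w j) ⁻¹' {x | x ∈ UU G σ i j}) := by
        ext w; simp [IsRobberWalk]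
      rw [this]
      refine IsClosed.inter (isClosed_iInter fun t => ?_)
        (isClosed_iInter fun j => isClosed_iInter fun _ => ?_)
      · exact IsClosed.preimage (by fun_prop) (isClosed_discrete _)
      · exact IsClosed.preimage (by fun_prop) (isClosed_discrete _)
    refine IsCompact.nonempty_iInter_of_sequence_nonempty_isCompact_isClosed _ ?_ ?_ ?_ hcl
    · intro T w hw
      exact ⟨hw.1, fun j hj => hw.2 j (by omega)⟩
    · intro T
      have := hC T
      obtain ⟨x, hx⟩ : (CC G σ i T).Nonempty := Finset.card_pos.mp (by omega)
      obtain ⟨w, h1, _, h2⟩ := CC_walk G σ i T x hx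
      exact ⟨w, h1, h2⟩
    · exact (hcl 0).isCompact
  simp only [Set.mem_iInter] at hw
  obtain ⟨t, ht⟩ := hwin w (hw 0).1
  obtain ⟨x, hx, hxw⟩ := Finset.exists_mem_ne (s := CC G σ i t) (by have := hC t; omega) (w t)
  obtain ⟨w', h1, h2, h3⟩ := CC_walk G σ i t x hx
  have := ht w' h1 (by rw [hU w' t h3, hU w t (hw t).2])
  exact hxw (h2 ▸ this)

/-- the robber survives, from the expansion property `P3` -/
theorem robber_wins' {n : ℕ} (hn : 0 < n) (G : SimpleGraph (Fin n)) (i m k : ℕ) (d δ D0 : ℝ)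
    (h1 : P1 n d δ G) (hd : 0 ≤ d) (hδ : 0 ≤ δ) (hδd : 1 ≤ δ * d)
    (hdiam : Diam n (i + 2) G) (h3 : P3 n m D0 G) (hm : 1 ≤ m) (hmn : 2 * m ≤ n) (hD0 : D0 ≤ m)
    (hk : k * ((1 + 3 * δ) ^ i * d ^ i) ≤ D0) : ¬ CopsWin G k := by
  classical
  have hc := hdiam.connected hn
  refine robber_wins G (i + 1) (2 * m) k (fun s v => (dist_le_iff hc s v _).mpr (hdiam s v)) hmn
    (by omega) ?_
  intro S A hS hA
  set D := bl G S i with hD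
  have hDc : (D.card : ℝ) ≤ D0 := by
    refine (bl_upper G S d δ h1 hd hδ hδd i).trans ?_
    rw [hS]; exact hk
  have hDm : D.card ≤ m := by exact_mod_cast hDc.trans hD0
  have hAD : m ≤ (A \ D).card := by
    have := Finset.le_card_sdiff D A
    omega
  obtain ⟨A', hA', hA'c⟩ := Finset.exists_subset_card_eq hAD
  have hdis : Disjoint D A' := by
    rw [Finset.disjoint_left]
    intro x hx hx'
    exact (Finset.mem_sdiff.mp (hA' hx')).2 hx
  refine ⟨XS G D A', h3 D A' hdis hDc hA'c, fun u hu => ?_⟩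
  have hu' : u ∉ D ∧ u ∉ A' ∧ (∀ w ∈ D, ¬G.Adj u w) ∧ ∃ w ∈ A', G.Adj u w := by
    simpa [XS] using hu
  obtain ⟨hu1, _, hu2, w, hw, hwu⟩ := hu'
  refine ⟨⟨w, (Finset.mem_sdiff.mp (hA' hw)).1, hwu.symm⟩, fun s hs => ?_⟩
  by_contra hcon
  push Not at hcon
  rw [dist_le_iff hc, mem_bl_iff] at hcon
  obtain ⟨x, hx, p, hp⟩ := hcon
  have hxs : x = s := by simpa using hx
  have : u ∈ bl G S (i + 1) := (mem_bl_iff G S (i + 1) u).mpr ⟨x, hxs ▸ hs, p, hp⟩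
  rw [mem_bl_succ] at this
  rcases this with h | ⟨y, hy, hyu⟩
  · exact hu1 h
  · exact hu2 y hy hyu

end LocGnp

open Filter SimpleGraph Set
open scoped Topology
namespace LocGnp

/-- numerical hypotheses, valid for large `n` -/
structure Num (n : ℕ) (p d ε : ℝ) (j : ℕ) : Prop where
  hd : d = p * n
  hn : 4 ≤ n
  hp0 : 0 ≤ p
  hp : p ≤ ε / 8
  hε0 : 0 < ε
  hε1 : ε ≤ 1
  hL : 1000 ≤ ε * Real.log n
  hdL : Real.log n ^ 8 ≤ d
  hD : d ^ (j + 1) / n ≤ ε / 512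
  hy : 320 * Real.log n ^ 2 ≤ Real.exp (ε / 4 * Real.log d)

namespace Num
variable {n : ℕ} {p d ε : ℝ} {j : ℕ}

/-- the slack parameter -/
noncomputable def dl (n : ℕ) : ℝ := 1 / Real.log n ^ 3

lemma n0 (h : Num n p d ε j) : (0:ℝ) < n := by
  have := h.hn; exact_mod_cast (by omega : 0 < n)
lemma L1 (h : Num n p d ε j) : 1000 ≤ Real.log n := by
  have := h.hL; have := h.hε1; have := h.hε0
  by_contra hc
  push Not at hc
  nlinarith
lemma d_big (h : Num n p d ε j) : (1000:ℝ) ^ 8 ≤ d :=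
  le_trans (pow_le_pow_left₀ (by norm_num) h.L1 8) h.hdL
lemma d1 (h : Num n p d ε j) : 1 ≤ d := le_trans (by norm_num) h.d_big
lemma d0 (h : Num n p d ε j) : 0 < d := lt_of_lt_of_le one_pos h.d1
lemma p1 (h : Num n p d ε j) : p ≤ 1 := by have := h.hp; have := h.hε1; linarith
lemma dn (h : Num n p d ε j) : d ≤ n := by
  rw [h.hd]; have := h.p1; have := h.n0; nlinarith
lemma logd_le (h : Num n p d ε j) : Real.log d ≤ Real.log n := Real.log_le_log h.d0 h.dn
lemma logd16 (h : Num n p d ε j) : 16 ≤ Real.log d := by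
  rw [Real.le_log_iff_exp_le h.d0]
  refine le_trans ?_ h.d_big
  have : Real.exp 16 = Real.exp 1 ^ 16 := by rw [← Real.exp_nat_mul]; norm_num
  rw [this]
  have h3 : Real.exp 1 ≤ 3 := by have := Real.exp_one_lt_d9; linarith
  calc Real.exp 1 ^ 16 ≤ 3 ^ 16 := by gcongr
    _ ≤ _ := by norm_num
lemma logd_d (h : Num n p d ε j) : 8 * Real.log d ≤ d := by
  have h1 := Real.quadratic_le_exp_of_nonneg (x := Real.log d) (by linarith [h.logd16])
  rw [Real.exp_log h.d0] at h1
  nlinarith [h.logd16]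
lemma jL (h : Num n p d ε j) : ((j + 1 : ℕ) : ℝ) ≤ Real.log n := by
  have h1 : d ^ (j + 1) ≤ n := by
    have h2 := h.hD
    rw [div_le_iff₀ h.n0] at h2
    have := h.hε1; have := h.n0
    nlinarith
  have h3 := Real.log_le_log (pow_pos h.d0 _) h1
  rw [Real.log_pow] at h3
  have h4 := h.logd16
  have h5 : (0:ℝ) ≤ ((j + 1 : ℕ) : ℝ) := by positivity
  nlinarith
lemma dl0 (h : Num n p d ε j) : 0 < dl n := by
  have := h.L1
  unfold dl; positivity
lemma dl8 (h : Num n p d ε j) : dl n ≤ 1 / 8 := by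
  have := h.L1
  unfold dl
  have : (8:ℝ) ≤ Real.log n ^ 3 := le_trans (by norm_num) (pow_le_pow_left₀ (by norm_num) this 3)
  exact one_div_le_one_div_of_le (by norm_num) this
lemma dlj (h : Num n p d ε j) : dl n * ((j + 1 : ℕ) : ℝ) ≤ 1 / Real.log n ^ 2 := by
  have h1 := h.L1
  have h2 := h.jL
  unfold dl
  calc 1 / Real.log n ^ 3 * ((j + 1 : ℕ) : ℝ) ≤ 1 / Real.log n ^ 3 * Real.log n := by gcongr
    _ = _ := by field_simp
lemma Lε (h : Num n p d ε j) : 1 / Real.log n ^ 2 ≤ ε / 1000 := by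
  have h1 := h.L1
  have h2 := h.hL
  rw [div_le_div_iff₀ (by positivity) (by norm_num)]
  nlinarith
lemma dld (h : Num n p d ε j) : 2 ≤ dl n * d := by
  have h1 := h.L1
  have h2 := h.hdL
  unfold dl
  rw [div_mul_eq_mul_div, le_div_iff₀ (by positivity)]
  have : 2 * Real.log n ^ 3 ≤ Real.log n ^ 8 := by
    have : Real.log n ^ 8 = Real.log n ^ 3 * Real.log n ^ 5 := by ring
    rw [this]
    have : (2:ℝ) ≤ Real.log n ^ 5 := le_trans (by norm_num) (pow_le_pow_left₀ (by norm_num) h1 5)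
    have : 0 ≤ Real.log n ^ 3 := by positivity
    nlinarith
  linarith
lemma low (h : Num n p d ε j) : 1 - 4 / Real.log n ^ 2 ≤ (1 - 4 * dl n) ^ (j + 1) := by
  have h1 := one_add_mul_le_pow (a := -(4 * dl n)) (by linarith [h.dl8]) (j + 1)
  have h2 := h.dlj
  have h3 : 4 / Real.log n ^ 2 = 4 * (1 / Real.log n ^ 2) := by ring
  rw [h3, sub_eq_add_neg 1 (4 * dl n)]
  nlinarith
lemma upp (h : Num n p d ε j) : (1 + 3 * dl n) ^ (j + 1) ≤ 1 + 6 / Real.log n ^ 2 := by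
  have h0 := h.dl0
  have h2 := h.dlj
  have h4 := h.Lε
  have h5 := h.hε1
  have h6 := h.L1
  have h7 : 0 < 1 / Real.log n ^ 2 := by positivity
  calc (1 + 3 * dl n) ^ (j + 1) ≤ Real.exp (3 * dl n) ^ (j + 1) := by
        gcongr; linarith [Real.add_one_le_exp (3 * dl n)]
    _ = Real.exp (3 * (dl n * ((j + 1 : ℕ) : ℝ))) := by rw [← Real.exp_nat_mul]; congr 1; ring
    _ ≤ Real.exp (3 * (1 / Real.log n ^ 2)) := by gcongr
    _ ≤ 1 / (1 - 3 * (1 / Real.log n ^ 2)) := by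
        rw [le_div_iff₀ (by linarith)]
        have := Real.one_sub_le_exp_neg (3 * (1 / Real.log n ^ 2))
        calc _ ≤ Real.exp (3 * (1 / Real.log n ^ 2)) * Real.exp (-(3 * (1 / Real.log n ^ 2))) := by
              gcongr
          _ = 1 := by rw [← Real.exp_add]; simp
    _ ≤ _ := by
        have h3 : 6 / Real.log n ^ 2 = 6 * (1 / Real.log n ^ 2) := by ring
        rw [h3, div_le_iff₀ (by linarith)]
        nlinarith
lemma upp2 (h : Num n p d ε j) : (1 + 3 * dl n) ^ (j + 1) ≤ 1 + ε / 16 := by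
  have h3 : 6 / Real.log n ^ 2 = 6 * (1 / Real.log n ^ 2) := by ring
  have := h.upp; have := h.Lε; have := h.hε0; linarith
lemma low2 (h : Num n p d ε j) : 1 - ε / 64 ≤ (1 - 4 * dl n) ^ (j + 1) := by
  have h3 : 4 / Real.log n ^ 2 = 4 * (1 / Real.log n ^ 2) := by ring
  have := h.low; have := h.Lε; have := h.hε0; linarith
lemma upp3 (h : Num n p d ε j) : (1 + 3 * dl n) ^ (j + 1) ≤ 2 := by
  have := h.upp2; have := h.hε1; linarith
lemma D16 (h : Num n p d ε j) : d ^ (j + 1) / n ≤ 1 / 16 := by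
  have := h.hD; have := h.hε1; linarith
lemma D0 (h : Num n p d ε j) : 0 < d ^ (j + 1) := pow_pos h.d0 _
lemma K_big (h : Num n p d ε j) : 512 ≤ ε * (n * Real.log d / d ^ (j + 1)) := by
  have h1 := h.hD
  have h2 := h.logd16
  have h3 := h.D0
  have h4 := h.n0
  have h5 := h.hε0
  rw [div_le_iff₀ h4] at h1
  rw [← mul_div_assoc, le_div_iff₀ h3]
  have : 0 ≤ ε * n := by positivity
  nlinarith
lemma K_le (h : Num n p d ε j) : n * Real.log d / d ^ (j + 1) ≤ n * Real.log d / d := by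
  have h2 := h.logd16
  have h4 := h.n0
  have h5 := h.d0
  have : d ≤ d ^ (j + 1) := le_self_pow₀ h.d1 (by omega)
  gcongr
lemma K_le' (h : Num n p d ε j) : n * Real.log d / d ≤ n / 8 := by
  have h4 := h.n0
  have h5 := h.d0
  have h6 := h.logd_d
  rw [div_le_div_iff₀ h5 (by norm_num)]
  nlinarith

/-- size of the robber's target sets -/
noncomputable def mm (n : ℕ) (d : ℝ) : ℕ := ⌈n * Real.log d / d⌉₊

lemma mm_ge (h : Num n p d ε j) : n * Real.log d / d ≤ mm n d := Nat.le_ceil _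
lemma mm_pos (h : Num n p d ε j) : 512 ≤ n * Real.log d / d := by
  have := h.K_big; have := h.K_le; have := h.hε0; have := h.hε1; nlinarith
lemma mm_le (h : Num n p d ε j) : (mm n d : ℝ) ≤ n * Real.log d / d + 1 :=
  (Nat.ceil_lt_add_one (by linarith [h.mm_pos])).le

theorem upper (h : Num n p d ε j) (G : SimpleGraph (Fin n)) (h1 : P1 n d (dl n) G)
    (h2 : P2 n d (dl n) G) (hdiam : Diam n (j + 2) G) :
    CopsWin G ⌈(1 + ε / 2) * (n * Real.log d / d ^ (j + 1))⌉₊ := by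
  have hn : 0 < n := by have := h.hn; omega
  have hn0 := h.n0
  have hε0 := h.hε0
  have hε1 := h.hε1
  have hD0 := h.D0
  have hc := hdiam.connected hn
  have hδd : 1 ≤ dl n * d := by linarith [h.dld]
  set D := d ^ (j + 1) with hD
  set K := n * Real.log d / D with hK
  set lo := (1 - 4 * dl n) ^ (j + 1) * (1 - 8 * (D / n)) * D with hlo
  set up := (1 + 3 * dl n) ^ (j + 1) * D with hup
  set k := ⌈(1 + ε / 2) * K⌉₊ with hk
  have hKn : K ≤ n / 8 := h.K_le.trans h.K_le'
  have hKb := h.K_big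
  have hK1 : 512 ≤ K := by
    have hKb' : 512 ≤ ε * K := hKb
    by_contra hcon
    push Not at hcon
    nlinarith
  have hklt : (k : ℝ) < (1 + ε / 2) * K + 1 := Nat.ceil_lt_add_one (by positivity)
  have hkge : (1 + ε / 2) * K ≤ k := Nat.le_ceil _
  have hkn : k ≤ n := by
    have : (k : ℝ) ≤ n := by nlinarith
    exact_mod_cast this
  have hDn := h.hD
  have hDn0 : 0 < D / n := by positivity
  have hlow := h.low2
  have hlow1 : (1 - 4 * dl n) ^ (j + 1) ≤ 1 :=
    pow_le_one₀ (by linarith [h.dl8]) (by linarith [h.dl0])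
  have hupp := h.upp2
  have hM1 : 2 * (1 - ε / 8) * D ≤ 4 * lo - 2 * up := by
    have e1 : (1 - ε / 32) ≤ (1 - 4 * dl n) ^ (j + 1) * (1 - 8 * (D / n)) := by nlinarith
    have e2 : (1 - ε / 32) * D ≤ lo := by rw [hlo]; gcongr
    have e3 : up ≤ (1 + ε / 16) * D := by rw [hup]; gcongr
    linarith
  have hM2 : 4 * lo - 2 * up ≤ n := by
    have e1 : (1 - 4 * dl n) ^ (j + 1) * (1 - 8 * (D / n)) ≤ 1 := by
      have : (1 - 8 * (D / n)) ≤ 1 := by linarith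
      have : 0 ≤ (1 - 8 * (D / n)) := by linarith
      have : 0 ≤ (1 - 4 * dl n) ^ (j + 1) := by linarith
      nlinarith
    have e2 : lo ≤ 1 * D := by rw [hlo]; gcongr
    have e3 : 0 ≤ up := by have := h.dl0; positivity
    have e4 : D ≤ ε / 512 * n := by rwa [← div_le_iff₀ hn0]
    nlinarith
  refine cops_win hn G (4 * lo - 2 * up) ((1 + 3 * dl n) * d) k hkn ?_
    (fun B => bl_upper_step G B d (dl n) h1 hδd) ?_ ?_
  · intro u v huv
    refine separating G hc u v (j + 1) lo up ?_ ?_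
    · have := bl_lower G {u, v} d (dl n) j hn h1 h2 (by simp) Finset.card_le_two hδd
        h.dl0.le h.dl8 h.d1 h.upp3 h.D16
      rw [Finset.card_pair huv] at this
      exact_mod_cast this
    · intro w
      have := bl_upper G {w} d (dl n) h1 h.d0.le h.dl0.le hδd (j + 1)
      simpa using this
  · have e1 : (1 - (4 * lo - 2 * up) / n) ^ k ≤ Real.exp (-(2 + ε / 2) * Real.log d) := by
      calc (1 - (4 * lo - 2 * up) / n) ^ k ≤ (Real.exp (-((4 * lo - 2 * up) / n))) ^ k := by
            have := Real.one_sub_le_exp_neg ((4 * lo - 2 * up) / n)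
            have : (4 * lo - 2 * up) / n ≤ 1 := by rw [div_le_one hn0]; exact hM2
            gcongr
        _ = Real.exp (-(k * ((4 * lo - 2 * up) / n))) := by
            rw [← Real.exp_nat_mul]; congr 1; ring
        _ ≤ _ := by
            apply Real.exp_le_exp.mpr
            have e3 : (1 + ε / 2) * K * (2 * (1 - ε / 8) * D / n) ≤
              k * ((4 * lo - 2 * up) / n) := by
              have : 0 ≤ 2 * (1 - ε / 8) * D / n := by
                have : 0 ≤ 1 - ε / 8 := by linarith
                positivity
              gcongr
            have e4 : (1 + ε / 2) * K * (2 * (1 - ε / 8) * D / n) =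
              (1 + ε / 2) * (2 * (1 - ε / 8)) * Real.log d := by
              rw [hK]; field_simp
            have e5 := h.logd16
            have e6 : (2 + ε / 2) ≤ (1 + ε / 2) * (2 * (1 - ε / 8)) := by nlinarith
            have e7 : (2 + ε / 2) * Real.log d ≤ (1 + ε / 2) * (2 * (1 - ε / 8)) * Real.log d := by
              gcongr
            linarith
    have e2 : Real.exp (-(2 + ε / 2) * Real.log d) * (d ^ 2 * Real.exp (ε / 4 * Real.log d) ^ 2) = 1 := by
      have : d ^ 2 = Real.exp (2 * Real.log d) := by
        have : Real.exp (2 * Real.log d) = Real.exp (Real.log d) ^ 2 := by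
          rw [← Real.exp_nat_mul]; norm_num
        rw [this, Real.exp_log h.d0]
      rw [this, ← Real.exp_nat_mul, ← Real.exp_add, ← Real.exp_add, Real.exp_eq_one_iff]
      push_cast; ring
    have e3 : (320:ℝ) ≤ Real.exp (ε / 4 * Real.log d) := by
      have := h.hy; have := h.L1; nlinarith
    have e4 : ((1 + 3 * dl n) * d) ^ 2 ≤ 4 * d ^ 2 := by
      rw [mul_pow]
      have : (1 + 3 * dl n) ^ 2 ≤ 2 ^ 2 := by
        have := h.dl0; have := h.dl8; gcongr; linarith
      have := h.d0
      nlinarith [sq_nonneg d]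
    have e5 : 0 ≤ Real.exp (-(2 + ε / 2) * Real.log d) := Real.exp_nonneg _
    have e6 : 4 * d ^ 2 * Real.exp (-(2 + ε / 2) * Real.log d) * 320 ^ 2 ≤ 4 := by
      calc _ ≤ 4 * d ^ 2 * Real.exp (-(2 + ε / 2) * Real.log d) *
            Real.exp (ε / 4 * Real.log d) ^ 2 := by gcongr
        _ = 4 * (Real.exp (-(2 + ε / 2) * Real.log d) * (d ^ 2 * Real.exp (ε / 4 * Real.log d) ^ 2)) := by ring
        _ = 4 := by rw [e2]; ring
    have e7 : ((1 + 3 * dl n) * d) ^ 2 * (1 - (4 * lo - 2 * up) / n) ^ k ≤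
      4 * d ^ 2 * Real.exp (-(2 + ε / 2) * Real.log d) := by
      calc _ ≤ ((1 + 3 * dl n) * d) ^ 2 * Real.exp (-(2 + ε / 2) * Real.log d) := by gcongr
        _ ≤ _ := by gcongr
    linarith
  · rw [sub_nonneg, div_le_one hn0]; exact hM2

theorem lower (h : Num n p d ε j) (G : SimpleGraph (Fin n)) (h1 : P1 n d (dl n) G)
    (hdiam : Diam n (j + 2) G)
    (h3 : P3 n (mm n d) ((1 - ε / 2) * (n * Real.log d / d)) G) (k : ℕ)
    (hk : (k : ℝ) ≤ (1 - ε) * (n * Real.log d / d ^ (j + 1))) : ¬ CopsWin G k := by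
  have hn : 0 < n := by have := h.hn; omega
  have hn0 := h.n0
  have hε0 := h.hε0
  have hε1 := h.hε1
  have hm0 := h.mm_pos
  have hml := h.mm_le
  have hmg := h.mm_ge
  have hK := h.K_le'
  refine robber_wins' hn G j (mm n d) k d (dl n) _ h1 h.d0.le h.dl0.le (by linarith [h.dld])
    hdiam h3 ?_ ?_ ?_ ?_
  · have : (1:ℝ) ≤ mm n d := by linarith
    exact_mod_cast this
  · have h4 : (4:ℝ) ≤ n := by exact_mod_cast h.hn
    have : (2:ℝ) * mm n d ≤ n := by linarith
    exact_mod_cast this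
  · nlinarith
  · have e1 : (1 + 3 * dl n) ^ j ≤ 1 + ε / 16 := by
      refine le_trans ?_ h.upp2
      exact pow_le_pow_right₀ (by linarith [h.dl0]) (by omega)
    have hd0 := h.d0
    have e2 : 0 ≤ (1 - ε) * (n * Real.log d / d ^ (j + 1)) := le_trans (by positivity) hk
    calc (k:ℝ) * ((1 + 3 * dl n) ^ j * d ^ j)
        ≤ (1 - ε) * (n * Real.log d / d ^ (j + 1)) * ((1 + ε / 16) * d ^ j) := by
          have := h.dl0
          gcongr
      _ = (1 - ε) * (1 + ε / 16) * (n * Real.log d / d) := by field_simp; ring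
      _ ≤ _ := by
          have : 0 ≤ n * Real.log d / d := by linarith
          gcongr
          nlinarith

theorem zeta (h : Num n p d ε j) (G : SimpleGraph (Fin n)) (h1 : P1 n d (dl n) G)
    (h2 : P2 n d (dl n) G) (hdiam : Diam n (j + 2) G)
    (h3 : P3 n (mm n d) ((1 - ε / 2) * (n * Real.log d / d)) G) :
    |(localizationNumber G : ℝ) * d ^ (j + 1) / (n * Real.log d) - 1| ≤ ε := by
  have hn0 := h.n0
  have hε0 := h.hε0
  have hε1 := h.hε1
  have hD0 := h.D0
  have hlog := h.logd16
  have hup := h.upper G h1 h2 hdiam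
  have hKb := h.K_big
  set K := n * Real.log d / d ^ (j + 1) with hK
  have hK0 : 0 < K := by positivity
  have hle : localizationNumber G ≤ ⌈(1 + ε / 2) * K⌉₊ := Nat.sInf_le hup
  have hmem : CopsWin G (localizationNumber G) := Nat.sInf_mem (s := {k | CopsWin G k}) ⟨_, hup⟩
  have hge : (1 - ε) * K ≤ localizationNumber G := by
    by_contra hcon
    push Not at hcon
    exact h.lower G h1 hdiam h3 _ hcon.le hmem
  have hle' : (localizationNumber G : ℝ) ≤ (1 + ε) * K := by
    have e1 : (localizationNumber G : ℝ) ≤ ⌈(1 + ε / 2) * K⌉₊ := by exact_mod_cast hle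
    have e2 := Nat.ceil_lt_add_one (a := (1 + ε / 2) * K) (by positivity)
    nlinarith
  have e : (localizationNumber G : ℝ) * d ^ (j + 1) / (n * Real.log d) = localizationNumber G / K := by
    rw [hK]; field_simp
  rw [e, abs_le]
  constructor
  · have : 1 - ε ≤ localizationNumber G / K := by rw [le_div_iff₀ hK0]; exact hge
    linarith
  · have : localizationNumber G / K ≤ 1 + ε := by rw [div_le_iff₀ hK0]; exact hle'
    linarith

end Num
end LocGnp

open Filter SimpleGraph Set
open scoped Topology
namespace LocGnp
namespace Num
variable {n : ℕ} {p d ε : ℝ} {j : ℕ}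

lemma n_exp (h : Num n p d ε j) : (n:ℝ) = Real.exp (Real.log n) := (Real.exp_log h.n0).symm

lemma dl_exp (h : Num n p d ε j) : (n:ℝ) * Real.exp (-(dl n ^ 2 * d / 2)) ≤ Real.exp (-Real.log n) := by
  have h1 := h.L1
  have h2 : 2 * Real.log n ≤ dl n ^ 2 * d / 2 := by
    have h3 := h.hdL
    have : dl n ^ 2 * d / 2 = d / (2 * Real.log n ^ 6) := by unfold dl; field_simp
    rw [this, le_div_iff₀ (by positivity)]
    have : 0 ≤ Real.log n ^ 7 := by positivity
    nlinarith
  calc (n:ℝ) * Real.exp (-(dl n ^ 2 * d / 2))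
      ≤ Real.exp (Real.log n) * Real.exp (-(2 * Real.log n)) := by
        rw [← h.n_exp]; gcongr
    _ = _ := by rw [← Real.exp_add]; congr 1; ring

lemma pr1 (h : Num n p d ε j) : Pr n p (fun G => ¬ P1 n d (dl n) G) ≤ Real.exp (-Real.log n) :=
  (prob_P1 n p d (dl n) h.hp0 h.p1 h.hd h.dl0.le (by linarith [h.dl8])).trans h.dl_exp

lemma pr2 (h : Num n p d ε j) :
    Pr n p (fun G => ¬ P2 n d (dl n) G) ≤ Real.exp (Real.exp (-Real.log n)) - 1 := by
  refine (prob_P2 n p d (dl n) (by have := h.hn; omega) h.hp0 h.p1 h.hd h.d1 h.dl0.le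
    (by linarith [h.dl8])).trans ?_
  have := Real.exp_le_exp.mpr h.dl_exp
  linarith

lemma pr3 (h : Num n p d ε j) :
    Pr n p (fun G => ¬ P3 n (mm n d) ((1 - ε / 2) * (n * Real.log d / d)) G) ≤
      Real.exp (2 - Real.log n) := by
  have hn0 := h.n0
  have hd0 := h.d0
  have hε0 := h.hε0
  have hε1 := h.hε1
  have hm0 := h.mm_pos
  have hml := h.mm_le
  have hmg := h.mm_ge
  have hK := h.K_le'
  have hL := h.L1
  have hlog := h.logd16
  have hlogL := h.logd_le
  have hy := h.hy
  have hdn := h.dn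
  have hn4 : (4:ℝ) ≤ n := by exact_mod_cast h.hn
  have hp0 := h.hp0
  have hp := h.hp
  set m := mm n d with hm
  set y := Real.exp (ε / 4 * Real.log d) with hyd
  set x := n * Real.log d / d with hx
  have hxp : p * x = Real.log d := by
    rw [hx, h.hd]; rw [h.hd] at hd0
    have : p ≠ 0 := by rintro rfl; simp at hd0
    field_simp
  have hyx : Real.exp (-((1 - ε / 4) * Real.log d)) = y / d := by
    have : -((1 - ε / 4) * Real.log d) = ε / 4 * Real.log d - Real.log d := by ring
    rw [this, Real.exp_sub, Real.exp_log hd0]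
  have hnd : 1 ≤ n / d := by rw [le_div_iff₀ hd0]; linarith
  have hxL : x ≤ n / d * Real.log n := by
    rw [hx, mul_div_right_comm]; gcongr
  have hnd0 : 0 ≤ n / d := by positivity
  have hmu : n / 4 * (y / d) = n / d * y / 4 := by ring
  have hyn : n / d * (320 * Real.log n ^ 2) ≤ n / d * y := by gcongr
  refine (prob_P3 n m p ((1 - ε / 2) * x) (n / 4 * (y / d)) (by have := h.hn; omega) hp0 h.p1
    (by nlinarith) ?_ ?_).trans ?_
  · rw [hmu]
    have : n / d * Real.log n * 1 ≤ n / d * Real.log n * Real.log n := by gcongr; linarith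
    nlinarith
  · intro a ha
    have hax : (a:ℝ) ≤ x := by nlinarith
    have ham : a + m ≤ n := by
      have : (a:ℝ) + m ≤ n := by linarith
      exact_mod_cast this
    have e1 : (n:ℝ) / 2 ≤ ((n - (a + m) : ℕ) : ℝ) := by
      rw [Nat.cast_sub ham]; push_cast; linarith
    have e2 : (1 - p) ^ m ≤ 1 / 2 := by
      calc (1 - p) ^ m ≤ Real.exp (-p) ^ m := by
            have := Real.one_sub_le_exp_neg p
            have := h.p1
            gcongr
        _ = Real.exp (-(p * m)) := by rw [← Real.exp_nat_mul]; congr 1; ring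
        _ ≤ Real.exp (-Real.log d) := by
            apply Real.exp_le_exp.mpr
            have : p * x ≤ p * m := by gcongr
            linarith
        _ = d⁻¹ := by rw [Real.exp_neg, Real.exp_log hd0]
        _ ≤ 1 / 2 := by
            rw [inv_eq_one_div]
            apply one_div_le_one_div_of_le (by norm_num)
            have := h.d_big
            linarith
    have e3 : y / d ≤ (1 - p) ^ a := by
      rw [← hyx]
      have h1p : 0 < 1 - p := by linarith
      have f1 := Real.one_sub_inv_le_log_of_pos h1p
      have f2 : -(p * (1 + ε / 4)) ≤ 1 - (1 - p)⁻¹ := by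
        have : (1 - p)⁻¹ ≤ 1 + p * (1 + ε / 4) := by
          rw [inv_le_iff_one_le_mul₀ h1p]
          nlinarith [mul_nonneg hp0 hp0, mul_nonneg hp0 hε0.le]
        linarith
      have f3 : (1 - p) ^ a = Real.exp (a * Real.log (1 - p)) := by
        rw [Real.exp_nat_mul, Real.exp_log h1p]
      rw [f3]
      apply Real.exp_le_exp.mpr
      have f4 : (a:ℝ) * -(p * (1 + ε / 4)) ≤ a * Real.log (1 - p) := by
        gcongr; linarith
      have f5 : (a:ℝ) * (p * (1 + ε / 4)) ≤ (1 - ε / 2) * x * (p * (1 + ε / 4)) := by gcongr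
      have f6 : (1 - ε / 2) * x * (p * (1 + ε / 4)) = (1 - ε / 2) * (1 + ε / 4) * Real.log d := by
        rw [← hxp]; ring
      have f7 : (1 - ε / 2) * (1 + ε / 4) * Real.log d ≤ (1 - ε / 4) * Real.log d := by
        gcongr; nlinarith
      linarith
    rw [pow_add]
    have e4 : (1 - p) ^ a - (1 - p) ^ a * (1 - p) ^ m = (1 - p) ^ a * (1 - (1 - p) ^ m) := by ring
    rw [e4]
    have hyd0 : 0 ≤ y / d := by have := Real.exp_nonneg (ε / 4 * Real.log d); positivity
    calc n / 4 * (y / d) = n / 2 * (y / d * (1 / 2)) := by ring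
      _ ≤ _ := by gcongr <;> linarith
  · have : (Real.exp 1 * (n:ℝ) ^ m) ^ 2 = Real.exp (2 + 2 * (m * Real.log n)) := by
      have : (n:ℝ) ^ m = Real.exp (m * Real.log n) := by
        rw [Real.exp_nat_mul, Real.exp_log hn0]
      rw [this, ← Real.exp_add, ← Real.exp_nat_mul]; congr 1; push_cast; ring
    rw [this, ← Real.exp_add]
    apply Real.exp_le_exp.mpr
    rw [hmu]
    have g1 : (m:ℝ) * Real.log n ≤ 2 * (n / d * Real.log n) * Real.log n := by
      gcongr
      linarith
    have g2 : (1:ℝ) * Real.log n ≤ n / d * (Real.log n * Real.log n) := by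
      rw [← mul_assoc]
      have : 1 * 1 ≤ n / d * Real.log n := by gcongr; linarith
      gcongr; linarith
    linarith

lemma pr4 (h : Num n p d ε j) :
    Pr n p (fun G => (P1 n d (dl n) G ∧ P2 n d (dl n) G) ∧ ∃ u v, v ∉ bl G {u} (j + 2)) ≤
      Real.exp (13 - (d ^ (j + 2) / n - 2 * Real.log n)) + Real.exp (-(Real.log n / 4)) := by
  have hn0 := h.n0
  have hd0 := h.d0
  have hε0 := h.hε0
  have hε1 := h.hε1
  have hL := h.L1
  have hD := h.hD
  have hD0 := h.D0
  refine (prob_far n (j + 1) p ((1 - 4 * dl n) ^ (j + 1) * (1 - 8 * (d ^ (j + 1) / n)) * d ^ (j + 1))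
    h.hp0 h.p1 _ ?_).trans ?_
  · rintro G ⟨h1, h2⟩ u v huv
    exact bl_del_lower G u v huv d (dl n) j (by have := h.hn; omega) h1 h2 h.dld h.dl0.le h.dl8
      h.d1 h.upp3 h.D16
  set c := d ^ (j + 2) / n with hc
  have hDc : d ^ (j + 1) / n = c / d := by rw [hc, pow_succ d (j + 1)]; field_simp
  have hpn : p = d / n := by rw [h.hd]; field_simp
  have hpx : p * ((1 - 4 * dl n) ^ (j + 1) * (1 - 8 * (d ^ (j + 1) / n)) * d ^ (j + 1)) =
      (1 - 4 * dl n) ^ (j + 1) * (1 - 8 * (d ^ (j + 1) / n)) * c := by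
    rw [hpn, hc, pow_succ d (j + 1)]; field_simp
  rw [hpx]
  have hn2 : (n:ℝ) ^ 2 = Real.exp (2 * Real.log n) := by
    have : Real.exp (2 * Real.log n) = Real.exp (Real.log n) ^ 2 := by
      rw [← Real.exp_nat_mul]; norm_num
    rw [this, ← h.n_exp]
  rw [hn2, ← Real.exp_add]
  have hc0 : 0 < c := by rw [hc]; positivity
  have hlow := h.low
  have hb0 : 0 ≤ 1 - 8 * (d ^ (j + 1) / n) := by linarith
  have hq : (1 - 4 / Real.log n ^ 2) * (1 - 8 * (d ^ (j + 1) / n)) * c ≤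
    (1 - 4 * dl n) ^ (j + 1) * (1 - 8 * (d ^ (j + 1) / n)) * c := by gcongr
  have hL2 : 4 / Real.log n ^ 2 ≤ 1 / 8 := by
    rw [div_le_div_iff₀ (by positivity) (by norm_num)]; nlinarith
  have hL20 : 0 < 4 / Real.log n ^ 2 := by positivity
  have hDn0 : 0 < d ^ (j + 1) / n := by positivity
  by_cases hcase : c ≤ 3 * Real.log n
  · refine le_trans (Real.exp_le_exp.mpr ?_) (le_add_of_nonneg_right (Real.exp_nonneg _))
    have e1 : 4 / Real.log n ^ 2 * c ≤ 12 := by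
      calc 4 / Real.log n ^ 2 * c ≤ 4 / Real.log n ^ 2 * (3 * Real.log n) := by gcongr
        _ = 12 / Real.log n := by field_simp; norm_num
        _ ≤ 12 := by rw [div_le_iff₀ (by linarith)]; linarith
    have e2 : 8 * (d ^ (j + 1) / n) * c ≤ 1 := by
      rw [hDc]
      have : 8 * (c / d) * c = 8 * c ^ 2 / d := by ring
      rw [this, div_le_one hd0]
      refine le_trans ?_ h.hdL
      have : c ^ 2 ≤ (3 * Real.log n) ^ 2 := by gcongr
      have f : Real.log n ^ 8 = Real.log n ^ 6 * Real.log n ^ 2 := by ring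
      have : (1000:ℝ) ^ 6 ≤ Real.log n ^ 6 := by gcongr
      have : (1000:ℝ) ^ 6 * Real.log n ^ 2 ≤ Real.log n ^ 6 * Real.log n ^ 2 := by gcongr
      nlinarith
    have e3 : 0 ≤ 4 / Real.log n ^ 2 * (8 * (d ^ (j + 1) / n)) * c := by positivity
    nlinarith
  · push Not at hcase
    refine le_trans (Real.exp_le_exp.mpr ?_) (le_add_of_nonneg_left (Real.exp_nonneg _))
    have e1 : 3 / 4 ≤ (1 - 4 / Real.log n ^ 2) * (1 - 8 * (d ^ (j + 1) / n)) := by nlinarith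
    have e2 : 3 / 4 * c ≤ (1 - 4 / Real.log n ^ 2) * (1 - 8 * (d ^ (j + 1) / n)) * c := by gcongr
    linarith

theorem main (h : Num n p d ε j) :
    1 - (Real.exp (-Real.log n) + (Real.exp (Real.exp (-Real.log n)) - 1) +
      Real.exp (2 - Real.log n) +
      (Real.exp (13 - (d ^ (j + 2) / n - 2 * Real.log n)) + Real.exp (-(Real.log n / 4)))) ≤
    Pr n p (fun G => |(localizationNumber G : ℝ) * d ^ (j + 1) / (n * Real.log d) - 1| ≤ ε) := by
  rw [Pr_compl]
  have h1 := h.pr1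
  have h2 := h.pr2
  have h3 := h.pr3
  have h4 := h.pr4
  have a1 := Pr_or_le n p h.hp0 h.p1 (fun G => ¬ P1 n d (dl n) G) (fun G => ¬ P2 n d (dl n) G)
  have a2 := Pr_or_le n p h.hp0 h.p1 (fun G => ¬ P1 n d (dl n) G ∨ ¬ P2 n d (dl n) G)
    (fun G => ¬ P3 n (mm n d) ((1 - ε / 2) * (n * Real.log d / d)) G)
  have a3 := Pr_or_le n p h.hp0 h.p1
    (fun G => (¬ P1 n d (dl n) G ∨ ¬ P2 n d (dl n) G) ∨
      ¬ P3 n (mm n d) ((1 - ε / 2) * (n * Real.log d / d)) G)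
    (fun G => (P1 n d (dl n) G ∧ P2 n d (dl n) G) ∧ ∃ u v, v ∉ bl G {u} (j + 2))
  have a4 := Pr_mono n p h.hp0 h.p1
    (fun G => ¬ (|(localizationNumber G : ℝ) * d ^ (j + 1) / (n * Real.log d) - 1| ≤ ε))
    (fun G => ((¬ P1 n d (dl n) G ∨ ¬ P2 n d (dl n) G) ∨
      ¬ P3 n (mm n d) ((1 - ε / 2) * (n * Real.log d / d)) G) ∨
      ((P1 n d (dl n) G ∧ P2 n d (dl n) G) ∧ ∃ u v, v ∉ bl G {u} (j + 2))) ?_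
  · linarith
  · intro G hG
    by_contra hcon
    push Not at hcon
    obtain ⟨⟨⟨q1, q2⟩, q3⟩, q4⟩ := hcon
    exact hG (h.zeta G q1 q2 (fun u v => q4 ⟨q1, q2⟩ u v) q3)

end Num
end LocGnp

open Filter SimpleGraph Set
open scoped Topology
namespace LocGnp

lemma diagonal (f : ℝ → ℕ → ℝ) (h1 : ∀ e, 0 < e → e ≤ 1 → Tendsto (f e) atTop (𝓝 1))
    (h2 : ∀ᶠ n in atTop, ∀ e, f e n ≤ 1) :
    ∃ ε : ℕ → ℝ, Tendsto ε atTop (𝓝 0) ∧ Tendsto (fun n => f (ε n) n) atTop (𝓝 1) := by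
  classical
  set P : ℕ → ℕ → Prop := fun n k => 1 - 1 / ((k:ℝ) + 1) ≤ f (1 / ((k:ℝ) + 1)) n with hP
  have hev : ∀ k, ∀ᶠ n in atTop, P n k := by
    intro k
    have hk : (0:ℝ) < 1 / ((k:ℝ) + 1) := by positivity
    have hk1 : 1 / ((k:ℝ) + 1) ≤ 1 := by
      rw [div_le_one (by positivity)]; linarith [(Nat.cast_nonneg k : (0:ℝ) ≤ k)]
    have := (h1 _ hk hk1).eventually (lt_mem_nhds (show 1 - 1 / ((k:ℝ) + 1) < 1 by linarith))
    filter_upwards [this] with n hn using hn.le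
  set kk : ℕ → ℕ := fun n => Nat.findGreatest (P n) n with hkk
  have hkt : Tendsto kk atTop atTop := by
    rw [tendsto_atTop]
    intro K
    filter_upwards [hev K, eventually_ge_atTop K] with n hn hK
    exact Nat.le_findGreatest hK hn
  have hεt : Tendsto (fun n => 1 / ((kk n : ℝ) + 1)) atTop (𝓝 0) :=
    tendsto_one_div_add_atTop_nhds_zero_nat.comp hkt
  refine ⟨fun n => 1 / ((kk n : ℝ) + 1), hεt, ?_⟩
  have hlow : Tendsto (fun n => 1 - 1 / ((kk n : ℝ) + 1)) atTop (𝓝 1) := by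
    simpa using hεt.const_sub 1
  refine tendsto_of_tendsto_of_tendsto_of_le_of_le' hlow tendsto_const_nhds ?_ ?_
  · filter_upwards [hev 0] with n hn
    exact Nat.findGreatest_spec (P := P n) (Nat.zero_le n) hn
  · filter_upwards [h2] with n hn using hn _

lemma tendsto_L : Tendsto (fun n : ℕ => Real.log n) atTop atTop :=
  Real.tendsto_log_atTop.comp tendsto_natCast_atTop_atTop

lemma d_ge (d ω : ℕ → ℝ) (hω : Tendsto ω atTop atTop)
    (hdω : ∀ᶠ n : ℕ in atTop, (Real.log n) ^ ω n ≤ d n) (C : ℝ) : ∀ᶠ n : ℕ in atTop, (Real.log n) ^ C ≤ d n := by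
  filter_upwards [hdω, hω.eventually_ge_atTop C, tendsto_L.eventually_ge_atTop 1] with n h1 h2 h3
  exact le_trans (Real.rpow_le_rpow_of_exponent_le h3 h2) h1

lemma ev_num (p d : ℕ → ℝ) (i : ℕ → ℕ) (ω : ℕ → ℝ)
    (hd : ∀ n, d n = p n * n)
    (hdn : Tendsto (fun n : ℕ => d n / n) atTop (𝓝 0))
    (hω : Tendsto ω atTop atTop)
    (hdω : ∀ᶠ n : ℕ in atTop, (Real.log n) ^ ω n ≤ d n)
    (hdi : Tendsto (fun n : ℕ => d n ^ i n / n) atTop (𝓝 0))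
    (hdi1 : Tendsto (fun n : ℕ => d n ^ (i n + 1) / n - 2 * Real.log n) atTop atTop)
    (ε : ℝ) (hε0 : 0 < ε) (hε1 : ε ≤ 1) :
    ∀ᶠ n : ℕ in atTop, ∃ j, i n = j + 1 ∧ Num n (p n) (d n) ε j := by
  filter_upwards [d_ge d ω hω hdω 8, d_ge d ω hω hdω (12 / ε), eventually_ge_atTop 4,
    tendsto_L.eventually_ge_atTop 1000, tendsto_L.eventually_ge_atTop (1000 / ε),
    hdn.eventually (gt_mem_nhds (show (0:ℝ) < ε / 8 by positivity)),
    hdi.eventually (gt_mem_nhds (show (0:ℝ) < ε / 512 by positivity)),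
    hdi1.eventually_ge_atTop 1] with n h8 h12 hn hL hLε hp hD hc
  have hn0 : (0:ℝ) < n := by exact_mod_cast (by omega : 0 < n)
  have hpn : p n = d n / n := by rw [hd n]; field_simp
  have h8' : Real.log n ^ (8:ℕ) ≤ d n := by
    rw [← Real.rpow_natCast]; exact_mod_cast h8
  have hd0 : 0 < d n := lt_of_lt_of_le (by positivity) h8'
  have hi : i n ≠ 0 := by
    intro h0
    rw [h0, zero_add, pow_one] at hc
    linarith
  obtain ⟨j, hj⟩ := Nat.exists_eq_succ_of_ne_zero hi
  have hj' : i n = j + 1 := hj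
  refine ⟨j, hj', hd n, hn, ?_, ?_, hε0, hε1, ?_, h8', ?_, ?_⟩
  · rw [hpn]; positivity
  · rw [hpn]; exact hp.le
  · rw [div_le_iff₀ hε0] at hLε; linarith
  · rw [← hj']; exact hD.le
  · have hL0 : 0 < Real.log n := by linarith
    have h1 := Real.log_le_log (Real.rpow_pos_of_pos hL0 _) h12
    rw [Real.log_rpow hL0] at h1
    have h2 : 3 * Real.log (Real.log n) ≤ ε / 4 * Real.log (d n) := by
      calc 3 * Real.log (Real.log n) = ε / 4 * (12 / ε * Real.log (Real.log n)) := by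
            field_simp; ring
        _ ≤ _ := by gcongr
    calc 320 * Real.log n ^ 2 ≤ Real.log n ^ 3 := by nlinarith [sq_nonneg (Real.log n)]
      _ = Real.exp (3 * Real.log (Real.log n)) := by
          have : Real.exp (3 * Real.log (Real.log n)) = Real.exp (Real.log (Real.log n)) ^ 3 := by
            rw [← Real.exp_nat_mul]; norm_num
          rw [this, Real.exp_log hL0]
      _ ≤ _ := Real.exp_le_exp.mpr h2

lemma fixed_eps (p d : ℕ → ℝ) (i : ℕ → ℕ) (ω : ℕ → ℝ)
    (hd : ∀ n, d n = p n * n)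
    (hdn : Tendsto (fun n : ℕ => d n / n) atTop (𝓝 0))
    (hω : Tendsto ω atTop atTop)
    (hdω : ∀ᶠ n : ℕ in atTop, (Real.log n) ^ ω n ≤ d n)
    (hdi : Tendsto (fun n : ℕ => d n ^ i n / n) atTop (𝓝 0))
    (hdi1 : Tendsto (fun n : ℕ => d n ^ (i n + 1) / n - 2 * Real.log n) atTop atTop)
    (ε : ℝ) (hε0 : 0 < ε) (hε1 : ε ≤ 1) :
    Tendsto (fun n : ℕ => Pr n (p n) (fun G : SimpleGraph (Fin n) =>
      |(localizationNumber G : ℝ) * d n ^ i n / (n * Real.log (d n)) - 1| ≤ ε)) atTop (𝓝 1) := by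
  have hnum := ev_num p d i ω hd hdn hω hdω hdi hdi1 ε hε0 hε1
  have hE : Tendsto (fun n : ℕ => 1 - (Real.exp (-Real.log n) +
      (Real.exp (Real.exp (-Real.log n)) - 1) + Real.exp (2 - Real.log n) +
      (Real.exp (13 - (d n ^ (i n + 1) / n - 2 * Real.log n)) + Real.exp (-(Real.log n / 4)))))
      atTop (𝓝 1) := by
    have t1 : Tendsto (fun n : ℕ => Real.exp (-Real.log n)) atTop (𝓝 0) :=
      Real.tendsto_exp_atBot.comp (tendsto_neg_atTop_atBot.comp tendsto_L)
    have t2 : Tendsto (fun n : ℕ => Real.exp (Real.exp (-Real.log n)) - 1) atTop (𝓝 0) := by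
      have := ((Real.continuous_exp.tendsto 0).comp t1).sub_const 1
      simpa using this
    have t3 : Tendsto (fun n : ℕ => Real.exp (2 - Real.log n)) atTop (𝓝 0) := by
      have := t1.const_mul (Real.exp 2)
      simpa [← Real.exp_add, sub_eq_add_neg] using this
    have t4 : Tendsto (fun n : ℕ => Real.exp (13 - (d n ^ (i n + 1) / n - 2 * Real.log n)))
        atTop (𝓝 0) := by
      have := (Real.tendsto_exp_atBot.comp (tendsto_neg_atTop_atBot.comp hdi1)).const_mul (Real.exp 13)
      simpa only [Function.comp_apply, ← Real.exp_add, sub_eq_add_neg, mul_zero] using this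
    have t5 : Tendsto (fun n : ℕ => Real.exp (-(Real.log n / 4))) atTop (𝓝 0) :=
      Real.tendsto_exp_atBot.comp (tendsto_neg_atTop_atBot.comp
        (tendsto_L.atTop_div_const (by norm_num)))
    have := (((t1.add t2).add t3).add (t4.add t5)).const_sub 1
    simpa using this
  refine tendsto_of_tendsto_of_tendsto_of_le_of_le' hE tendsto_const_nhds ?_ ?_
  · filter_upwards [hnum] with n hn
    obtain ⟨j, hj, h⟩ := hn
    rw [hj]
    exact h.main
  · filter_upwards [hnum] with n hn
    obtain ⟨j, hj, h⟩ := hn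
    exact Pr_le_one _ _ h.hp0 h.p1 _

end LocGnp

theorem stmt1_localization_gnp_asymptotics
    (p d : ℕ → ℝ) (i : ℕ → ℕ) (ω : ℕ → ℝ)
    (hd : ∀ n, d n = p n * n)
    (hlogd : Filter.Tendsto (fun n : ℕ => Real.log n / d n) Filter.atTop (nhds 0))
    (hdn : Filter.Tendsto (fun n : ℕ => d n / n) Filter.atTop (nhds 0))
    (hω : Filter.Tendsto ω Filter.atTop Filter.atTop)
    (hdω : ∀ᶠ n : ℕ in Filter.atTop, (Real.log n) ^ ω n ≤ d n)
    (hdi : Filter.Tendsto (fun n : ℕ => d n ^ i n / n) Filter.atTop (nhds 0))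
    (hdi1 : Filter.Tendsto (fun n : ℕ => d n ^ (i n + 1) / n - 2 * Real.log n)
      Filter.atTop Filter.atTop) :
    ∃ ε : ℕ → ℝ, Filter.Tendsto ε Filter.atTop (nhds 0) ∧
      AAS p (fun n : ℕ =>
        {G : SimpleGraph (Fin n) |
          |(localizationNumber G : ℝ) * d n ^ i n / (n * Real.log (d n)) - 1| ≤ ε n}) := by
  refine LocGnp.diagonal (fun e n => LocGnp.Pr n (p n) (fun G : SimpleGraph (Fin n) =>
    |(localizationNumber G : ℝ) * d n ^ i n / (n * Real.log (d n)) - 1| ≤ e))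
    (fun e h0 h1 => LocGnp.fixed_eps p d i ω hd hdn hω hdω hdi hdi1 e h0 h1) ?_
  filter_upwards [LocGnp.ev_num p d i ω hd hdn hω hdω hdi hdi1 1 one_pos le_rfl] with n hn e
  obtain ⟨j, hj, h⟩ := hn
  exact LocGnp.Pr_le_one _ _ h.hp0 h.p1 _
end

section
/- Let ω = ω(n) → ∞ with ω ≤ (log n)^4·(log log n)^2, and suppose d = d(n) := p(n)·n satisfies ω·log n ≤ d = o(n). Let i = i(n) ∈ ℕ be such that d^i = o(n). Then there is an absolute constant C such that asymptotically almost surely, for G = (V,E) ∈ G(n,p): for every V' ⊆ V with |V'| ≤ 2, the quantity |S(V', i)| differs from d^i·|V'| by at most C·(1/√ω + d^i/n)·d^i·|V'|. In particular, a.a.s. for every two distinct vertices x, y ∈ V, |S(x,i) \ S(y,i)| = (1 + O(1/√ω) + O(d^i/n))·d^i. -/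
open Filter SimpleGraph Set
open scoped Topology

section GnpHelpers

/-- Expectation over a binomial random subset of `Γ`. -/
noncomputable def ex {ι : Type*} (p : ℝ) (Γ : Finset ι) (f : Finset ι → ℝ) : ℝ :=
  ∑ s ∈ Γ.powerset, p ^ s.card * (1 - p) ^ (Γ.card - s.card) * f s

/-- `f` depends only on the elements of `F`. -/
def DepOn {ι : Type*} (F : Set ι) (f : Finset ι → ℝ) : Prop :=
  ∀ s t : Finset ι, (∀ e ∈ F, e ∈ s ↔ e ∈ t) → f s = f t

lemma ex_empty {ι : Type*} (p : ℝ) (f : Finset ι → ℝ) : ex p ∅ f = f ∅ := by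
  simp [ex]

lemma ex_insert {ι : Type*} [DecidableEq ι] (p : ℝ) (Γ : Finset ι) (e : ι) (he : e ∉ Γ)
    (f : Finset ι → ℝ) :
    ex p (insert e Γ) f = (1 - p) * ex p Γ f + p * ex p Γ (fun s => f (insert e s)) := by
  unfold ex
  rw [Finset.sum_powerset_insert he, Finset.mul_sum, Finset.mul_sum]
  congr 1
  · apply Finset.sum_congr rfl
    intro s hs
    have hc := Finset.card_le_card (Finset.mem_powerset.1 hs)
    rw [Finset.card_insert_of_notMem he, Nat.succ_sub hc, pow_succ]
    ring
  · apply Finset.sum_congr rfl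
    intro s hs
    have hes : e ∉ s := fun h => he (Finset.mem_powerset.1 hs h)
    rw [Finset.card_insert_of_notMem he, Finset.card_insert_of_notMem hes, Nat.succ_sub_succ,
      pow_succ]
    ring

lemma ex_sum {ι α : Type*} (p : ℝ) (Γ : Finset ι) (S : Finset α) (f : α → Finset ι → ℝ) :
    ex p Γ (fun s => ∑ a ∈ S, f a s) = ∑ a ∈ S, ex p Γ (f a) := by
  unfold ex
  rw [Finset.sum_comm]
  simp only [Finset.mul_sum]

lemma ex_mul_left {ι : Type*} (p : ℝ) (Γ : Finset ι) (c : ℝ) (f : Finset ι → ℝ) :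
    ex p Γ (fun s => c * f s) = c * ex p Γ f := by
  unfold ex
  rw [Finset.mul_sum]
  apply Finset.sum_congr rfl
  intro s _
  ring

lemma ex_add {ι : Type*} (p : ℝ) (Γ : Finset ι) (f g : Finset ι → ℝ) :
    ex p Γ (fun s => f s + g s) = ex p Γ f + ex p Γ g := by
  unfold ex
  rw [← Finset.sum_add_distrib]
  apply Finset.sum_congr rfl
  intro s _
  ring

lemma ex_mono {ι : Type*} {p : ℝ} (hp0 : 0 ≤ p) (hp1 : p ≤ 1) (Γ : Finset ι)
    {f g : Finset ι → ℝ} (h : ∀ s, f s ≤ g s) : ex p Γ f ≤ ex p Γ g := by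
  unfold ex
  apply Finset.sum_le_sum
  intro s _
  have : 0 ≤ 1 - p := by linarith
  exact mul_le_mul_of_nonneg_left (h s) (by positivity)

lemma ex_const {ι : Type*} (p : ℝ) (Γ : Finset ι) (c : ℝ) : ex p Γ (fun _ => c) = c := by
  classical
  induction Γ using Finset.induction_on with
  | empty => simp [ex_empty]
  | insert e Γ he ih => rw [ex_insert _ _ _ he, ih]; ring

lemma DepOn.insert_notMem {ι : Type*} [DecidableEq ι] {F : Set ι} {f : Finset ι → ℝ}
    (h : DepOn F f) {e : ι} (he : e ∉ F) (s : Finset ι) : f (insert e s) = f s := by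
  apply h
  intro x hx
  have : x ≠ e := fun h' => he (h' ▸ hx)
  simp [this]

lemma DepOn.insert {ι : Type*} [DecidableEq ι] {F : Set ι} {f : Finset ι → ℝ}
    (h : DepOn F f) (e : ι) : DepOn F (fun s => f (insert e s)) := by
  intro s t hst
  apply h
  intro x hx
  simp [hst x hx]

lemma DepOn.mono {ι : Type*} {F F' : Set ι} {f : Finset ι → ℝ}
    (h : DepOn F f) (hF : F ⊆ F') : DepOn F' f :=
  fun s t hst => h s t (fun e he => hst e (hF he))

lemma ex_indep {ι : Type*} (p : ℝ) (Γ : Finset ι) (F F' : Set ι) (hFF : Disjoint F F')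
    (f g : Finset ι → ℝ) (hf : DepOn F f) (hg : DepOn F' g) :
    ex p Γ (fun s => f s * g s) = ex p Γ f * ex p Γ g := by
  classical
  induction Γ using Finset.induction_on generalizing f g with
  | empty => simp [ex_empty]
  | insert e Γ he ih =>
    simp only [ex_insert _ _ _ he]
    rw [ih f g hf hg, ih _ _ (hf.insert e) (hg.insert e)]
    by_cases heF : e ∈ F
    · have : e ∉ F' := fun h => Set.disjoint_left.1 hFF heF h
      simp only [hg.insert_notMem this]
      ring
    · simp only [hf.insert_notMem heF]
      ring

lemma ex_prod {ι α : Type*} (p : ℝ) (Γ : Finset ι) (U : Finset α) (F : α → Set ι)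
    (hF : ∀ u ∈ U, ∀ v ∈ U, u ≠ v → Disjoint (F u) (F v))
    (f : α → Finset ι → ℝ) (hf : ∀ u ∈ U, DepOn (F u) (f u)) :
    ex p Γ (fun s => ∏ u ∈ U, f u s) = ∏ u ∈ U, ex p Γ (f u) := by
  classical
  induction U using Finset.induction_on with
  | empty => simp [ex_const]
  | insert a U ha ih =>
    simp only [Finset.prod_insert ha]
    rw [ex_indep p Γ (F a) (⋃ u ∈ U, F u), ih]
    · intro u hu v hv
      exact hF u (Finset.mem_insert_of_mem hu) v (Finset.mem_insert_of_mem hv)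
    · intro u hu
      exact hf u (Finset.mem_insert_of_mem hu)
    · simp only [Set.disjoint_iUnion_right]
      intro u hu
      exact hF a (Finset.mem_insert_self _ _) u (Finset.mem_insert_of_mem hu)
        (fun h => ha (h ▸ hu))
    · exact hf a (Finset.mem_insert_self _ _)
    · intro s t hst
      apply Finset.prod_congr rfl
      intro u hu
      apply hf u (Finset.mem_insert_of_mem hu)
      intro e he
      exact hst e (Set.mem_biUnion hu he)

lemma ex_notMem {ι : Type*} [DecidableEq ι] (p : ℝ) (Γ : Finset ι) (e : ι) (he : e ∈ Γ) :
    ex p Γ (fun s => if e ∈ s then 0 else 1) = 1 - p := by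
  obtain ⟨Γ', he', rfl⟩ : ∃ Γ', e ∉ Γ' ∧ Γ = insert e Γ' :=
    ⟨Γ.erase e, by simp, by rw [Finset.insert_erase he]⟩
  rw [ex_insert _ _ _ he']
  simp only [Finset.mem_insert_self, if_true, ex_const, mul_zero, add_zero]
  have : ex p Γ' (fun s => if e ∈ s then (0:ℝ) else 1) = ex p Γ' (fun _ => 1) := by
    unfold ex
    apply Finset.sum_congr rfl
    intro s hs
    have hes : e ∉ s := fun h => he' (Finset.mem_powerset.1 hs h)
    simp [hes]
  rw [this, ex_const, mul_one]

lemma exp_le_quad {x : ℝ} (hx : |x| ≤ 1) : Real.exp x ≤ 1 + x + x ^ 2 := by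
  have := Real.abs_exp_sub_one_sub_id_le hx
  have := (abs_le.1 this).2
  linarith

lemma ex_tail {ι : Type*} {p : ℝ} (hp0 : 0 ≤ p) (hp1 : p ≤ 1) (Γ : Finset ι)
    (X : Finset ι → ℝ) (m : ℕ) (q ε : ℝ) (hq0 : 0 ≤ q) (hq1 : q ≤ 1) (hε0 : 0 ≤ ε) (hε1 : ε ≤ 1)
    (hX : ∀ l : ℝ, ex p Γ (fun s => Real.exp (l * X s)) = ((1 - q) + q * Real.exp l) ^ m) :
    ex p Γ (fun s => open Classical in if ε * (m * q) < |X s - m * q| then 1 else 0)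
      ≤ 2 * Real.exp (- (ε ^ 2 * (m * q) / 4)) := by
  classical
  have key : ∀ l : ℝ, |l| ≤ 1 → ex p Γ (fun s => Real.exp (l * X s)) ≤
      Real.exp (m * q * (l + l ^ 2)) := by
    intro l hl
    rw [hX]
    have h1 : (1 - q) + q * Real.exp l ≤ Real.exp (q * (l + l ^ 2)) := by
      have := exp_le_quad hl
      have h2 := Real.add_one_le_exp (q * (l + l ^ 2))
      nlinarith
    have h0 : 0 ≤ (1 - q) + q * Real.exp l := by
      have := Real.exp_pos l
      have : 0 ≤ 1 - q := by linarith
      positivity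
    calc _ ≤ (Real.exp (q * (l + l ^ 2))) ^ m := pow_le_pow_left₀ h0 h1 m
      _ = _ := by rw [← Real.exp_nat_mul]; ring_nf
  have hb : ∀ l : ℝ, |l| ≤ 1 → ∀ c : ℝ, ex p Γ (fun s => Real.exp (-c) * Real.exp (l * X s)) ≤
      Real.exp (m * q * (l + l ^ 2) - c) := by
    intro l hl c
    rw [ex_mul_left]
    calc _ ≤ Real.exp (-c) * Real.exp (m * q * (l + l ^ 2)) :=
          mul_le_mul_of_nonneg_left (key l hl) (Real.exp_pos _).le
      _ = _ := by rw [← Real.exp_add]; ring_nf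
  set μ : ℝ := m * q with hμ
  have hμ0 : 0 ≤ μ := by positivity
  have habs : |ε / 2| ≤ 1 := by rw [abs_of_nonneg (by linarith)]; linarith
  have habs' : |-(ε / 2)| ≤ 1 := by rw [abs_neg]; exact habs
  have h1 := hb (ε / 2) habs (ε / 2 * (μ * (1 + ε)))
  have h2 := hb (-(ε / 2)) habs' (-(ε / 2) * (μ * (1 - ε)))
  calc _ ≤ ex p Γ (fun s => Real.exp (-(ε / 2 * (μ * (1 + ε)))) * Real.exp (ε / 2 * X s) +
        Real.exp (-(-(ε / 2) * (μ * (1 - ε)))) * Real.exp (-(ε / 2) * X s)) := by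
        apply ex_mono hp0 hp1
        intro s
        rw [← Real.exp_add, ← Real.exp_add]
        have e1 := Real.exp_pos (-(ε / 2 * (μ * (1 + ε))) + ε / 2 * X s)
        have e2 := Real.exp_pos (-(-(ε / 2) * (μ * (1 - ε))) + -(ε / 2) * X s)
        split_ifs with h
        · rcases lt_abs.1 h with h | h
          · have : 1 ≤ Real.exp (-(ε / 2 * (μ * (1 + ε))) + ε / 2 * X s) := by
              apply Real.one_le_exp
              nlinarith
            linarith
          · have : 1 ≤ Real.exp (-(-(ε / 2) * (μ * (1 - ε))) + -(ε / 2) * X s) := by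
              apply Real.one_le_exp
              nlinarith
            linarith
        · linarith
    _ ≤ _ := by
        rw [ex_add]
        have e1 : μ * (ε / 2 + (ε / 2) ^ 2) - ε / 2 * (μ * (1 + ε)) = - (ε ^ 2 * μ / 4) := by ring
        have e2 : μ * (-(ε / 2) + (-(ε / 2)) ^ 2) - -(ε / 2) * (μ * (1 - ε))
          = - (ε ^ 2 * μ / 4) := by ring
        rw [e1] at h1
        rw [e2] at h2
        linarith

lemma ex_cond {ι α : Type*} [Fintype α] [DecidableEq α] {p : ℝ} (Γ : Finset ι)
    (st : Finset ι → α) (h : α → Finset ι → ℝ) (c : ℝ)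
    (H : ∀ a, ex p Γ (fun s => (if st s = a then 1 else 0) * h a s)
      ≤ c * ex p Γ (fun s => if st s = a then 1 else 0)) :
    ex p Γ (fun s => h (st s) s) ≤ c := by
  have h1 : (fun s => h (st s) s) = fun s => ∑ a, (if st s = a then 1 else 0) * h a s := by
    funext s
    simp
  rw [h1, ex_sum]
  calc _ ≤ ∑ a, c * ex p Γ (fun s => if st s = a then 1 else 0) := Finset.sum_le_sum fun a _ => H a
    _ = c * ex p Γ (fun s => ∑ a, if st s = a then 1 else 0) := by rw [ex_sum, Finset.mul_sum]
    _ = c := by simp [ex_const]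

end GnpHelpers
section BFS

/-- vertices of `(A ∪ B)ᶜ` having an `s`-neighbour in `B` -/
def nbr {n : ℕ} (s : Finset (Sym2 (Fin n))) (A B : Finset (Fin n)) : Finset (Fin n) :=
  (A ∪ B)ᶜ.filter (fun u => ∃ b ∈ B, s(b, u) ∈ s)

/-- breadth first search state: (vertices found before level `j`, level `j`) -/
def bfs {n : ℕ} (W : Finset (Fin n)) (s : Finset (Sym2 (Fin n))) :
    ℕ → Finset (Fin n) × Finset (Fin n)
  | 0 => (∅, W)
  | j + 1 => ((bfs W s j).1 ∪ (bfs W s j).2, nbr s (bfs W s j).1 (bfs W s j).2)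

lemma bfs_disjoint {n : ℕ} (W : Finset (Fin n)) (s : Finset (Sym2 (Fin n))) (j : ℕ) :
    Disjoint (bfs W s j).1 (bfs W s j).2 := by
  cases j with
  | zero => simp [bfs]
  | succ j =>
    simp only [bfs, nbr]
    rw [Finset.disjoint_left]
    intro a ha hb
    have := (Finset.mem_filter.1 hb).1
    exact (Finset.mem_compl.1 this) ha

lemma bfs_mono {n : ℕ} (W : Finset (Fin n)) (s : Finset (Sym2 (Fin n))) (j k : ℕ) (h : k ≤ j) :
    (bfs W s k).1 ⊆ (bfs W s j).1 := by
  induction j, h using Nat.le_induction with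
  | base => exact Finset.Subset.refl _
  | succ j _ ih => exact ih.trans (by simp [bfs])

/-- pairs meeting `A` -/
def touch {n : ℕ} (A : Finset (Fin n)) : Set (Sym2 (Fin n)) := {e | ∃ a ∈ A, a ∈ e}

lemma bfs_congr {n : ℕ} (W : Finset (Fin n)) (s t : Finset (Sym2 (Fin n))) (j : ℕ)
    (h : ∀ e ∈ touch (bfs W s j).1, e ∈ s ↔ e ∈ t) :
    ∀ k ≤ j, bfs W t k = bfs W s k := by
  intro k
  induction k with
  | zero => intro _; rfl
  | succ k ih =>
    intro hk
    have ih' := ih (by omega)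
    simp only [bfs, ih']
    congr 1
    unfold nbr
    apply Finset.filter_congr
    intro u _
    have hsub : (bfs W s k).2 ⊆ (bfs W s j).1 := by
      refine Finset.Subset.trans ?_ (bfs_mono W s j (k + 1) hk)
      simp [bfs]
    constructor
    · rintro ⟨b, hb, hbu⟩
      exact ⟨b, hb, (h _ ⟨b, hsub hb, by simp⟩).2 hbu⟩
    · rintro ⟨b, hb, hbu⟩
      exact ⟨b, hb, (h _ ⟨b, hsub hb, by simp⟩).1 hbu⟩

lemma bfs_depOn {n : ℕ} (W : Finset (Fin n)) (j : ℕ) (a : Finset (Fin n) × Finset (Fin n)) :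
    DepOn (touch a.1) (fun s => if bfs W s j = a then 1 else 0) := by
  intro s t hst
  have h1 : bfs W s j = a → bfs W t j = a := by
    rintro rfl
    exact bfs_congr W s t j hst j le_rfl
  have h2 : bfs W t j = a → bfs W s j = a := by
    rintro rfl
    exact bfs_congr W t s j (fun e he => (hst e he).symm) j le_rfl
  by_cases h : bfs W s j = a
  · simp [h, h1 h]
  · have h3 : ¬ bfs W t j = a := fun h' => h (h2 h')
    simp [h, h3]

/-- pairs between `B` and `u` -/
def star {n : ℕ} (B : Finset (Fin n)) (u : Fin n) : Set (Sym2 (Fin n)) := {e | ∃ b ∈ B, e = s(b, u)}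

lemma star_disjoint {n : ℕ} (B : Finset (Fin n)) (u v : Fin n) (hu : u ∉ B) (huv : u ≠ v) :
    Disjoint (star B u) (star B v) := by
  rw [Set.disjoint_left]
  rintro e ⟨b, hb, rfl⟩ ⟨c, hc, h⟩
  rw [Sym2.eq_iff] at h
  rcases h with ⟨_, h⟩ | ⟨_, h⟩
  · exact huv h
  · exact hu (h ▸ hc)

/-- the number of new vertices -/
lemma nbr_card_exp {n : ℕ} (s : Finset (Sym2 (Fin n))) (A B : Finset (Fin n)) (l : ℝ) :
    Real.exp (l * (nbr s A B).card) =
      ∏ u ∈ (A ∪ B)ᶜ, (if ∃ b ∈ B, s(b, u) ∈ s then Real.exp l else 1) := by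
  rw [Finset.prod_ite, Finset.prod_const, Finset.prod_const_one, mul_one, ← Real.exp_nat_mul,
    mul_comm]
  rfl

lemma one_nbr {n : ℕ} (p : ℝ) (B : Finset (Fin n)) (u : Fin n) (hu : u ∉ B) :
    ex p (⊤ : SimpleGraph (Fin n)).edgeFinset (fun s => if ∃ b ∈ B, s(b, u) ∈ s then 0 else 1)
      = (1 - p) ^ B.card := by
  have h : (fun s : Finset (Sym2 (Fin n)) => if ∃ b ∈ B, s(b, u) ∈ s then (0:ℝ) else 1) =
      fun s => ∏ b ∈ B, (if s(b, u) ∈ s then (0:ℝ) else 1) := by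
    funext s
    split_ifs with h
    · obtain ⟨b, hb, hbu⟩ := h
      rw [Finset.prod_eq_zero hb]
      simp [hbu]
    · push Not at h
      rw [Finset.prod_eq_one]
      intro b hb
      simp [h b hb]
  rw [h, ex_prod p _ B (fun b => {s(b, u)})]
  · rw [← Finset.prod_const]
    apply Finset.prod_congr rfl
    intro b hb
    apply ex_notMem
    simp
    rintro rfl
    exact hu hb
  · intro b hb c hc hbc
    rw [Set.disjoint_singleton]
    intro h
    rw [Sym2.eq_iff] at h
    rcases h with ⟨h, _⟩ | ⟨h, h'⟩
    · exact hbc h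
    · exact hu (h ▸ hb)
  · intro b _ s t hst
    have := hst s(b, u) (by simp)
    simp [this]

lemma star_depOn {n : ℕ} (B : Finset (Fin n)) (u : Fin n) (s t : Finset (Sym2 (Fin n)))
    (h : ∀ e ∈ star B u, e ∈ s ↔ e ∈ t) : (∃ b ∈ B, s(b, u) ∈ s) ↔ (∃ b ∈ B, s(b, u) ∈ t) := by
  constructor
  · rintro ⟨b, hb, hbu⟩
    exact ⟨b, hb, (h _ ⟨b, hb, rfl⟩).1 hbu⟩
  · rintro ⟨b, hb, hbu⟩
    exact ⟨b, hb, (h _ ⟨b, hb, rfl⟩).2 hbu⟩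

lemma nbr_mgf {n : ℕ} (p : ℝ) (A B : Finset (Fin n)) (l : ℝ) :
    ex p (⊤ : SimpleGraph (Fin n)).edgeFinset (fun s => Real.exp (l * (nbr s A B).card)) =
      ((1 - (1 - (1 - p) ^ B.card)) + (1 - (1 - p) ^ B.card) * Real.exp l) ^ (A ∪ B)ᶜ.card := by
  simp only [nbr_card_exp]
  rw [ex_prod p _ _ (fun u => star B u), ← Finset.prod_const]
  · apply Finset.prod_congr rfl
    intro u hu
    have huB : u ∉ B := by
      intro h
      exact (Finset.mem_compl.1 hu) (Finset.mem_union_right _ h)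
    have h : (fun s : Finset (Sym2 (Fin n)) => if ∃ b ∈ B, s(b, u) ∈ s then Real.exp l else 1) =
      fun s => Real.exp l +
        (1 - Real.exp l) * (if ∃ b ∈ B, s(b, u) ∈ s then (0:ℝ) else 1) := by
      funext s
      split_ifs <;> simp
    rw [h, ex_add, ex_const, ex_mul_left, one_nbr p B u huB]
    ring
  · intro u hu v _ huv
    exact star_disjoint B u v
      (fun h => (Finset.mem_compl.1 hu) (Finset.mem_union_right _ h)) huv
  · intro u _ s t hst
    simp only [star_depOn B u s t hst]

/-- the expected size of the next level -/
noncomputable def mu {n : ℕ} (p : ℝ) (a : Finset (Fin n) × Finset (Fin n)) : ℝ :=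
  ((a.1 ∪ a.2)ᶜ.card : ℕ) * (1 - (1 - p) ^ a.2.card)

open Classical in
/-- indicator of a bad step -/
noncomputable def badInd {n : ℕ} (p ε M : ℝ) (a : Finset (Fin n) × Finset (Fin n))
    (s : Finset (Sym2 (Fin n))) : ℝ :=
  if M ≤ mu p a ∧ ε * mu p a < |((nbr s a.1 a.2).card : ℝ) - mu p a| then 1 else 0

lemma badInd_depOn {n : ℕ} (p ε M : ℝ) (a : Finset (Fin n) × Finset (Fin n)) :
    DepOn (⋃ u ∈ (a.1 ∪ a.2)ᶜ, star a.2 u) (badInd p ε M a) := by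
  intro s t hst
  have : nbr s a.1 a.2 = nbr t a.1 a.2 := by
    unfold nbr
    apply Finset.filter_congr
    intro u hu
    exact star_depOn a.2 u s t (fun e he => hst e (Set.mem_biUnion hu he))
  simp only [badInd, this]

lemma bad_prob {n : ℕ} {p : ℝ} (hp0 : 0 ≤ p) (hp1 : p ≤ 1) (ε M : ℝ) (hε0 : 0 ≤ ε) (hε1 : ε ≤ 1)
    (W : Finset (Fin n)) (j : ℕ) :
    ex p (⊤ : SimpleGraph (Fin n)).edgeFinset (fun s => badInd p ε M (bfs W s j) s)
      ≤ 2 * Real.exp (-(ε ^ 2 * M / 4)) := by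
  classical
  apply ex_cond _ (fun s => bfs W s j) (badInd p ε M)
  intro a
  by_cases hd : Disjoint a.1 a.2
  · rw [ex_indep p _ (touch a.1) (⋃ u ∈ (a.1 ∪ a.2)ᶜ, star a.2 u) _ _ _ (bfs_depOn W j a)
      (badInd_depOn p ε M a), mul_comm]
    · apply mul_le_mul_of_nonneg_right
      · by_cases hM : M ≤ mu p a
        · have hpp : (1 - p) ^ a.2.card ≤ 1 := pow_le_one₀ (by linarith) (by linarith)
          have hpp0 : 0 ≤ (1 - p) ^ a.2.card := pow_nonneg (by linarith) _
          have := ex_tail hp0 hp1 (⊤ : SimpleGraph (Fin n)).edgeFinset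
            (fun s => ((nbr s a.1 a.2).card : ℝ)) (a.1 ∪ a.2)ᶜ.card
            (1 - (1 - p) ^ a.2.card) ε (by linarith) (by linarith) hε0 hε1
            (nbr_mgf p a.1 a.2)
          refine le_trans (le_of_eq ?_) (this.trans ?_)
          · congr 1
            funext s
            unfold badInd
            exact if_congr (and_iff_right hM) rfl rfl
          · change 2 * Real.exp (-(ε ^ 2 * mu p a / 4)) ≤ _
            have : ε ^ 2 * M ≤ ε ^ 2 * mu p a := mul_le_mul_of_nonneg_left hM (sq_nonneg _)
            have : Real.exp (-(ε ^ 2 * mu p a / 4)) ≤ Real.exp (-(ε ^ 2 * M / 4)) :=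
              Real.exp_le_exp.2 (by linarith)
            linarith
        · have : badInd p ε M a = fun _ => 0 := by
            funext s
            simp [badInd, hM]
          rw [this, ex_const]
          positivity
      · refine (ex_const p (⊤ : SimpleGraph (Fin n)).edgeFinset 0).symm.le.trans ?_
        apply ex_mono hp0 hp1
        intro s
        split_ifs <;> norm_num
    · rw [Set.disjoint_left]
      rintro e ⟨x, hx, hxe⟩ he
      simp only [Set.mem_iUnion] at he
      obtain ⟨u, hu, b, hb, rfl⟩ := he
      rcases Sym2.mem_iff.1 hxe with rfl | rfl
      · exact Finset.disjoint_left.1 hd hx hb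
      · exact (Finset.mem_compl.1 hu) (Finset.mem_union_left _ hx)
  · have : ∀ s, bfs W s j ≠ a := by
      rintro s rfl
      exact hd (bfs_disjoint W s j)
    simp [this, ex_const]

lemma gnpProb_eq (n : ℕ) (p : ℝ) (A : Set (SimpleGraph (Fin n))) :
    gnpProb n p A = ex p (⊤ : SimpleGraph (Fin n)).edgeFinset
      (fun s => open Classical in if SimpleGraph.fromEdgeSet (s : Set (Sym2 (Fin n))) ∈ A then 1 else 0) := by
  classical
  unfold gnpProb ex
  rw [Finset.sum_filter]
  refine Finset.sum_bij' (fun G _ => G.edgeFinset)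
    (fun s _ => SimpleGraph.fromEdgeSet (s : Set (Sym2 (Fin n)))) ?_ ?_ ?_ ?_ ?_
  · intro G _
    rw [Finset.mem_powerset]
    exact SimpleGraph.edgeFinset_mono le_top
  · intro s _
    simp
  · intro G _
    simp
  · intro s hs
    ext e
    rw [Finset.mem_powerset] at hs
    simp only [SimpleGraph.mem_edgeFinset, SimpleGraph.edgeSet_fromEdgeSet, Set.mem_sdiff,
      Finset.mem_coe]
    constructor
    · exact fun h => h.1
    · intro h
      refine ⟨h, ?_⟩
      have := hs h
      simpa using this
  · intro G _
    have h1 : Nat.card G.edgeSet = G.edgeFinset.card := by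
      rw [SimpleGraph.edgeFinset_card, Nat.card_eq_fintype_card]
    have h2 : (⊤ : SimpleGraph (Fin n)).edgeFinset.card = n.choose 2 := by
      rw [SimpleGraph.card_edgeFinset_top_eq_card_choose_two, Fintype.card_fin]
    rw [h1, h2]
    simp

end BFS
section Det

lemma edist_pred {V : Type*} (G : SimpleGraph V) (w u : V) (j : ℕ) (h : G.edist w u ≤ (j + 1 : ℕ))
    (hne : w ≠ u) : ∃ b, G.Adj b u ∧ G.edist w b ≤ j := by
  rw [SimpleGraph.edist_comm] at h
  have hr : G.edist u w ≠ ⊤ := ne_top_of_le_ne_top (ENat.natCast_ne_top _) h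
  obtain ⟨q, hq⟩ := SimpleGraph.exists_walk_of_edist_ne_top hr
  cases q with
  | nil => exact absurd rfl hne
  | cons hadj q =>
    rename_i b
    refine ⟨b, hadj.symm, ?_⟩
    rw [← hq] at h
    rw [SimpleGraph.edist_comm]
    refine (SimpleGraph.edist_le q).trans ?_
    rw [SimpleGraph.Walk.length_cons] at h
    have : q.length + 1 ≤ j + 1 := by exact_mod_cast h
    have : q.length ≤ j := by omega
    exact_mod_cast this

lemma bfs_spec {n : ℕ} (W : Finset (Fin n)) (s : Finset (Sym2 (Fin n))) (j : ℕ) :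
    (∀ u, u ∈ (bfs W s j).1 ↔
      ∃ w ∈ W, (SimpleGraph.fromEdgeSet (s : Set (Sym2 (Fin n)))).edist w u < j) ∧
    (∀ u, u ∈ (bfs W s j).2 ↔ u ∉ (bfs W s j).1 ∧
      ∃ w ∈ W, (SimpleGraph.fromEdgeSet (s : Set (Sym2 (Fin n)))).edist w u ≤ j) := by
  set G := SimpleGraph.fromEdgeSet (s : Set (Sym2 (Fin n))) with hG
  have htri : ∀ (w b u : Fin n) (k : ℕ), G.Adj b u → G.edist w b ≤ k →
      G.edist w u ≤ (k + 1 : ℕ) := by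
    intro w b u k hadj h
    have h1 : G.edist b u = 1 := SimpleGraph.edist_eq_one_iff_adj.2 hadj
    have := SimpleGraph.edist_triangle (G := G) (u := w) (v := b) (w := u)
    rw [h1] at this
    push_cast
    exact this.trans (by gcongr)
  have hlt : ∀ (x : ℕ∞) (k : ℕ), x < (k + 1 : ℕ) ↔ x ≤ k := by
    intro x k
    push_cast
    exact ENat.lt_add_one_iff (ENat.natCast_ne_top k)
  induction j with
  | zero =>
    constructor
    · intro u
      simp [bfs]
    · intro u
      simp [bfs]
  | succ j ih =>
    obtain ⟨ih1, ih2⟩ := ih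
    have I1 : ∀ u, u ∈ (bfs W s (j + 1)).1 ↔ ∃ w ∈ W, G.edist w u < (j + 1 : ℕ) := by
      intro u
      simp only [hlt]
      simp only [bfs, Finset.mem_union]
      rw [ih2]
      constructor
      · rintro (h | h)
        · obtain ⟨w, hw, h⟩ := (ih1 u).1 h
          exact ⟨w, hw, h.le⟩
        · exact h.2
      · intro h
        by_cases h' : u ∈ (bfs W s j).1
        · exact Or.inl h'
        · exact Or.inr ⟨h', h⟩
    refine ⟨I1, ?_⟩
    intro u
    have hb : u ∈ (bfs W s (j + 1)).2 ↔ u ∉ (bfs W s (j + 1)).1 ∧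
        ∃ b ∈ (bfs W s j).2, s(b, u) ∈ s := by
      simp only [bfs, nbr, Finset.mem_filter, Finset.mem_compl]
    rw [hb]
    apply and_congr_right
    intro hu
    constructor
    · rintro ⟨b, hbB, hbu⟩
      obtain ⟨w, hw, hwb⟩ := ((ih2 b).1 hbB).2
      refine ⟨w, hw, htri w b u j ?_ hwb⟩
      rw [hG, SimpleGraph.fromEdgeSet_adj]
      refine ⟨hbu, ?_⟩
      rintro rfl
      exact hu (by simp [bfs, hbB])
    · rintro ⟨w, hw, hwu⟩
      have hne : w ≠ u := by
        rintro rfl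
        apply hu
        rw [I1]
        refine ⟨w, hw, ?_⟩
        rw [SimpleGraph.edist_self]
        exact_mod_cast Nat.succ_pos j
      obtain ⟨b, hadj, hwb⟩ := edist_pred G w u j hwu hne
      refine ⟨b, ?_, ?_⟩
      · rw [ih2]
        refine ⟨?_, w, hw, hwb⟩
        intro hbA
        obtain ⟨w', hw', h'⟩ := (ih1 b).1 hbA
        apply hu
        rw [I1]
        refine ⟨w', hw', ?_⟩
        cases j with
        | zero => simp at h'
        | succ k =>
          rw [hlt] at h' ⊢
          exact htri w' b u k hadj h'
      · rw [hG, SimpleGraph.fromEdgeSet_adj] at hadj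
        exact hadj.1

lemma bfs_single {n : ℕ} (v : Fin n) (s : Finset (Sym2 (Fin n))) (j : ℕ) :
    gSphere (SimpleGraph.fromEdgeSet (s : Set (Sym2 (Fin n)))) v j
      = ((bfs {v} s j).2 : Set (Fin n)) := by
  ext u
  have h1 := (bfs_spec {v} s j).1 u
  have h2 := (bfs_spec {v} s j).2 u
  simp only [Finset.mem_singleton, exists_eq_left] at h1 h2
  rw [Finset.mem_coe, h2, h1, not_lt, gSphere, Set.mem_ofPred_eq]
  constructor
  · intro h
    exact ⟨h.ge, h.le⟩
  · intro h
    exact le_antisymm h.2 h.1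

lemma bfs_pair {n : ℕ} (x y : Fin n) (s : Finset (Sym2 (Fin n))) (j : ℕ) :
    (bfs {x, y} s j).2 ⊆ (bfs {x} s j).2 ∪ (bfs {y} s j).2 := by
  intro u hu
  have h1 := (bfs_spec {x, y} s j).1 u
  have h2 := (bfs_spec {x, y} s j).2 u
  rw [h2, h1] at hu
  obtain ⟨hn, w, hw, hwu⟩ := hu
  push Not at hn
  have hs : u ∈ gSphere (SimpleGraph.fromEdgeSet (s : Set (Sym2 (Fin n)))) w j :=
    le_antisymm hwu (hn w hw)
  rw [bfs_single] at hs
  rw [Finset.mem_insert, Finset.mem_singleton] at hw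
  rcases hw with rfl | rfl
  · exact Finset.mem_union_left _ hs
  · exact Finset.mem_union_right _ hs

lemma q_upper {p : ℝ} (hp1 : p ≤ 1) (b : ℕ) : 1 - (1 - p) ^ b ≤ p * b := by
  have := one_add_mul_le_pow (a := -p) (by linarith) b
  have h : (1 + -p) = 1 - p := by ring
  rw [h] at this
  linarith

lemma q_lower {p : ℝ} (hp0 : 0 ≤ p) (hp1 : p ≤ 1) (b : ℕ) :
    p * b * (1 - p * b) ≤ 1 - (1 - p) ^ b := by
  have h1 := one_add_mul_le_pow (a := p) (by linarith) b
  have h2 : (1 - p) ^ b * (1 + p) ^ b ≤ 1 := by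
    rw [← mul_pow]
    apply pow_le_one₀
    · exact mul_nonneg (by linarith) (by linarith)
    · nlinarith
  have h0 : 0 ≤ (1 - p) ^ b := pow_nonneg (by linarith) _
  set t := (1 - p) ^ b
  have hx : 0 ≤ p * b := by positivity
  set x : ℝ := p * b
  have h3 : t * (1 + x) ≤ 1 := by
    refine le_trans (mul_le_mul_of_nonneg_left ?_ h0) h2
    linarith
  have h4 : (1 - x + x ^ 2) * (1 + x) = 1 + x ^ 3 := by ring
  have h5 : t * (1 + x) ≤ (1 - x + x ^ 2) * (1 + x) := by
    rw [h4]
    have : 0 ≤ x ^ 3 := by positivity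
    linarith
  have := le_of_mul_le_mul_right h5 (by linarith)
  nlinarith

lemma mu_bounds {n : ℕ} (hn : 0 < n) {p d : ℝ} (hp0 : 0 ≤ p) (hp1 : p ≤ 1) (hd : d = p * n)
    (a : Finset (Fin n) × Finset (Fin n)) (D : ℝ) (hD : 0 ≤ D) (hd4 : 4 ≤ d)
    (hab : ((a.1.card : ℝ) + a.2.card) ≤ 8 * D) (hb : (a.2.card : ℝ) ≤ 4 * D)
    (hDn : d * D / n ≤ 1 / 100) :
    mu p a ≤ d * a.2.card ∧ d * a.2.card * (1 - 6 * (d * D / n)) ≤ mu p a := by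
  have hn' : (0 : ℝ) < n := by exact_mod_cast hn
  unfold mu
  have hu : (a.1 ∪ a.2).card ≤ a.1.card + a.2.card := Finset.card_union_le _ _
  have hu' : ((a.1 ∪ a.2).card : ℝ) ≤ a.1.card + a.2.card := by exact_mod_cast hu
  have hm : (((a.1 ∪ a.2)ᶜ.card : ℕ) : ℝ) = n - (a.1 ∪ a.2).card := by
    rw [Finset.card_compl, Fintype.card_fin, Nat.cast_sub]
    simpa using Finset.card_le_univ (a.1 ∪ a.2)
  have hm0 : (0 : ℝ) ≤ ((a.1 ∪ a.2)ᶜ.card : ℕ) := Nat.cast_nonneg _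
  have hq1 := q_upper hp1 a.2.card
  have hq2 := q_lower hp0 hp1 a.2.card
  have hU : (0 : ℝ) ≤ (a.1 ∪ a.2).card := Nat.cast_nonneg _
  have hb0 : (0 : ℝ) ≤ a.2.card := Nat.cast_nonneg _
  set m : ℝ := (((a.1 ∪ a.2)ᶜ.card : ℕ) : ℝ)
  set b : ℝ := ((a.2.card : ℕ) : ℝ)
  set δ : ℝ := d * D / n with hδ
  have hδn : δ * n = d * D := by rw [hδ]; field_simp
  have hpb : 0 ≤ p * b := by positivity
  have hpb4 : p * b ≤ 4 * δ := by
    rw [hδ, ← mul_div_assoc, le_div_iff₀ hn', hd]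
    have : p * n * b ≤ p * n * (4 * D) := mul_le_mul_of_nonneg_left hb (by positivity)
    linarith
  have hmn : n * (1 - 2 * δ) ≤ m := by nlinarith
  constructor
  · calc m * (1 - (1 - p) ^ a.2.card) ≤ m * (p * b) := mul_le_mul_of_nonneg_left hq1 hm0
      _ ≤ n * (p * b) := mul_le_mul_of_nonneg_right (by linarith) hpb
      _ = d * b := by rw [hd]; ring
  · have hδ0 : 0 ≤ δ := by positivity
    calc d * b * (1 - 6 * δ) = n * (p * b) * (1 - 6 * δ) := by rw [hd]; ring
      _ ≤ n * (p * b) * ((1 - 2 * δ) * (1 - 4 * δ)) := by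
          apply mul_le_mul_of_nonneg_left _ (by positivity)
          nlinarith
      _ = (n * (1 - 2 * δ)) * (p * b * (1 - 4 * δ)) := by ring
      _ ≤ m * (p * b * (1 - 4 * δ)) := by
          apply mul_le_mul_of_nonneg_right hmn
          apply mul_nonneg hpb
          linarith
      _ ≤ m * (1 - (1 - p) ^ a.2.card) := by
          apply mul_le_mul_of_nonneg_left _ hm0
          refine le_trans ?_ hq2
          apply mul_le_mul_of_nonneg_left _ hpb
          linarith

set_option maxHeartbeats 1000000 in
lemma growth {n : ℕ} (hn : 0 < n) {p d : ℝ} (hp0 : 0 ≤ p) (hp1 : p ≤ 1) (hd : d = p * n)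
    (hd4 : 4 ≤ d) (L θ : ℝ) (hL : 0 ≤ L) (hθ0 : 0 < θ) (hθ : θ ≤ 1 / 2)
    (hLθ : L * θ ≤ 1 / 16) (i : ℕ) (hi : d ^ i / n ≤ 1 / 100)
    (W : Finset (Fin n)) (hW1 : 1 ≤ W.card) (hW2 : W.card ≤ 2) (s : Finset (Sym2 (Fin n)))
    (good : ∀ j < i, badInd p (L * θ ^ (j + 1)) (d ^ (j + 1) / 8) (bfs W s j) s = 0) :
    ∀ j ≤ i, ((bfs W s j).1.card : ℝ) + (bfs W s j).2.card ≤ 8 * d ^ j ∧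
      ((bfs W s j).2.card : ℝ) ≤ W.card * d ^ j * (1 + 2 * (2 * (L * θ) * (1 - θ ^ j))) ∧
      W.card * d ^ j * (1 - 2 * (L * θ) * (1 - θ ^ j) - 10 * (d ^ j / n)) ≤
        ((bfs W s j).2.card : ℝ) := by
  have hn' : (0 : ℝ) < n := by exact_mod_cast hn
  have hw1 : (1 : ℝ) ≤ W.card := by exact_mod_cast hW1
  have hw2 : (W.card : ℝ) ≤ 2 := by exact_mod_cast hW2
  intro j
  induction j with
  | zero =>
    intro _
    have : (0 : ℝ) ≤ 1 / n := by positivity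
    simp only [bfs, Finset.card_empty, pow_zero]
    refine ⟨?_, ?_, ?_⟩
    · push_cast; linarith
    · simp
    · nlinarith
  | succ j ih =>
    intro hj
    obtain ⟨ih1, ih2, ih3⟩ := ih (by omega)
    have hg := good j (by omega)
    have hA : (bfs W s (j + 1)).1.card ≤ (bfs W s j).1.card + (bfs W s j).2.card :=
      Finset.card_union_le _ _
    have hA' : ((bfs W s (j + 1)).1.card : ℝ) ≤ (bfs W s j).1.card + (bfs W s j).2.card := by
      exact_mod_cast hA
    set st := bfs W s j
    set b' : ℝ := ((bfs W s (j + 1)).2.card : ℝ) with hb'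
    have hbad : d ^ (j + 1) / 8 ≤ mu p st → |b' - mu p st| ≤ L * θ ^ (j + 1) * mu p st := by
      intro h
      by_contra hcon
      push Not at hcon
      rw [badInd, if_pos ⟨h, hcon⟩] at hg
      exact one_ne_zero hg
    have hd1 : (1 : ℝ) ≤ d := by linarith
    have hDpos : 0 < d ^ j := by positivity
    have hDi : d ^ (j + 1) / n ≤ 1 / 100 := by
      refine le_trans ?_ hi
      gcongr
    have hθj0 : 0 < θ ^ j := by positivity
    have hθj1 : θ ^ j ≤ 1 := pow_le_one₀ hθ0.le (by linarith)
    have hLθ0 : 0 ≤ L * θ := by positivity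
    have hbj0 : (0 : ℝ) ≤ st.2.card := Nat.cast_nonneg _
    set b : ℝ := ((st.2.card : ℕ) : ℝ)
    set w : ℝ := ((W.card : ℕ) : ℝ)
    set D : ℝ := d ^ j with hD
    have hpow : d ^ (j + 1) = d * D := by rw [pow_succ, mul_comm]
    have hpowθ : θ ^ (j + 1) = θ * θ ^ j := by rw [pow_succ, mul_comm]
    rw [hpow, hpowθ] at hbad ⊢
    rw [hpow] at hDi
    set t := θ ^ j
    set σ := 2 * (L * θ) * (1 - t) with hσ
    have hσ0 : 0 ≤ σ := mul_nonneg (by positivity) (by linarith)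
    have hσ1 : σ ≤ 1 / 8 := by nlinarith
    set ε := L * (θ * t) with hε
    have hε0 : 0 ≤ ε := by positivity
    have hε1 : ε ≤ 1 / 16 := by
      have : ε = L * θ * t := by ring
      nlinarith
    have hσ' : σ + ε ≤ 2 * (L * θ) * (1 - θ * t) := by
      have : 2 * (L * θ) * (1 - θ * t) - σ - ε = (L * θ) * t * (1 - 2 * θ) := by
        rw [hσ, hε]; ring
      have h2 : 0 ≤ (L * θ) * t * (1 - 2 * θ) := mul_nonneg (by positivity) (by linarith)
      linarith
    set δ := d * D / n with hδ
    have hδ0 : 0 ≤ δ := by positivity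
    have hDn : D / n ≤ δ / 4 := by
      rw [hδ, mul_div_assoc]
      have : 0 ≤ D / n := by positivity
      nlinarith
    have hDn0 : 0 ≤ D / n := by positivity
    have hb4 : b ≤ 4 * D := by
      have : w * D ≤ 2 * D := mul_le_mul_of_nonneg_right hw2 hDpos.le
      calc b ≤ w * D * (1 + 2 * σ) := ih2
        _ ≤ 2 * D * 2 := mul_le_mul this (by linarith) (by linarith) (by positivity)
        _ = 4 * D := by ring
    obtain ⟨hmu1, hmu2⟩ := mu_bounds hn hp0 hp1 hd st D hDpos.le hd4 ih1 hb4 hDi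
    have hwD : D ≤ w * D := by nlinarith
    have hblow : D / 2 ≤ b := by
      refine le_trans ?_ ih3
      calc D / 2 = D * (1 / 2) := by ring
        _ ≤ w * D * (1 - σ - 10 * (D / n)) :=
          mul_le_mul hwD (by linarith) (by norm_num) (by positivity)
    have hmulow : d * D / 8 ≤ mu p st := by
      refine le_trans ?_ hmu2
      calc d * D / 8 = d * (D / 2) * (1 / 4) := by ring
        _ ≤ d * b * (1 - 6 * δ) :=
          mul_le_mul (mul_le_mul_of_nonneg_left hblow (by linarith)) (by linarith) (by norm_num)
            (by positivity)
    have habs := abs_le.1 (hbad hmulow)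
    have hup : b' ≤ (1 + ε) * (d * b) := by
      have : (1 + ε) * mu p st ≤ (1 + ε) * (d * b) := mul_le_mul_of_nonneg_left hmu1 (by linarith)
      linarith [habs.2]
    have hlo : (1 - ε) * (d * b * (1 - 6 * δ)) ≤ b' := by
      have : (1 - ε) * (d * b * (1 - 6 * δ)) ≤ (1 - ε) * mu p st :=
        mul_le_mul_of_nonneg_left hmu2 (by linarith)
      linarith [habs.1]
    have hup2 : b' ≤ w * (d * D) * (1 + 2 * (σ + ε)) := by
      calc b' ≤ (1 + ε) * (d * b) := hup
        _ ≤ (1 + ε) * (d * (w * D * (1 + 2 * σ))) := by gcongr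
        _ = w * (d * D) * ((1 + ε) * (1 + 2 * σ)) := by ring
        _ ≤ _ := by
          apply mul_le_mul_of_nonneg_left _ (by positivity)
          nlinarith
    have hlo2 : w * (d * D) * (1 - (σ + ε) - 10 * δ) ≤ b' := by
      refine le_trans ?_ hlo
      calc w * (d * D) * (1 - (σ + ε) - 10 * δ)
          ≤ w * (d * D) * (((1 - ε) * (1 - 6 * δ)) * (1 - σ - 10 * (D / n))) := by
            apply mul_le_mul_of_nonneg_left _ (by positivity)
            have e1 : 1 - ε - 6 * δ ≤ (1 - ε) * (1 - 6 * δ) := by nlinarith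
            set z := σ + 10 * (D / n) with hz
            have hz0 : 0 ≤ z := by positivity
            have hz1 : z ≤ 1 := by linarith
            have e2 : (1 - ε - 6 * δ) * (1 - z) ≤ (1 - ε) * (1 - 6 * δ) * (1 - z) :=
              mul_le_mul_of_nonneg_right e1 (by linarith)
            have e3 : 1 - ε - 6 * δ - z ≤ (1 - ε - 6 * δ) * (1 - z) := by nlinarith
            have e4 : 1 - σ - 10 * (D / n) = 1 - z := by rw [hz]; ring
            rw [e4]
            linarith
        _ = ((1 - ε) * (1 - 6 * δ) * d) * (w * D * (1 - σ - 10 * (D / n))) := by ring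
        _ ≤ ((1 - ε) * (1 - 6 * δ) * d) * b := by
            apply mul_le_mul_of_nonneg_left ih3
            have : 0 ≤ 1 - ε := by linarith
            have : 0 ≤ 1 - 6 * δ := by linarith
            positivity
        _ = _ := by ring
    have hwd : 0 ≤ w * (d * D) := by positivity
    refine ⟨?_, ?_, ?_⟩
    · have h1 : b' ≤ 4 * (d * D) := by
        calc b' ≤ w * (d * D) * (1 + 2 * (σ + ε)) := hup2
          _ ≤ 2 * (d * D) * 2 := by
            apply mul_le_mul _ (by linarith) (by linarith) (by positivity)
            exact mul_le_mul_of_nonneg_right hw2 (by positivity)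
          _ = _ := by ring
      nlinarith
    · exact hup2.trans (mul_le_mul_of_nonneg_left (by linarith) hwd)
    · exact le_trans (mul_le_mul_of_nonneg_left (by linarith) hwd) hlo2

end Det
section Final

/-- the event of the theorem for a fixed `n` -/
def goodSet (n : ℕ) (d ω C : ℝ) (i : ℕ) : Set (SimpleGraph (Fin n)) :=
  {G : SimpleGraph (Fin n) |
          (∀ W : Finset (Fin n), W.card ≤ 2 →
            |(((⋃ v ∈ W, gSphere G v i).ncard : ℝ)) - d ^ i * W.card|
              ≤ C * (1 / Real.sqrt ω + d ^ i / n) * (d ^ i * W.card)) ∧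
          (∀ x y : Fin n, x ≠ y →
            |(((gSphere G x i \ gSphere G y i).ncard : ℝ)) - d ^ i|
              ≤ C * (1 / Real.sqrt ω + d ^ i / n) * d ^ i)}

lemma det_good {n : ℕ} (d ω : ℝ) (i : ℕ) (s : Finset (Sym2 (Fin n))) (σ : ℝ)
    (hd : 0 ≤ d) (hσ : σ ≤ 26 * (1 / Real.sqrt ω))
    (h1 : ∀ x y : Fin n, ((bfs {x, y} s i).2.card : ℝ) ≤
      ({x, y} : Finset (Fin n)).card * d ^ i * (1 + 2 * σ))
    (h2 : ∀ x y : Fin n, ({x, y} : Finset (Fin n)).card * d ^ i * (1 - σ - 10 * (d ^ i / n)) ≤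
      ((bfs {x, y} s i).2.card : ℝ)) :
    SimpleGraph.fromEdgeSet (s : Set (Sym2 (Fin n))) ∈ goodSet n d ω 104 i := by
  set r : ℝ := 1 / Real.sqrt ω with hr
  have hr0 : 0 ≤ r := by positivity
  set D : ℝ := d ^ i with hD
  have hD0 : 0 ≤ D := by positivity
  set z : ℝ := D / n with hz
  have hz0 : 0 ≤ z := by positivity
  have hDr : 0 ≤ D * r := by positivity
  have hDz : 0 ≤ D * z := by positivity
  have hDσ : D * σ ≤ D * (26 * r) := mul_le_mul_of_nonneg_left hσ hD0
  have s1 : ∀ x : Fin n, ((bfs {x} s i).2.card : ℝ) ≤ D + 52 * (D * r) := by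
    intro x
    have := h1 x x
    simp only [Finset.pair_eq_singleton, Finset.card_singleton, Nat.cast_one] at this
    nlinarith
  have s2 : ∀ x : Fin n, D - 26 * (D * r) - 10 * (D * z) ≤ ((bfs {x} s i).2.card : ℝ) := by
    intro x
    have := h2 x x
    simp only [Finset.pair_eq_singleton, Finset.card_singleton, Nat.cast_one] at this
    nlinarith
  have p2 : ∀ x y : Fin n, x ≠ y → 2 * (D - 26 * (D * r) - 10 * (D * z)) ≤
      (((bfs {x} s i).2 ∪ (bfs {y} s i).2).card : ℝ) := by
    intro x y hxy
    have := h2 x y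
    rw [Finset.card_pair hxy] at this
    have h3 : ((bfs {x, y} s i).2.card : ℝ) ≤ (((bfs {x} s i).2 ∪ (bfs {y} s i).2).card : ℝ) := by
      exact_mod_cast Finset.card_le_card (bfs_pair x y s i)
    push_cast at this
    nlinarith
  have p1 : ∀ x y : Fin n, (((bfs {x} s i).2 ∪ (bfs {y} s i).2).card : ℝ) ≤
      ((bfs {x} s i).2.card : ℝ) + (bfs {y} s i).2.card := by
    intro x y
    exact_mod_cast Finset.card_union_le _ _
  refine ⟨?_, ?_⟩
  · intro W hW
    have hW' : W.card = 0 ∨ W.card = 1 ∨ W.card = 2 := by omega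
    rcases hW' with hW' | hW' | hW'
    · rw [Finset.card_eq_zero] at hW'
      subst hW'
      simp
    · obtain ⟨x, rfl⟩ := Finset.card_eq_one.1 hW'
      have e : (⋃ v ∈ ({x} : Finset (Fin n)), gSphere (SimpleGraph.fromEdgeSet
          (s : Set (Sym2 (Fin n)))) v i) = ((bfs {x} s i).2 : Set (Fin n)) := by
        simp [bfs_single]
      rw [e, Set.ncard_coe_finset, hW', abs_le]
      have := s1 x
      have := s2 x
      push_cast
      constructor <;> nlinarith
    · obtain ⟨x, y, hxy, rfl⟩ := Finset.card_eq_two.1 hW'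
      have e : (⋃ v ∈ ({x, y} : Finset (Fin n)), gSphere (SimpleGraph.fromEdgeSet
          (s : Set (Sym2 (Fin n)))) v i) =
          (((bfs {x} s i).2 ∪ (bfs {y} s i).2 : Finset (Fin n)) : Set (Fin n)) := by
        rw [Finset.coe_union, ← bfs_single, ← bfs_single, Finset.set_biUnion_insert,
          Finset.set_biUnion_singleton]
      rw [e, Set.ncard_coe_finset, hW', abs_le]
      have := s1 x
      have := s1 y
      have := p1 x y
      have := p2 x y hxy
      push_cast
      constructor <;> nlinarith
  · intro x y hxy
    have e : gSphere (SimpleGraph.fromEdgeSet (s : Set (Sym2 (Fin n)))) x i \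
        gSphere (SimpleGraph.fromEdgeSet (s : Set (Sym2 (Fin n)))) y i =
        (((bfs {x} s i).2 \ (bfs {y} s i).2 : Finset (Fin n)) : Set (Fin n)) := by
      rw [Finset.coe_sdiff, ← bfs_single, ← bfs_single]
    rw [e, Set.ncard_coe_finset, abs_le]
    have q1 : (((bfs {x} s i).2 \ (bfs {y} s i).2).card : ℝ) + (bfs {y} s i).2.card =
        ((bfs {x} s i).2 ∪ (bfs {y} s i).2).card := by
      exact_mod_cast Finset.card_sdiff_add_card _ _
    have q2 : (((bfs {x} s i).2 \ (bfs {y} s i).2).card : ℝ) ≤ (bfs {x} s i).2.card := by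
      exact_mod_cast Finset.card_le_card Finset.sdiff_subset
    have := s1 x
    have := s1 y
    have := p2 x y hxy
    constructor <;> nlinarith

lemma badInd_nonneg {n : ℕ} (p ε M : ℝ) (a : Finset (Fin n) × Finset (Fin n))
    (s : Finset (Sym2 (Fin n))) : 0 ≤ badInd p ε M a s := by
  unfold badInd
  split_ifs <;> norm_num

lemma badInd_cases {n : ℕ} (p ε M : ℝ) (a : Finset (Fin n) × Finset (Fin n))
    (s : Finset (Sym2 (Fin n))) : badInd p ε M a s = 0 ∨ badInd p ε M a s = 1 := by
  unfold badInd
  split_ifs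
  · exact Or.inr rfl
  · exact Or.inl rfl

lemma gnpProb_le_one (n : ℕ) {p : ℝ} (hp0 : 0 ≤ p) (hp1 : p ≤ 1)
    (A : Set (SimpleGraph (Fin n))) : gnpProb n p A ≤ 1 := by
  rw [gnpProb_eq]
  refine le_trans (ex_mono hp0 hp1 _ (g := fun _ => 1) ?_) (ex_const _ _ _).le
  intro s
  split_ifs <;> norm_num

lemma fixed_n {n : ℕ} (hn : 0 < n) {p d ω : ℝ} (hp0 : 0 ≤ p) (hp1 : p ≤ 1) (hd : d = p * n)
    (hlog : 1 ≤ Real.log n) (hω : 208 ^ 2 ≤ ω) (hωd : ω * Real.log n ≤ d) (i : ℕ)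
    (hi : d ^ i / n ≤ 1 / 100) :
    1 - 2 / (n : ℝ) ≤ gnpProb n p (goodSet n d ω 104 i) := by
  classical
  have hn' : (0 : ℝ) < n := by exact_mod_cast hn
  have hn1 : (1 : ℝ) ≤ n := by exact_mod_cast hn
  have hω0 : 0 < ω := by linarith [show (0:ℝ) < 208 ^ 2 by norm_num]
  have hωd' : ω ≤ d := by nlinarith
  have hd4 : 4 ≤ d := by norm_num at hω; linarith
  have hd0 : 0 < d := by linarith
  set θ : ℝ := 1 / Real.sqrt d with hθ
  set L : ℝ := 13 * Real.sqrt (Real.log n) with hL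
  have hsd : 2 ≤ Real.sqrt d := Real.le_sqrt_of_sq_le (by linarith)
  have hθ0 : 0 < θ := by positivity
  have hθ1 : θ ≤ 1 / 2 := by
    rw [hθ]
    exact one_div_le_one_div_of_le (by norm_num) hsd
  have hθ2 : θ ^ 2 * d = 1 := by
    rw [hθ, div_pow, Real.sq_sqrt hd0.le]
    field_simp
  have hL0 : 0 ≤ L := by positivity
  have hL2 : L ^ 2 = 169 * Real.log n := by
    rw [hL, mul_pow, Real.sq_sqrt (by linarith)]
    norm_num
  have hsω : 208 ≤ Real.sqrt ω := Real.le_sqrt_of_sq_le hω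
  have hLθ' : L * θ ≤ 13 * (1 / Real.sqrt ω) := by
    have h1 : Real.sqrt ω * Real.sqrt (Real.log n) ≤ Real.sqrt d := by
      rw [← Real.sqrt_mul hω0.le]
      exact Real.sqrt_le_sqrt hωd
    rw [hL, hθ, mul_assoc]
    apply mul_le_mul_of_nonneg_left _ (by norm_num)
    rw [mul_one_div, div_le_div_iff₀ (by linarith) (by linarith)]
    linarith
  have hLθ : L * θ ≤ 1 / 16 := by
    refine hLθ'.trans ?_
    have : 1 / Real.sqrt ω ≤ 1 / 208 := one_div_le_one_div_of_le (by norm_num) hsω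
    linarith
  have hin : i ≤ n := by
    have h1 : (2 : ℝ) ^ i ≤ d ^ i := pow_le_pow_left₀ (by norm_num) (by linarith) i
    have h2 : d ^ i ≤ n := by
      rw [div_le_iff₀ hn'] at hi
      linarith
    have h3 : (i : ℝ) < 2 ^ i := by exact_mod_cast Nat.lt_two_pow_self
    have : (i : ℝ) ≤ n := by linarith
    exact_mod_cast this
  -- probability of a bad step
  have hbad : ∀ (W : Finset (Fin n)) (j : ℕ),
      ex p (⊤ : SimpleGraph (Fin n)).edgeFinset
        (fun s => badInd p (L * θ ^ (j + 1)) (d ^ (j + 1) / 8) (bfs W s j) s)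
      ≤ 2 / (n : ℝ) ^ 4 := by
    intro W j
    have hθj : θ ^ (j + 1) = θ * θ ^ j := by rw [pow_succ, mul_comm]
    have hθj1 : θ ^ j ≤ 1 := pow_le_one₀ hθ0.le (by linarith)
    have hθj0 : 0 ≤ θ ^ j := by positivity
    refine (bad_prob hp0 hp1 _ _ (by positivity) ?_ W j).trans ?_
    · rw [hθj]
      have : 0 ≤ L * θ := by positivity
      nlinarith
    · have e : (L * θ ^ (j + 1)) ^ 2 * (d ^ (j + 1) / 8) / 4 = 169 / 32 * Real.log n := by
        have : (L * θ ^ (j + 1)) ^ 2 * (d ^ (j + 1) / 8) / 4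
          = L ^ 2 * (θ ^ 2 * d) ^ (j + 1) / 32 := by
          rw [mul_pow (θ ^ 2) d, ← pow_mul, mul_pow L, ← pow_mul, mul_comm 2 (j + 1)]
          ring
        rw [this, hθ2, one_pow, hL2]
        ring
      rw [e]
      have h4 : Real.exp (-(169 / 32 * Real.log n)) ≤ Real.exp (-(4 * Real.log n)) :=
        Real.exp_le_exp.2 (by linarith)
      have h5 : Real.exp (-(4 * Real.log n)) = 1 / (n : ℝ) ^ 4 := by
        rw [Real.exp_neg, show (4 : ℝ) * Real.log n = ((4 : ℕ) : ℝ) * Real.log n by norm_num,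
          Real.exp_nat_mul, Real.exp_log hn', one_div]
      rw [h5] at h4
      calc _ ≤ 2 * (1 / (n : ℝ) ^ 4) := by linarith
        _ = _ := by ring
  set T : Finset (Sym2 (Fin n)) → ℝ := fun s => ∑ x : Fin n, ∑ y : Fin n, ∑ j ∈ Finset.range i,
    badInd p (L * θ ^ (j + 1)) (d ^ (j + 1) / 8) (bfs {x, y} s j) s with hT
  have hexT : ex p (⊤ : SimpleGraph (Fin n)).edgeFinset T ≤ 2 / n := by
    rw [hT]
    simp only [ex_sum]
    calc _ ≤ ∑ x : Fin n, ∑ y : Fin n, ∑ j ∈ Finset.range i, 2 / (n : ℝ) ^ 4 := by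
          apply Finset.sum_le_sum
          intro x _
          apply Finset.sum_le_sum
          intro y _
          apply Finset.sum_le_sum
          intro j _
          exact hbad _ _
      _ = n * (n * (i * (2 / (n : ℝ) ^ 4))) := by simp
      _ ≤ n * (n * (n * (2 / (n : ℝ) ^ 4))) := by
          have : (i : ℝ) ≤ n := by exact_mod_cast hin
          gcongr
      _ = 2 / n := by field_simp
  rw [gnpProb_eq]
  calc 1 - 2 / (n : ℝ) ≤ 1 + (-1) * ex p (⊤ : SimpleGraph (Fin n)).edgeFinset T := by linarith
    _ = ex p (⊤ : SimpleGraph (Fin n)).edgeFinset (fun s => 1 + (-1) * T s) := by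
        rw [ex_add, ex_const, ex_mul_left]
    _ ≤ _ := by
        apply ex_mono hp0 hp1
        intro s
        have hT0 : 0 ≤ T s := by
          refine Finset.sum_nonneg fun x _ => Finset.sum_nonneg fun y _ =>
            Finset.sum_nonneg fun j _ => badInd_nonneg _ _ _ _ _
        split_ifs with hmem
        · linarith
        · have : 1 ≤ T s := by
            by_contra hcon
            push Not at hcon
            apply hmem
            have hz : ∀ x y : Fin n, ∀ j < i,
                badInd p (L * θ ^ (j + 1)) (d ^ (j + 1) / 8) (bfs {x, y} s j) s = 0 := by
              intro x y j hj
              rcases badInd_cases p (L * θ ^ (j + 1)) (d ^ (j + 1) / 8) (bfs {x, y} s j) s with h | h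
              · exact h
              · exfalso
                have a1 := Finset.single_le_sum
                  (f := fun j => badInd p (L * θ ^ (j + 1)) (d ^ (j + 1) / 8) (bfs {x, y} s j) s)
                  (fun j _ => badInd_nonneg _ _ _ _ _) (Finset.mem_range.2 hj)
                have a2 := Finset.single_le_sum
                  (f := fun y => ∑ j ∈ Finset.range i,
                    badInd p (L * θ ^ (j + 1)) (d ^ (j + 1) / 8) (bfs {x, y} s j) s)
                  (fun y _ => Finset.sum_nonneg fun j _ => badInd_nonneg _ _ _ _ _)
                  (Finset.mem_univ y)
                have a3 := Finset.single_le_sum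
                  (f := fun x => ∑ y : Fin n, ∑ j ∈ Finset.range i,
                    badInd p (L * θ ^ (j + 1)) (d ^ (j + 1) / 8) (bfs {x, y} s j) s)
                  (fun x _ => Finset.sum_nonneg fun y _ =>
                    Finset.sum_nonneg fun j _ => badInd_nonneg _ _ _ _ _)
                  (Finset.mem_univ x)
                simp only [hT] at hcon
                linarith
            have hgr := fun x y : Fin n => growth hn hp0 hp1 hd hd4 L θ hL0 hθ0 hθ1 hLθ i hi {x, y}
              (Finset.card_pos.2 ⟨x, by simp⟩) Finset.card_le_two s (hz x y) i le_rfl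
            refine det_good d ω i s (2 * (L * θ) * (1 - θ ^ i)) hd0.le ?_
              (fun x y => (hgr x y).2.1) (fun x y => (hgr x y).2.2)
            have : 0 ≤ θ ^ i := by positivity
            have : 0 ≤ L * θ := by positivity
            nlinarith
          linarith

end Final

theorem stmt4_gnp_sphere_expansion
    (p d : ℕ → ℝ) (ω : ℕ → ℝ) (i : ℕ → ℕ)
    (hd : ∀ n, d n = p n * n)
    (hω : Filter.Tendsto ω Filter.atTop Filter.atTop)
    (hωle : ∀ᶠ n : ℕ in Filter.atTop,
      ω n ≤ (Real.log n) ^ 4 * (Real.log (Real.log n)) ^ 2)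
    (hωd : ∀ᶠ n : ℕ in Filter.atTop, ω n * Real.log n ≤ d n)
    (hdn : Filter.Tendsto (fun n : ℕ => d n / n) Filter.atTop (nhds 0))
    (hdi : Filter.Tendsto (fun n : ℕ => d n ^ i n / n) Filter.atTop (nhds 0)) :
    ∃ C : ℝ, 0 < C ∧
      AAS p (fun n : ℕ =>
        {G : SimpleGraph (Fin n) |
          (∀ W : Finset (Fin n), W.card ≤ 2 →
            |(((⋃ v ∈ W, gSphere G v (i n)).ncard : ℝ)) - d n ^ i n * W.card|
              ≤ C * (1 / Real.sqrt (ω n) + d n ^ i n / n) * (d n ^ i n * W.card)) ∧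
          (∀ x y : Fin n, x ≠ y →
            |(((gSphere G x (i n) \ gSphere G y (i n)).ncard : ℝ)) - d n ^ i n|
              ≤ C * (1 / Real.sqrt (ω n) + d n ^ i n / n) * d n ^ i n)}) := by
  refine ⟨104, by norm_num, ?_⟩
  change Tendsto (fun n : ℕ => gnpProb n (p n) (goodSet n (d n) (ω n) 104 (i n))) atTop (nhds 1)
  have hlog : ∀ᶠ n : ℕ in atTop, 1 ≤ Real.log n :=
    (Real.tendsto_log_atTop.comp tendsto_natCast_atTop_atTop).eventually_ge_atTop 1
  have hω' := hω.eventually_ge_atTop (208 ^ 2)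
  have hdn' : ∀ᶠ n : ℕ in atTop, d n / n < 1 := hdn.eventually_lt_const (by norm_num)
  have hdi' : ∀ᶠ n : ℕ in atTop, d n ^ i n / n < 1 / 100 :=
    hdi.eventually_lt_const (by norm_num)
  have hall : ∀ᶠ n : ℕ in atTop,
      1 - 2 / (n : ℝ) ≤ gnpProb n (p n) (goodSet n (d n) (ω n) 104 (i n)) ∧
      gnpProb n (p n) (goodSet n (d n) (ω n) 104 (i n)) ≤ 1 := by
    filter_upwards [hlog, hω', hωd, hdn', hdi', eventually_gt_atTop 0] with n h1 h2 h3 h4 h5 h6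
    have hn' : (0 : ℝ) < n := by exact_mod_cast h6
    have hp : p n = d n / n := by rw [hd n]; field_simp
    have hd0 : 0 ≤ d n := by
      refine le_trans ?_ h3
      have : (0 : ℝ) ≤ 208 ^ 2 := by norm_num
      exact mul_nonneg (by linarith) (by linarith)
    have hp0 : 0 ≤ p n := by rw [hp]; positivity
    have hp1 : p n ≤ 1 := by rw [hp]; exact h4.le
    exact ⟨fixed_n h6 hp0 hp1 (hd n) h1 h2 h3 (i n) h5.le, gnpProb_le_one n hp0 hp1 _⟩
  have hlim : Tendsto (fun n : ℕ => 1 - 2 / (n : ℝ)) atTop (nhds 1) := by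
    have := (tendsto_const_div_atTop_nhds_zero_nat (2 : ℝ)).const_sub 1
    simpa using this
  exact tendsto_of_tendsto_of_tendsto_of_le_of_le' hlim tendsto_const_nhds
    (hall.mono fun _ h => h.1) (hall.mono fun _ h => h.2)
end
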